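/- arXiv:1708.05343 — 3 statements merged into one kernel-verified Lean document; each statement's English description precedes it below -/
import Mathlib

section
/- If the function V(m) belongs to the class 𝒱 and a is any real number, then the function m ↦ V(m) + a·m also belongs to 𝒱. Moreover, if V belongs to 𝒱∞, then m ↦ V(m) + a·m also belongs to 𝒱∞. -/
open MeasureTheory Filter

noncomputable section

/-- The Cauchy–Stieltjes kernel density `f(x,m) = V(m)/(V(m)+m(m-x))`. -/
def cskKernel (V : ℝ → ℝ) (m x : ℝ) : ℝ := V m / (V m + m * (m - x))

/-- `ν` is a non-degenerate, compactly supported probability measure on `ℝ` with mean `0`. -/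
def IsCSKGenerator (ν : Measure ℝ) : Prop :=
  IsProbabilityMeasure ν ∧
  (∃ R : ℝ, ν (Set.Icc (-R) R)ᶜ = 0) ∧
  (∀ a : ℝ, ν ≠ Measure.dirac a) ∧
  (∫ x, x ∂ν) = 0

/-- `V` is the variance function of the CSK family generated by `ν`:
`V` is real-analytic near `0`, `V 0 > 0`, and for all `m` near `0` the kernel
`f(x,m)` is a.e. nonnegative, integrates to `1`, and has mean `m`. -/
def IsCSKVarianceFun (ν : Measure ℝ) (V : ℝ → ℝ) : Prop :=
  AnalyticAt ℝ V 0 ∧ 0 < V 0 ∧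
  ∃ ε > 0, ∀ m : ℝ, |m| < ε →
    (∀ᵐ x ∂ν, 0 ≤ cskKernel V m x) ∧
    (∫ x, cskKernel V m x ∂ν) = 1 ∧
    (∫ x, x * cskKernel V m x ∂ν) = m

/-- The class `𝒱` of variance functions of CSK families generated by
non-degenerate compactly supported probability measures with mean `0` and variance `1`. -/
def memV (V : ℝ → ℝ) : Prop :=
  ∃ ν : Measure ℝ, IsCSKGenerator ν ∧ (∫ x, x ^ 2 ∂ν) = 1 ∧ IsCSKVarianceFun ν V

/-- The class `𝒱∞`: those `V` such that `m ↦ V (c * m)` is in `𝒱` for every real `c`. -/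
def memVinf (V : ℝ → ℝ) : Prop := ∀ c : ℝ, memV (fun m => V (c * m))

open scoped CompactlySupported

lemma spectral_measure_exists {H : Type*} [NormedAddCommGroup H] [InnerProductSpace ℂ H]
    [CompleteSpace H] (T : H →L[ℂ] H) (hT : IsSelfAdjoint T) (e : H) :
    ∃ (μ : Measure ℝ) (R : ℝ), μ (Set.Icc (-R) R)ᶜ = 0 ∧ spectrum ℝ T ⊆ Set.Icc (-R) R ∧
      ∀ f : ℝ → ℝ, Measurable f → ContinuousOn f (Set.Icc (-R) R) →
        ∫ x, f x ∂μ = (inner ℂ e (cfc f T e)).re := by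
  set R := ‖T‖ * ‖(1 : H →L[ℂ] H)‖
  have hsub : spectrum ℝ T ⊆ Set.Icc (-R) R := fun x hx => by
    have := spectrum.norm_le_norm_mul_of_mem hx
    rw [Real.norm_eq_abs] at this
    exact abs_le.mp this
  let Λ₀ : C_c(spectrum ℝ T, ℝ) →ₗ[ℝ] ℝ :=
    { toFun := fun f => (inner ℂ e (cfcHom hT (f : C(spectrum ℝ T, ℝ)) e)).re
      map_add' := fun f g => by
        have : ((f + g : C_c(spectrum ℝ T, ℝ)) : C(spectrum ℝ T, ℝ)) =
          (f : C(spectrum ℝ T, ℝ)) + (g : C(spectrum ℝ T, ℝ)) := rfl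
        rw [this, map_add]
        simp
      map_smul' := fun c f => by
        have : ((c • f : C_c(spectrum ℝ T, ℝ)) : C(spectrum ℝ T, ℝ)) =
          c • (f : C(spectrum ℝ T, ℝ)) := rfl
        rw [this, map_smul]
        simp [inner_smul_right_eq_smul] }
  let Λ : C_c(spectrum ℝ T, ℝ) →ₚ[ℝ] ℝ := PositiveLinearMap.mk₀ Λ₀ (fun f hf => by
    have h1 : 0 ≤ cfcHom hT (f : C(spectrum ℝ T, ℝ)) :=
      (cfcHom_nonneg_iff hT).2 hf
    rw [ContinuousLinearMap.nonneg_iff_isPositive] at h1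
    exact h1.re_inner_nonneg_right e)
  let μ₀ := RealRMK.rieszMeasure Λ
  refine ⟨μ₀.map Subtype.val, R, ?_, hsub, ?_⟩
  · rw [Measure.map_apply measurable_subtype_coe measurableSet_Icc.compl]
    convert measure_empty (μ := μ₀)
    ext x
    simpa using hsub x.2
  · intro f hf hfc
    rw [integral_map measurable_subtype_coe.aemeasurable hf.aestronglyMeasurable]
    have hfc' := hfc.mono hsub
    let g : C_c(spectrum ℝ T, ℝ) :=
      ⟨⟨fun x => f x, hfc'.domRestrict⟩, HasCompactSupport.of_compactSpace _⟩
    have := RealRMK.integral_rieszMeasure Λ g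
    rw [cfc_apply f T hT hfc']
    exact this

lemma spectral_measure_props {H : Type*} [NormedAddCommGroup H] [InnerProductSpace ℂ H]
    [CompleteSpace H] (T : H →L[ℂ] H) (hT : IsSelfAdjoint T) (e : H) :
    ∃ (μ : Measure ℝ) (R : ℝ), μ (Set.Icc (-R) R)ᶜ = 0 ∧
      ∫ _, (1 : ℝ) ∂μ = (inner ℂ e e).re ∧
      ∫ x, x ∂μ = (inner ℂ e (T e)).re ∧
      ∫ x, x ^ 2 ∂μ = (inner ℂ e (T (T e))).re ∧
      ∀ (W : ℝ → ℝ) (m : ℝ) (u : H), 0 < W m →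
        (∀ x ∈ Set.Icc (-R) R, 0 < W m + m * (m - x)) →
        (((W m + m * m : ℝ) : ℂ) • u - (m : ℂ) • T u) = ((W m : ℝ) : ℂ) • e →
        ∫ x, cskKernel W m x ∂μ = (inner ℂ e u).re ∧
        ∫ x, x * cskKernel W m x ∂μ = (inner ℂ e (T u)).re := by
  obtain ⟨μ, R, hμR, hspec, hμ⟩ := spectral_measure_exists T hT e
  refine ⟨μ, R, hμR, ?_, ?_, ?_, ?_⟩
  · rw [hμ (fun _ => 1) measurable_const continuousOn_const, cfc_const_one ℝ T,
      one_apply_eq_self]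
  · rw [hμ (fun x => x) measurable_id continuousOn_id, cfc_id' ℝ T]
  · rw [hμ (fun x => x ^ 2) (by fun_prop) (by fun_prop), cfc_pow_id (R := ℝ) T 2, pow_two,
      mul_apply_eq_comp]
  · intro W m u p3 q2 hD
    have hGmeas : Measurable (cskKernel W m) := by unfold cskKernel; fun_prop
    have hGcont : ContinuousOn (cskKernel W m) (Set.Icc (-R) R) := by
      unfold cskKernel
      exact ContinuousOn.div (by fun_prop) (by fun_prop) (fun x hx => (q2 x hx).ne')
    have hBD : cfc (cskKernel W m) T * cfc (fun x => W m + m * m - m * x) T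
        = cfc (fun _ : ℝ => W m) T := by
      rw [← cfc_mul (cskKernel W m) (fun x => W m + m * m - m * x) T (hGcont.mono hspec)
        (by fun_prop)]
      apply cfc_congr
      intro x hx
      have hk : cskKernel W m x * (W m + m * (m - x)) = W m :=
        div_mul_cancel₀ _ (q2 x (hspec hx)).ne'
      simp only
      linear_combination hk
    have hDT : cfc (fun x => W m + m * m - m * x) T u = ((W m : ℝ) : ℂ) • e := by
      rw [cfc_sub (fun _ => W m + m * m) (fun x => m * x) T, cfc_const _ T, cfc_const_mul_id m T,
        ← hD, Complex.coe_smul, Complex.coe_smul]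
      simp [Algebra.algebraMap_eq_smul_one]
    have hBe : cfc (cskKernel W m) T e = u := by
      have h := congrArg (fun S => S u) hBD
      simp only [mul_apply_eq_comp, hDT, map_smul] at h
      rw [cfc_const _ T] at h
      have h' : ((W m : ℝ) : ℂ) • (cfc (cskKernel W m) T e) = ((W m : ℝ) : ℂ) • u := by
        rw [h]; simp [Algebra.algebraMap_eq_smul_one]
      exact smul_right_injective _ (by exact_mod_cast p3.ne') h'
    constructor
    · rw [hμ _ hGmeas hGcont, hBe]
    · rw [hμ (fun x => x * cskKernel W m x) (by fun_prop) (by fun_prop),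
        cfc_mul (fun x => x) (cskKernel W m) T (by fun_prop) (hGcont.mono hspec), cfc_id' ℝ T,
        mul_apply_eq_comp, hBe]

lemma memLp_of_bdd_support {ν : Measure ℝ} [IsProbabilityMeasure ν] {R : ℝ}
    (hR : ∀ᵐ x ∂ν, x ∈ Set.Icc (-R) R) (p : ENNReal) (g : ℝ → ℝ) (hg : Measurable g)
    (hgc : ContinuousOn g (Set.Icc (-R) R)) : MemLp (fun x => (g x : ℂ)) p ν := by
  obtain ⟨C, hC⟩ := isCompact_Icc.exists_bound_of_continuousOn hgc
  refine MemLp.of_bound (Complex.measurable_ofReal.comp hg).aestronglyMeasurable C ?_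
  filter_upwards [hR] with x hx
  simpa using hC x hx

lemma integrable_of_bdd_support {ν : Measure ℝ} [IsProbabilityMeasure ν] {R : ℝ}
    (hR : ∀ᵐ x ∂ν, x ∈ Set.Icc (-R) R) (g : ℝ → ℝ) (hg : Measurable g)
    (hgc : ContinuousOn g (Set.Icc (-R) R)) : Integrable g ν := by
  obtain ⟨C, hC⟩ := isCompact_Icc.exists_bound_of_continuousOn hgc
  refine Integrable.of_bound hg.aestronglyMeasurable C ?_
  filter_upwards [hR] with x hx
  exact hC x hx

open scoped ENNReal in
/-- The operator `X + a (1 - P)` on `L²(ν)`. -/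
lemma operator_exists {ν : Measure ℝ} [IsProbabilityMeasure ν] {R : ℝ}
    (hR : ∀ᵐ x ∂ν, x ∈ Set.Icc (-R) R) (a : ℝ) :
    ∃ (T : Lp ℂ 2 ν →L[ℂ] Lp ℂ 2 ν) (e : Lp ℂ 2 ν), IsSelfAdjoint T ∧
      e =ᵐ[ν] (fun _ => ((1 : ℝ) : ℂ)) ∧
      (∀ (u : Lp ℂ 2 ν) (g : ℝ → ℝ), u =ᵐ[ν] (fun x => (g x : ℂ)) →
        (inner ℂ e u).re = ∫ x, g x ∂ν) ∧
      (∀ (u : Lp ℂ 2 ν) (g : ℝ → ℝ), u =ᵐ[ν] (fun x => (g x : ℂ)) →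
        T u =ᵐ[ν] (fun x => ((x * g x + a * g x - a * ∫ y, g y ∂ν : ℝ) : ℂ))) := by
  have hφ : MemLp (fun x : ℝ => (x : ℂ)) ∞ ν :=
    memLp_of_bdd_support hR ∞ (fun x => x) measurable_id continuousOn_id
  have he : MemLp (fun _ : ℝ => ((1 : ℝ) : ℂ)) 2 ν := memLp_const _
  let X : Lp ℂ 2 ν →L[ℂ] Lp ℂ 2 ν :=
    (ContinuousLinearMap.mul ℂ ℂ).holderL ν ∞ 2 2 hφ.toLp
  have hX : ∀ u : Lp ℂ 2 ν, X u =ᵐ[ν] fun x => (x : ℂ) * u x := by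
    intro u
    have h1 := (ContinuousLinearMap.mul ℂ ℂ).coeFn_holder (r := 2) hφ.toLp u
    filter_upwards [h1, hφ.coeFn_toLp] with x h1 h2
    have h3 : X u x = _ := h1
    rw [h3, h2]
    rfl
  have hXs : IsSelfAdjoint X := by
    rw [ContinuousLinearMap.isSelfAdjoint_iff_isSymmetric]
    intro u v
    change inner ℂ (X u) v = inner ℂ u (X v)
    rw [L2.inner_def, L2.inner_def]
    refine integral_congr_ae ?_
    filter_upwards [hX u, hX v] with x h1 h2
    rw [h1, h2]
    simp
    ring
  let e : Lp ℂ 2 ν := he.toLp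
  have hee : e =ᵐ[ν] (fun _ => ((1 : ℝ) : ℂ)) := he.coeFn_toLp
  let P : Lp ℂ 2 ν →L[ℂ] Lp ℂ 2 ν := InnerProductSpace.rankOne ℂ e e
  have hPs : IsSelfAdjoint P := by
    rw [ContinuousLinearMap.isSelfAdjoint_iff_isSymmetric]
    intro u v
    simp [P, inner_smul_left, inner_smul_right, mul_comm]
  have hinner : ∀ (u : Lp ℂ 2 ν) (g : ℝ → ℝ), u =ᵐ[ν] (fun x => (g x : ℂ)) →
        (inner ℂ e u) = ((∫ x, g x ∂ν : ℝ) : ℂ) := by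
    intro u g hu
    rw [L2.inner_def, ← integral_complex_ofReal]
    refine integral_congr_ae ?_
    filter_upwards [hu, hee] with x h1 h2
    rw [h1, h2]
    simp
  refine ⟨X + (a : ℂ) • (1 - P), e, ?_, hee, ?_, ?_⟩
  · exact hXs.add (IsSelfAdjoint.smul (Complex.conj_ofReal a) ((IsSelfAdjoint.one _).sub hPs))
  · intro u g hu
    rw [hinner u g hu]
    simp
  · intro u g hu
    have h0 : (X + (a : ℂ) • (1 - P)) u = X u + (a : ℂ) • (u - (inner ℂ e u) • e) := by
      rw [ContinuousLinearMap.add_apply, ContinuousLinearMap.smul_apply,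
        ContinuousLinearMap.sub_apply]
      simp only [P, one_apply_eq_self, InnerProductSpace.rankOne_apply]
    rw [h0, hinner u g hu]
    filter_upwards [hu, hee, hX u, Lp.coeFn_add (X u) ((a : ℂ) • (u - ((∫ x, g x ∂ν : ℝ) : ℂ) • e)),
      Lp.coeFn_smul (a : ℂ) (u - ((∫ x, g x ∂ν : ℝ) : ℂ) • e),
      Lp.coeFn_sub u (((∫ x, g x ∂ν : ℝ) : ℂ) • e),
      Lp.coeFn_smul ((∫ x, g x ∂ν : ℝ) : ℂ) e] with x h1 h2 h3 h4 h5 h6 h7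
    rw [h4, Pi.add_apply, h5, Pi.smul_apply, h6, Pi.sub_apply, h7, Pi.smul_apply, h3, h2, h1]
    simp
    ring

lemma memV_add_linear_aux (V : ℝ → ℝ) (a : ℝ) (hV : memV V) :
    memV (fun m => V m + a * m) := by
  obtain ⟨ν, ⟨hν, ⟨R₁, hR₁⟩, -, hmean⟩, hvar, han, hV0, ε, hε, hker⟩ := hV
  have hR : ∀ᵐ x ∂ν, x ∈ Set.Icc (-R₁) R₁ := hR₁
  obtain ⟨T, e, hT, he, hF1, hF2⟩ := operator_exists hR a
  obtain ⟨μ, R, hμR, hμ0, hμ1, hμ2, hμ⟩ := spectral_measure_props T hT e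
  have hTe : T e =ᵐ[ν] (fun x => (x : ℂ)) := by
    filter_upwards [hF2 e _ he] with x hx
    rw [hx]; simp
  have hone : μ.real Set.univ = 1 := by
    rw [hF1 e _ he] at hμ0
    simpa using hμ0
  have hprob : IsProbabilityMeasure μ := ⟨by
    rw [measureReal_def] at hone
    rwa [ENNReal.toReal_eq_one_iff] at hone⟩
  have hm1 : ∫ x, x ∂μ = 0 := by
    rw [hμ1, hF1 _ _ hTe, hmean]
  have hix : Integrable (fun x : ℝ => x) ν :=
    integrable_of_bdd_support hR _ measurable_id continuousOn_id
  have hix2 : Integrable (fun x : ℝ => x * x) ν :=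
    integrable_of_bdd_support hR _ (by fun_prop) (by fun_prop)
  have hm2 : ∫ x, x ^ 2 ∂μ = 1 := by
    rw [hμ2, hF1 _ _ (hF2 _ _ hTe), hmean]
    simp only [mul_zero, sub_zero]
    rw [integral_add hix2 (hix.const_mul a), integral_const_mul, hmean]
    simp only [pow_two] at hvar
    rw [hvar]; simp
  have hcont : ContinuousAt V 0 := han.continuousAt
  have hpos1 : ∀ᶠ m in nhds (0 : ℝ), 0 < V m + m * m - |m| * R₁ := by
    have : ContinuousAt (fun m => V m + m * m - |m| * R₁) 0 := by fun_prop
    exact this.eventually (lt_mem_nhds (by simpa using hV0))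
  have hpos2 : ∀ᶠ m in nhds (0 : ℝ), 0 < V m + a * m + m * m - |m| * R := by
    have : ContinuousAt (fun m => V m + a * m + m * m - |m| * R) 0 := by fun_prop
    exact this.eventually (lt_mem_nhds (by simpa using hV0))
  have hpos3 : ∀ᶠ m in nhds (0 : ℝ), 0 < V m + a * m := by
    have : ContinuousAt (fun m => V m + a * m) 0 := by fun_prop
    exact this.eventually (lt_mem_nhds (by simpa using hV0))
  have hmx : ∀ m x r : ℝ, x ∈ Set.Icc (-r) r → m * x ≤ |m| * r := by
    intro m x r hx
    calc m * x ≤ |m * x| := le_abs_self _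
      _ = |m| * |x| := abs_mul _ _
      _ ≤ |m| * r := by gcongr; exact abs_le.mpr hx
  obtain ⟨δ, hδ, hall⟩ := Metric.eventually_nhds_iff.mp (hpos1.and (hpos2.and hpos3))
  refine ⟨μ, ⟨hprob, ⟨R, hμR⟩, ?_, hm1⟩, hm2, ?_, ?_, min ε δ, lt_min hε hδ, ?_⟩
  · intro b hb
    rw [hb, integral_dirac] at hm1 hm2
    rw [hm1] at hm2
    norm_num at hm2
  · exact han.add (analyticAt_const.mul analyticAt_id)
  · simpa using hV0
  · intro m hm
    obtain ⟨-, hK1, hKm⟩ := hker m (lt_of_lt_of_le hm (min_le_left _ _))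
    obtain ⟨p1, p2, p3⟩ := hall (y := m) (by simpa using lt_of_lt_of_le hm (min_le_right _ _))
    have q1 : ∀ x ∈ Set.Icc (-R₁) R₁, 0 < V m + m * (m - x) := fun x hx => by
      have := hmx m x _ hx
      nlinarith
    have q2 : ∀ x ∈ Set.Icc (-R) R, 0 < V m + a * m + m * (m - x) := fun x hx => by
      have := hmx m x _ hx
      nlinarith
    set W : ℝ → ℝ := fun m => V m + a * m with hW
    have hKmeas : Measurable (cskKernel V m) := by unfold cskKernel; fun_prop
    have hKcont : ContinuousOn (cskKernel V m) (Set.Icc (-R₁) R₁) := by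
      unfold cskKernel
      exact ContinuousOn.div (by fun_prop) (by fun_prop) (fun x hx => (q1 x hx).ne')
    have hKL := memLp_of_bdd_support hR 2 _ hKmeas hKcont
    have hu : hKL.toLp =ᵐ[ν] _ := hKL.coeFn_toLp
    set u : Lp ℂ 2 ν := hKL.toLp with hudef
    have hTu := hF2 u _ hu
    rw [hK1] at hTu
    -- the resolvent equation
    have hD : (((W m + m * m : ℝ) : ℂ) • u - (m : ℂ) • T u) = ((W m : ℝ) : ℂ) • e := by
      apply Lp.ext
      filter_upwards [hu, he, hTu, hR, Lp.coeFn_smul ((W m : ℝ) : ℂ) e,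
        Lp.coeFn_sub (((W m + m * m : ℝ) : ℂ) • u) ((m : ℂ) • T u),
        Lp.coeFn_smul ((W m + m * m : ℝ) : ℂ) u, Lp.coeFn_smul (m : ℂ) (T u)]
        with x h1 h2 h3 h4 h5 h6 h7 h8
      rw [h5, h6, Pi.sub_apply, h7, h8, Pi.smul_apply, Pi.smul_apply, Pi.smul_apply, h1, h2, h3]
      simp only [smul_eq_mul]
      norm_cast
      have hk : cskKernel V m x * (V m + m * (m - x)) = V m :=
        div_mul_cancel₀ _ (q1 x h4).ne'
      simp only [hW]
      linear_combination hk
    obtain ⟨r1, r2⟩ := hμ W m u p3 q2 hD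
    refine ⟨?_, ?_, ?_⟩
    · have hμR' : ∀ᵐ x ∂μ, x ∈ Set.Icc (-R) R := hμR
      filter_upwards [hμR'] with x hx
      exact div_nonneg p3.le (q2 x hx).le
    · rw [r1, hF1 _ _ hu, hK1]
    · rw [r2, hF1 _ _ hTu]
      have i1 : Integrable (cskKernel V m) ν := integrable_of_bdd_support hR _ hKmeas hKcont
      have i2 : Integrable (fun x => x * cskKernel V m x) ν :=
        integrable_of_bdd_support hR _ (by fun_prop) (by fun_prop)
      have i3 : Integrable (fun x => x * cskKernel V m x + a * cskKernel V m x) ν :=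
        i2.add (i1.const_mul a)
      rw [integral_sub i3 (integrable_const _),
        integral_add i2 (i1.const_mul a), integral_const_mul, hKm, hK1]
      simp

/-- If `V ∈ 𝒱` then `m ↦ V(m) + a·m ∈ 𝒱`; moreover if `V ∈ 𝒱∞` then
`m ↦ V(m) + a·m ∈ 𝒱∞`. -/
theorem memV_add_linear (V : ℝ → ℝ) (a : ℝ) :
    (memV V → memV (fun m => V m + a * m)) ∧
    (memVinf V → memVinf (fun m => V m + a * m)) := by
  refine ⟨memV_add_linear_aux V a, fun h c => ?_⟩
  have := memV_add_linear_aux _ (a * c) (h c)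
  simpa only [mul_assoc] using this
end
end

section
/- If the functions V₁(m) and V₂(m) both belong to the class 𝒱∞, then the function m ↦ V₁(m) + V₂(m) − 1 also belongs to 𝒱∞. -/
open MeasureTheory Filter

noncomputable section

namespace CSK
open PowerSeries
open Finset.HasAntidiagonal (antidiagonal)

abbrev Ker := PowerSeries (PowerSeries ℝ)

/-- coefficients of a formal two-variable kernel -/
def kc (K : Ker) (i j : ℕ) : ℝ := coeff j (coeff i K)

lemma kc_ext {A B : Ker} (h : ∀ i j, kc A i j = kc B i j) : A = B := by
  ext i j; exact h i j

def kmk (a : ℕ → ℕ → ℝ) : Ker := PowerSeries.mk fun i => PowerSeries.mk fun j => a i j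

@[simp] lemma kc_kmk (a : ℕ → ℕ → ℝ) (i j) : kc (kmk a) i j = a i j := by simp [kc, kmk]
@[simp] lemma kc_add (A B : Ker) (i j) : kc (A + B) i j = kc A i j + kc B i j := by simp [kc]
@[simp] lemma kc_sub (A B : Ker) (i j) : kc (A - B) i j = kc A i j - kc B i j := by simp [kc]
@[simp] lemma kc_zero (i j) : kc 0 i j = 0 := by simp [kc]
lemma kc_one (i j) : kc 1 i j = if i = 0 ∧ j = 0 then 1 else 0 := by
  simp only [kc, coeff_one]
  by_cases h : i = 0 <;> by_cases h' : j = 0 <;> simp [h, h', coeff_one]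
lemma kc_mul (A B : Ker) (i j) : kc (A * B) i j =
    ∑ p ∈ antidiagonal i, ∑ q ∈ antidiagonal j, kc A p.1 q.1 * kc B p.2 q.2 := by
  simp [kc, coeff_mul]

/-- first (outer) variable -/
def vx : Ker := X
/-- second (inner) variable -/
def vy : Ker := C X

@[simp] lemma kc_vx_mul_zero (A : Ker) (j) : kc (vx * A) 0 j = 0 := by simp [kc, vx]
@[simp] lemma kc_vx_mul_succ (A : Ker) (i j) : kc (vx * A) (i+1) j = kc A i j := by
  simp [kc, vx, coeff_succ_X_mul]
@[simp] lemma kc_vy_mul_zero (A : Ker) (i) : kc (vy * A) i 0 = 0 := by simp [kc, vy]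
@[simp] lemma kc_vy_mul_succ (A : Ker) (i j) : kc (vy * A) i (j+1) = kc A i j := by
  simp [kc, vy, coeff_succ_X_mul]

lemma kc_vx (i j) : kc vx i j = if i = 1 ∧ j = 0 then 1 else 0 := by
  simp only [kc, vx, coeff_X]
  by_cases h : i = 1 <;> by_cases h' : j = 0 <;> simp [h, h', coeff_one]
lemma kc_vy (i j) : kc vy i j = if i = 0 ∧ j = 1 then 1 else 0 := by
  simp only [kc, vy, coeff_C]
  by_cases h : i = 0 <;> by_cases h' : j = 1 <;> simp [h, h', coeff_X]

/-- a one-variable series in the first variable -/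
def inx (a : ℕ → ℝ) : Ker := PowerSeries.mk fun i => C (a i)
/-- a one-variable series in the second variable -/
def iny (a : ℕ → ℝ) : Ker := C (PowerSeries.mk a)

lemma kc_inx (a i j) : kc (inx a) i j = if j = 0 then a i else 0 := by
  simp [kc, inx, coeff_C]
lemma kc_iny (a i j) : kc (iny a) i j = if i = 0 then a j else 0 := by
  simp only [kc, iny, coeff_C]; split_ifs <;> simp
lemma kc_inx_mul (a) (A : Ker) (i j) : kc (inx a * A) i j =
    ∑ p ∈ antidiagonal i, a p.1 * kc A p.2 j := by
  rw [kc, coeff_mul, map_sum]; simp [inx, kc, coeff_C_mul]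
lemma kc_iny_mul (a) (A : Ker) (i j) : kc (iny a * A) i j =
    ∑ p ∈ antidiagonal j, a p.1 * kc A i p.2 := by
  rw [kc, iny, coeff_C_mul, coeff_mul]; simp [kc]

/-- the top-left `N × N` block is a Gram matrix -/
def GramN (N : ℕ) (K : Ker) : Prop :=
  ∃ (ι : Type) (_ : Fintype ι) (u : ι → ℕ → ℝ), ∀ i < N, ∀ j < N, kc K i j = ∑ l, u l i * u l j

lemma GramN.congr {N} {A B : Ker} (h : GramN N A) (hAB : ∀ i < N, ∀ j < N, kc A i j = kc B i j) :
    GramN N B := by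
  obtain ⟨ι, _, u, hu⟩ := h
  exact ⟨ι, inferInstance, u, fun i hi j hj => by rw [← hAB i hi j hj, hu i hi j hj]⟩

lemma GramN.add {N} {A B : Ker} (hA : GramN N A) (hB : GramN N B) : GramN N (A + B) := by
  obtain ⟨ι, _, u, hu⟩ := hA
  obtain ⟨κ, _, v, hv⟩ := hB
  exact ⟨ι ⊕ κ, inferInstance, Sum.elim u v, fun i hi j hj => by
    simp [hu i hi j hj, hv i hi j hj]⟩

lemma GramN.zero {N} : GramN N 0 := ⟨Empty, inferInstance, fun _ _ => 0, fun i _ j _ => by simp⟩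

lemma GramN.one {N} : GramN N 1 :=
  ⟨Unit, inferInstance, fun _ i => if i = 0 then 1 else 0, fun i _ j _ => by
    simp only [kc_one]; by_cases h : i = 0 <;> by_cases h' : j = 0 <;> simp [h, h']⟩

lemma GramN.mul {N} {A B : Ker} (hA : GramN N A) (hB : GramN N B) : GramN N (A * B) := by
  obtain ⟨ι, _, u, hu⟩ := hA
  obtain ⟨κ, _, v, hv⟩ := hB
  refine ⟨ι × κ, inferInstance, fun l i => ∑ p ∈ antidiagonal i, u l.1 p.1 * v l.2 p.2,
    fun i hi j hj => ?_⟩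
  rw [kc_mul]
  have : ∀ l : ι × κ, (∑ p ∈ antidiagonal i, u l.1 p.1 * v l.2 p.2) *
      (∑ p ∈ antidiagonal j, u l.1 p.1 * v l.2 p.2) =
      ∑ p ∈ antidiagonal i, ∑ q ∈ antidiagonal j,
        (u l.1 p.1 * u l.1 q.1) * (v l.2 p.2 * v l.2 q.2) := by
    intro l
    rw [Finset.sum_mul_sum]
    refine Finset.sum_congr rfl fun p _ => Finset.sum_congr rfl fun q _ => ?_
    ring
  simp_rw [this]
  rw [Finset.sum_comm (s := Finset.univ)]
  refine Finset.sum_congr rfl fun p hp => ?_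
  rw [Finset.sum_comm (s := Finset.univ)]
  refine Finset.sum_congr rfl fun q hq => ?_
  rw [Finset.HasAntidiagonal.mem_antidiagonal] at hp hq
  rw [hu _ (by omega) _ (by omega), hv _ (by omega) _ (by omega), Finset.sum_mul_sum,
    Fintype.sum_prod_type]

lemma GramN.pow {N} {A : Ker} (hA : GramN N A) (k : ℕ) : GramN N (A ^ k) := by
  induction k with
  | zero => simpa using GramN.one
  | succ k ih => rw [pow_succ]; exact ih.mul hA

lemma GramN.sum {N} {F : ℕ → Ker} (h : ∀ k, GramN N (F k)) (M : ℕ) :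
    GramN N (∑ k ∈ Finset.range M, F k) := by
  induction M with
  | zero => simpa using GramN.zero
  | succ k ih => rw [Finset.sum_range_succ]; exact ih.add (h k)

lemma kc_vx_pow_mul {N i : ℕ} (hi : i < N) (A : Ker) (j) : kc (vx ^ N * A) i j = 0 := by
  simp only [kc, vx, coeff_X_pow_mul']
  rw [if_neg (by omega)]; simp

lemma geom_id {A B : Ker} (h : B * (1 - A) = 1) (N : ℕ) :
    B = (∑ k ∈ Finset.range N, A ^ k) + A ^ N * B := by
  have := mul_neg_geom_sum A N
  linear_combination (∑ k ∈ Finset.range N, A ^ k) * h - B * this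

lemma GramN.geom {N} {A A' B : Ker} (hA : GramN N A) (hx : A = vx * A') (h : B * (1 - A) = 1) :
    GramN N B := by
  refine (GramN.sum (F := fun k => A ^ k) (fun k => hA.pow k) N).congr fun i hi j _ => ?_
  conv_rhs => rw [geom_id h N]
  rw [kc_add, hx, mul_pow, mul_assoc, kc_vx_pow_mul hi, add_zero]

lemma GramN.symm {N} {A : Ker} (hA : GramN N A) {i j} (hi : i < N) (hj : j < N) :
    kc A i j = kc A j i := by
  obtain ⟨ι, _, u, hu⟩ := hA
  rw [hu i hi j hj, hu j hj i hi]
  exact Finset.sum_congr rfl fun l _ => mul_comm _ _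

lemma GramN.nonneg {N} {A : Ker} (hA : GramN N A) (c : ℕ → ℝ) :
    0 ≤ ∑ i ∈ Finset.range N, ∑ j ∈ Finset.range N, c i * c j * kc A i j := by
  obtain ⟨ι, _, u, hu⟩ := hA
  have : ∑ i ∈ Finset.range N, ∑ j ∈ Finset.range N, c i * c j * kc A i j =
      ∑ l, (∑ i ∈ Finset.range N, c i * u l i) ^ 2 := by
    simp_rw [sq, Finset.sum_mul_sum]
    rw [Finset.sum_comm]
    simp_rw [Finset.sum_comm (s := Finset.univ)]
    rw [Finset.sum_comm]
    refine Finset.sum_congr rfl fun i hi => Finset.sum_congr rfl fun j hj => ?_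
    rw [hu i (Finset.mem_range.1 hi) j (Finset.mem_range.1 hj), Finset.mul_sum]
    exact Finset.sum_congr rfl fun l _ => by ring
  rw [this]; positivity

lemma GramN.of_nonneg {N} {A : Ker} (hs : ∀ i < N, ∀ j < N, kc A i j = kc A j i)
    (h : ∀ c : ℕ → ℝ, 0 ≤ ∑ i ∈ Finset.range N, ∑ j ∈ Finset.range N, c i * c j * kc A i j) :
    GramN N A := by
  let M : Matrix (Fin N) (Fin N) ℝ := Matrix.of fun i j => kc A i j
  have hM : M.PosSemidef := by
    refine .of_dotProduct_mulVec_nonneg ?_ fun x => ?_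
    · ext i j; simp [M, hs j j.2 i i.2]
    · have := h (fun i => if hi : i < N then x ⟨i, hi⟩ else 0)
      rw [Finset.sum_range] at this
      simp only [Finset.sum_range (n := N)] at this
      refine this.trans_eq ?_
      simp only [dotProduct, Matrix.mulVec, M, Matrix.of_apply, Pi.star_apply, star_trivial,
        Finset.mul_sum]
      refine Finset.sum_congr rfl fun i _ => Finset.sum_congr rfl fun j _ => ?_
      simp; ring
  obtain ⟨m, v, hv⟩ := Matrix.posSemidef_iff_eq_sum_vecMulVec.1 hM
  refine ⟨Fin m, inferInstance, fun l i => if hi : i < N then v l ⟨i, hi⟩ else 0,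
    fun i hi j hj => ?_⟩
  have := congrFun (congrFun hv ⟨i, hi⟩) ⟨j, hj⟩
  simpa [M, hi, hj, Matrix.sum_apply, Matrix.vecMulVec_apply] using this

lemma GramN.limit {N} {F : ℕ → Ker} {A : Ker} (h : ∀ l, GramN N (F l))
    (ht : ∀ i j, Tendsto (fun l => kc (F l) i j) atTop (nhds (kc A i j))) : GramN N A := by
  refine GramN.of_nonneg (fun i hi j hj => ?_) fun c => ?_
  · refine tendsto_nhds_unique (ht i j) ((ht j i).congr fun l => ?_)
    exact (h l).symm hj hi
  · refine ge_of_tendsto' (x := atTop) (f := fun l => ∑ i ∈ Finset.range N, ∑ j ∈ Finset.range N,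
      c i * c j * kc (F l) i j) ?_ fun l => (h l).nonneg c
    exact tendsto_finsetSum _ fun i _ => tendsto_finsetSum _ fun j _ => (ht i j).const_mul _

/-- scaling both variables -/
def resc (c : ℝ) : Ker →+* Ker := (rescale (C c)).comp (PowerSeries.map (rescale c))

@[simp] lemma kc_resc (c) (K : Ker) (i j) : kc (resc c K) i j = c ^ (i + j) * kc K i j := by
  simp [kc, resc, coeff_rescale, ← map_pow, coeff_C_mul, pow_add, mul_assoc]

lemma GramN.resc {N} {A : Ker} (hA : GramN N A) (c) : GramN N (resc c A) := by
  obtain ⟨ι, _, u, hu⟩ := hA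
  refine ⟨ι, inferInstance, fun l i => c ^ i * u l i, fun i hi j hj => ?_⟩
  rw [kc_resc, hu i hi j hj, Finset.mul_sum]
  exact Finset.sum_congr rfl fun l _ => by ring

/-- the kernel `m n (U(m) - U(n)) / (m - n)`, where `V = 1 + m U`. -/
def XK (v : ℕ → ℝ) : Ker := kmk fun i j => if i = 0 ∨ j = 0 then 0 else v (i + j)

lemma XK_key (v : ℕ → ℝ) (h0 : v 0 = 1) :
    vy * inx v - vx * iny v = (vy - vx) * (1 - XK v) := by
  have : (vy - vx) * (1 - XK v) = vy - vx - vy * XK v + vx * XK v := by ring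
  rw [this]
  apply kc_ext
  rintro (_ | _ | i) (_ | _ | j) <;>
    simp [XK, kc_inx, kc_iny, kc_vx, kc_vy, h0]
  · congr 1; omega
  · rw [eq_comm, neg_add_eq_zero]; congr 1; omega

lemma XK_vxvy (v : ℕ → ℝ) : XK v = vx * (vy * kmk fun i j => v (i + j + 2)) := by
  apply kc_ext
  rintro (_ | i) (_ | j) <;> simp [XK]
  congr 1; omega

lemma resc_XK (v : ℕ → ℝ) (c : ℝ) : resc c (XK v) = XK (fun k => c ^ k * v k) := by
  apply kc_ext; intro i j
  simp only [kc_resc, XK, kc_kmk]; split_ifs <;> simp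

lemma XK_add (v w : ℕ → ℝ) : XK (fun k => v k + w k) = XK v + XK w := by
  apply kc_ext; intro i j
  simp only [kc_add, XK, kc_kmk]; split_ifs <;> simp

lemma exists_inv (A : Ker) : ∃ B : Ker, B * (1 - vx * A) = 1 := by
  have : IsUnit (1 - vx * A) := by
    rw [isUnit_iff_constantCoeff]; simp [vx]
  obtain ⟨u, hu⟩ := this
  exact ⟨(u⁻¹ : Kerˣ), by rw [← hu]; simp⟩

/-- complex constants -/
def kC (c : ℝ) : Ker := C (C c)

@[simp] lemma kc_kC_mul (c) (A : Ker) (i j) : kc (kC c * A) i j = c * kc A i j := by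
  simp [kc, kC]

/-- A formal version of membership in `𝒱`. -/
def FV (v : ℕ → ℝ) : Prop := ∃ P : Ker, P * (1 - vx * vy - XK v) = 1 ∧ ∀ N, GramN N P

/-- A formal version of membership in `𝒱∞`. -/
def FS (v : ℕ → ℝ) : Prop := ∃ P : Ker, P * (1 - XK v) = 1 ∧ ∀ N, GramN N P

lemma resc_vx (c) : resc c vx = kC c * vx := by
  simp [resc, vx, kC]

lemma resc_vy (c) : resc c vy = kC c * vy := by
  apply kc_ext; intro i j
  simp only [kc_resc, kc_kC_mul, kc_vy]
  split_ifs with h <;> simp [h]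

lemma kC_mul (a b) : kC (a * b) = kC a * kC b := by simp [kC]
lemma kC_one : kC 1 = 1 := by simp [kC]
lemma resc_kC (c a) : resc c (kC a) = kC a := by
  apply kc_ext; intro i j
  rw [← mul_one (kC a), kc_resc, kc_kC_mul, kc_one]
  split_ifs with h <;> simp [h]

/-- the kernel identity behind free convolution powers -/
lemma lam_id {S P D : Ker} (l : Ker) (hS : S * (1 - D) = 1) :
    P * (1 - l * (vx * vy) - D) = 1 ↔ P * (1 - l * (vx * vy) * S) = S := by
  constructor
  · intro h
    linear_combination S * h + (P * (l * (vx * vy)) * 0 - P) * hS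
  · intro h
    linear_combination (1 - D) * h + (1 + P * (l * (vx * vy))) * hS

end CSK


namespace CSK
open PowerSeries
open Finset.HasAntidiagonal (antidiagonal)

lemma GramN.vxvy {N} : GramN N (vx * vy) :=
  ⟨Unit, inferInstance, fun _ i => if i = 1 then 1 else 0, fun i _ j _ => by
    rcases i with _ | i
    · simp
    · simp only [kc_vx_mul_succ, kc_vy]
      by_cases h : i = 0 <;> by_cases h' : j = 1 <;> simp [h, h']⟩

lemma FV_of_FS {v : ℕ → ℝ} (h : FS v) (c : ℝ) : FV (fun k => c ^ k * v k) := by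
  obtain ⟨S, hS, hG⟩ := h
  have hS' : resc c S * (1 - XK (fun k => c ^ k * v k)) = 1 := by
    rw [← resc_XK, ← map_one (resc c), ← map_sub, ← map_mul, hS]
  obtain ⟨B, hB⟩ := exists_inv (vy * resc c S)
  refine ⟨resc c S * B, ?_, fun N => ?_⟩
  · have := (lam_id (P := resc c S * B) 1 hS').2 (by
      linear_combination resc c S * hB)
    rwa [one_mul] at this
  · have hc := (hG N).resc c
    refine hc.mul (GramN.geom (A := vx * vy * resc c S) (GramN.vxvy.mul hc)
      (mul_assoc _ _ _) (by rw [mul_assoc]; exact hB))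

lemma kC_pow (a : ℝ) (k : ℕ) : kC a ^ k = kC (a ^ k) := by simp [kC]

lemma FS_of_FV {v : ℕ → ℝ} (h : ∀ c : ℝ, FV (fun k => c ^ k * v k)) : FS v := by
  obtain ⟨S, hS⟩ : ∃ S, S * (1 - XK v) = 1 := by
    rw [XK_vxvy]; exact exists_inv _
  refine ⟨S, hS, fun N => ?_⟩
  have key : ∀ l : ℕ, ∃ Q : Ker, GramN N Q ∧
      Q * (1 - kC ((1 / ((l : ℝ) + 1)) ^ 2) * (vx * vy) - XK v) = 1 := by
    intro l
    set c : ℝ := (l : ℝ) + 1 with hc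
    have hc0 : c ≠ 0 := by positivity
    obtain ⟨P, hP, hG⟩ := h c
    refine ⟨resc (1 / c) P, (hG N).resc _, ?_⟩
    have := congrArg (resc (1 / c)) hP
    rw [map_mul, map_sub, map_sub, map_mul, resc_vx, resc_vy, map_one, resc_XK] at this
    have e : (fun k => (1 / c) ^ k * (c ^ k * v k)) = v := by
      ext k; rw [← mul_assoc, ← mul_pow]; simp [hc0]
    rw [e] at this
    rw [← kC_pow]; linear_combination this
  choose Q hQ hQ1 using key
  refine GramN.limit hQ fun i j => ?_
  set T : Ker := vx * vy * S with hT
  have hform : ∀ l : ℕ, kc (Q l) i j =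
      ∑ k ∈ Finset.range (i + 1), ((1 / ((l : ℝ) + 1)) ^ 2) ^ k * kc (S * T ^ k) i j := by
    intro l
    set a : ℝ := (1 / ((l : ℝ) + 1)) ^ 2
    have h1 := (lam_id (kC a) hS).1 (hQ1 l)
    have h2 : kC a * (vx * vy) * S = kC a * T := by rw [hT]; ring
    rw [h2] at h1
    have h3 := mul_neg_geom_sum (kC a * T) (i + 1)
    have h4 : Q l = S * ∑ k ∈ Finset.range (i + 1), (kC a * T) ^ k +
        (kC a * T) ^ (i + 1) * Q l := by
      linear_combination (∑ k ∈ Finset.range (i + 1), (kC a * T) ^ k) * h1 - Q l * h3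
    have h5 : (kC a * T) ^ (i + 1) * Q l =
        vx ^ (i + 1) * ((kC a * (vy * S)) ^ (i + 1) * Q l) := by
      rw [hT]; ring
    rw [h4, kc_add, h5, kc_vx_pow_mul (Nat.lt_succ_self i), add_zero, Finset.mul_sum]
    have : ∀ (s : Finset ℕ) (F : ℕ → Ker), kc (∑ k ∈ s, F k) i j = ∑ k ∈ s, kc (F k) i j := by
      intro s F; simp [kc]
    rw [this]
    refine Finset.sum_congr rfl fun k _ => ?_
    rw [mul_pow, kC_pow, mul_left_comm, kc_kC_mul]
  simp_rw [hform]
  have hlim : Tendsto (fun l : ℕ => (1 / ((l : ℝ) + 1)) ^ 2) atTop (nhds 0) := by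
    have := (tendsto_one_div_add_atTop_nhds_zero_nat (𝕜 := ℝ)).pow 2
    simpa using this
  have hcont : Continuous fun a : ℝ => ∑ k ∈ Finset.range (i + 1), a ^ k * kc (S * T ^ k) i j := by
    fun_prop
  have := (hcont.tendsto 0).comp hlim
  have e0 : kc S i j = ∑ k ∈ Finset.range (i + 1), (0 : ℝ) ^ k * kc (S * T ^ k) i j := by
    rw [Finset.sum_range_succ']; simp
  rw [e0]
  exact this

lemma FS_add {v w : ℕ → ℝ} (hv : FS v) (hw : FS w) :
    FS (fun k => v k + w k - if k = 0 then 1 else 0) := by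
  obtain ⟨S₁, h₁, G₁⟩ := hv
  obtain ⟨S₂, h₂, G₂⟩ := hw
  have e : XK (fun k => v k + w k - if k = 0 then 1 else 0) = XK v + XK w := by
    rw [← XK_add]; apply kc_ext; rintro (_ | i) (_ | j) <;> simp [XK]
  have hT : ∀ {u : ℕ → ℝ} {S : Ker}, S * (1 - XK u) = 1 → (∀ N, GramN N S) →
      ∀ N, GramN N (XK u * S) := by
    intro u S h G N
    have hS : XK u * S = S - 1 := by linear_combination -h
    have h0 : ∀ j, kc (XK u * S) 0 j = 0 := by intro j; rw [XK_vxvy, mul_assoc]; simp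
    have h0' : ∀ i, kc (XK u * S) i 0 = 0 := by
      intro j; rw [XK_vxvy, mul_left_comm, mul_assoc, mul_assoc, mul_left_comm vx]; simp
    obtain ⟨ι, _, f, hf⟩ := G N
    refine ⟨ι, inferInstance, fun l i => if i = 0 then 0 else f l i, fun i hi j hj => ?_⟩
    by_cases hi0 : i = 0
    · subst hi0; simp [h0]
    by_cases hj0 : j = 0
    · subst hj0; simp [h0']
    rw [hS, kc_sub, kc_one, hf i hi j hj]
    simp [hi0, hj0]
  obtain ⟨B, hB⟩ := exists_inv ((vy * kmk fun i j => v (i + j + 2)) * S₁ * (XK w * S₂))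
  have hB' : B * (1 - XK v * S₁ * (XK w * S₂)) = 1 := by
    rw [XK_vxvy v]; linear_combination hB
  refine ⟨S₁ * S₂ * B, ?_, fun N => ?_⟩
  · rw [e]
    linear_combination hB' + (S₂ * (1 - XK w) * B) * h₁ + B * h₂
  · refine ((G₁ N).mul (G₂ N)).mul (GramN.geom (A' := (vy * kmk fun i j => v (i + j + 2)) * S₁ * (XK w * S₂)) ((hT h₁ G₁ N).mul (hT h₂ G₂ N)) ?_ hB')
    rw [XK_vxvy v]; ring

end CSK


namespace CSK
open PowerSeries (coeff)
open Polynomial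
open Finset.HasAntidiagonal (antidiagonal)

/-- coefficients of `V(m) + m ^ 2` -/
def gg (v : ℕ → ℝ) (k : ℕ) : ℝ := v k + if k = 2 then 1 else 0

/-- the coefficients `f_k(x)` of `V(m) / (V(m) + m (m - x)) = ∑ f_k(x) m ^ k`. -/
def fp (v : ℕ → ℝ) : ℕ → ℝ[X]
  | 0 => 1
  | k + 1 => C (v 0)⁻¹ * (X * fp v k - ∑ i : Fin (k + 1), C (gg v (k - i + 1)) * fp v i
      + C (v (k + 1)))

lemma fp_zero (v) : fp v 0 = 1 := by rw [fp]

lemma fp_rec (v : ℕ → ℝ) (h : v 0 ≠ 0) (k : ℕ) : X * fp v k = C (v 0) * fp v (k + 1) +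
    ∑ p ∈ antidiagonal k, C (gg v (p.1 + 1)) * fp v p.2 - C (v (k + 1)) := by
  have e : ∑ p ∈ antidiagonal k, C (gg v (p.1 + 1)) * fp v p.2 =
      ∑ i : Fin (k + 1), C (gg v (k - i + 1)) * fp v i := by
    rw [← Finset.sum_range (fun i => C (gg v (k - i + 1)) * fp v i),
      ← Finset.Nat.sum_antidiagonal_swap,
      Finset.Nat.sum_antidiagonal_eq_sum_range_succ_mk]
    rfl
  rw [e]
  conv_rhs => rw [fp]
  rw [← mul_assoc, ← C_mul, mul_inv_cancel₀ h]
  simp only [C_1, one_mul]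
  ring

lemma E_key {v : ℕ → ℝ} (h : v 0 ≠ 0) (L : ℝ[X] →ₗ[ℝ] ℝ)
    (hL : ∀ k, L (fp v k) = if k = 0 then 1 else 0) :
    vy * (inx (gg v) * kmk (fun i j => L (fp v i * fp v j)) - inx v) =
    vx * (iny (gg v) * kmk (fun i j => L (fp v i * fp v j)) - iny v) := by
  have g0 : gg v 0 = v 0 := by simp [gg]
  have hC : ∀ (a : ℝ) (p : ℝ[X]), L (C a * p) = a * L p := by
    intro a p; rw [← smul_eq_C_mul, map_smul, smul_eq_mul]
  have hx : ∀ i j, kc (inx (gg v) * kmk (fun i j => L (fp v i * fp v j)) - inx v) (i + 1) j =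
      L (X * fp v i * fp v j) := by
    intro i j
    rw [fp_rec v h, kc_sub, kc_inx_mul, Finset.Nat.sum_antidiagonal_succ, kc_inx, sub_mul, add_mul,
      Finset.sum_mul, map_sub, map_add, map_sum]
    simp only [mul_assoc, hC, hL, kc_kmk, g0, mul_ite, mul_one, mul_zero]
  have hy : ∀ i j, kc (iny (gg v) * kmk (fun i j => L (fp v i * fp v j)) - iny v) i (j + 1) =
      L (X * fp v j * fp v i) := by
    intro i j
    rw [fp_rec v h, kc_sub, kc_iny_mul, Finset.Nat.sum_antidiagonal_succ, kc_iny, sub_mul, add_mul,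
      Finset.sum_mul, map_sub, map_add, map_sum]
    simp only [mul_assoc, hC, hL, kc_kmk, g0, mul_ite, mul_one, mul_zero]
    simp only [mul_comm (fp v i)]
  apply kc_ext
  rintro (_ | i) (_ | j)
  · simp
  · simp [kc_inx_mul, kc_inx, g0, fp_zero, hL]
  · simp [kc_iny_mul, kc_iny, g0, fp_zero, hL]
  · rw [kc_vy_mul_succ, kc_vx_mul_succ, hx, hy]
    congr 1; ring

lemma vy_sub_vx_ne : vy - vx ≠ 0 := by
  intro h
  have := congrArg (fun K => kc K 0 1) h
  simp [kc_vx, kc_vy] at this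

lemma E_eq {v : ℕ → ℝ} (h : v 0 = 1) (L : ℝ[X] →ₗ[ℝ] ℝ)
    (hL : ∀ k, L (fp v k) = if k = 0 then 1 else 0) {P : Ker}
    (hP : P * (1 - vx * vy - XK v) = 1) :
    kmk (fun i j => L (fp v i * fp v j)) = 1 + vx * (vy * P) := by
  have h1 := E_key (by rw [h]; norm_num) L hL
  set E := kmk (fun i j => L (fp v i * fp v j))
  have gx : inx (gg v) = inx v + vx * vx := by
    apply kc_ext
    rintro (_ | _ | i) j
    · simp [kc_inx, gg]
    · simp [kc_inx, gg, kc_vx]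
    · simp [kc_inx, gg, kc_vx]; split_ifs <;> simp_all
  have gy : iny (gg v) = iny v + vy * vy := by
    apply kc_ext
    rintro i (_ | _ | j)
    · simp [kc_iny, gg]
    · simp [kc_iny, gg, kc_vy]
    · simp [kc_iny, gg, kc_vy]; split_ifs <;> simp_all
  rw [gx, gy] at h1
  have h2 := XK_key v h
  have h3 : (vy - vx) * ((1 - XK v) * (E - 1) - vx * vy * E) = 0 := by
    linear_combination h1 - (E - 1) * h2
  have h4 := (mul_eq_zero.1 h3).resolve_left vy_sub_vx_ne
  linear_combination P * h4 - (E - 1) * hP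

lemma FV_of_L {v : ℕ → ℝ} (h : v 0 = 1) (L : ℝ[X] →ₗ[ℝ] ℝ)
    (hL : ∀ k, L (fp v k) = if k = 0 then 1 else 0) (hpos : ∀ p, 0 ≤ L (p * p)) : FV v := by
  obtain ⟨P, hP⟩ := exists_inv (vy + vy * kmk fun i j => v (i + j + 2))
  have hP' : P * (1 - vx * vy - XK v) = 1 := by
    rw [XK_vxvy]; linear_combination hP
  refine ⟨P, hP', fun N => ?_⟩
  have hE := E_eq h L hL hP'
  have hk : ∀ i j, kc P i j = L (fp v (i + 1) * fp v (j + 1)) := by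
    intro i j
    have := congrArg (fun K => kc K (i + 1) (j + 1)) hE
    simpa [kc_one] using this.symm
  refine GramN.of_nonneg (fun i _ j _ => by rw [hk, hk, mul_comm]) fun c => ?_
  have := hpos (∑ i ∈ Finset.range N, c i • fp v (i + 1))
  rw [Finset.sum_mul_sum] at this
  simpa [hk, map_sum, mul_assoc, mul_left_comm] using this

/-- transfer operator -/
def BB (v : ℕ → ℝ) : (ℕ → ℝ) →ₗ[ℝ] (ℕ → ℝ) where
  toFun l k := l (k + 1) + ∑ p ∈ antidiagonal k, gg v (p.1 + 1) * l p.2 - v (k + 1) * l 0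
  map_add' l l' := by
    ext k; simp [mul_add, Finset.sum_add_distrib]; ring
  map_smul' c l := by
    ext k; simp [mul_sub, mul_add, Finset.mul_sum, mul_left_comm]

lemma BB_apply (v l k) : BB v l k =
  l (k + 1) + ∑ p ∈ antidiagonal k, gg v (p.1 + 1) * l p.2 - v (k + 1) * l 0 := rfl

lemma BB_fp {v : ℕ → ℝ} (h : v 0 = 1) (k : ℕ) : ∀ l, (aeval (BB v) (fp v k)) l 0 = l k := by
  induction k using Nat.strong_induction_on with
  | _ k ih =>
    intro l
    rcases k with _ | k
    · simp [fp_zero]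
    · have h1 := fp_rec v (by rw [h]; norm_num) k
      rw [h, C_1, one_mul] at h1
      have h2 : fp v (k + 1) = fp v k * X - ∑ p ∈ antidiagonal k, C (gg v (p.1 + 1)) * fp v p.2
          + C (v (k + 1)) := by linear_combination -h1
      have h3 : ∀ p ∈ antidiagonal k, (gg v (p.1 + 1)) * (aeval (BB v) (fp v p.2)) l 0 =
          gg v (p.1 + 1) * l p.2 := by
        intro p hp
        rw [Finset.HasAntidiagonal.mem_antidiagonal] at hp
        rw [ih p.2 (by omega)]
      rw [h2]
      simp only [map_add, map_sub, map_mul, map_sum, aeval_X, aeval_C, LinearMap.add_apply,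
        LinearMap.sub_apply, Module.End.mul_apply, Pi.add_apply, Pi.sub_apply,
        ih k (Nat.lt_succ_self k), LinearMap.sum_apply, Finset.sum_apply,
        Module.algebraMap_end_apply, Pi.smul_apply, smul_eq_mul]
      rw [Finset.sum_congr rfl h3, BB_apply]
      ring

lemma gg_bound {v : ℕ → ℝ} {A r : ℝ} (hr : 1 ≤ r) (hv : ∀ k, |v k| ≤ A * r ^ k) (k : ℕ) :
    |gg v (k + 1)| ≤ (A * r + 1) * r ^ k := by
  have h1 := hv (k + 1)
  have h2 : 1 ≤ r ^ k := one_le_pow₀ hr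
  calc |gg v (k + 1)| ≤ |v (k + 1)| + |if k + 1 = 2 then (1:ℝ) else 0| := abs_add_le _ _
    _ ≤ A * r ^ (k + 1) + 1 := by gcongr; split_ifs <;> simp
    _ ≤ (A * r + 1) * r ^ k := by rw [pow_succ]; nlinarith

lemma geo_bound (r : ℝ) (hr : 1 ≤ r) (k : ℕ) :
    ∑ p ∈ antidiagonal k, r ^ p.1 * (2 * r) ^ p.2 ≤ 2 * (2 * r) ^ k := by
  have h1 : ∀ p ∈ antidiagonal k, r ^ p.1 * (2 * r) ^ p.2 = r ^ k * 2 ^ p.2 := by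
    intro p hp
    rw [Finset.HasAntidiagonal.mem_antidiagonal] at hp
    rw [← hp, mul_pow, pow_add]; ring
  rw [Finset.sum_congr rfl h1, ← Finset.mul_sum, ← Finset.Nat.sum_antidiagonal_swap,
    Finset.Nat.sum_antidiagonal_eq_sum_range_succ_mk]
  simp only [Prod.snd_swap]
  have h2 : ∑ i ∈ Finset.range k.succ, (2:ℝ) ^ i ≤ 2 * 2 ^ k := by
    rw [geom_sum_eq (by norm_num), Nat.succ_eq_add_one, pow_succ]; linarith
  calc _ ≤ r ^ k * (2 * 2 ^ k) := by gcongr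
    _ = _ := by rw [mul_pow]; ring

lemma BB_bound {v : ℕ → ℝ} {A r : ℝ} (hA : 0 ≤ A) (hr : 1 ≤ r) (hv : ∀ k, |v k| ≤ A * r ^ k)
    (n : ℕ) : ∀ k, |((BB v) ^ n) (fun k => if k = 0 then 1 else 0) k| ≤
      (2 * r + 3 * (A * r + 1)) ^ n * (2 * r) ^ k := by
  have hD : 0 ≤ 2 * r + 3 * (A * r + 1) := by positivity
  induction n with
  | zero => intro k; rcases k with _ | k <;> simp; positivity
  | succ n ih =>
    intro k
    rw [pow_succ', Module.End.mul_apply]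
    set l := ((BB v) ^ n) (fun k => if k = 0 then 1 else 0)
    set D := 2 * r + 3 * (A * r + 1) with hDd
    set M := D ^ n with hM
    have hM0 : 0 ≤ M := by positivity
    rw [BB_apply]
    have hg := gg_bound hr hv
    have hv' : |v (k + 1)| ≤ (A * r + 1) * (2 * r) ^ k := by
      have := hv (k + 1)
      have h2 : r ^ k ≤ (2 * r) ^ k := by gcongr; linarith
      rw [pow_succ] at this
      have h3 : 0 ≤ (2 * r) ^ k := by positivity
      nlinarith [mul_le_mul_of_nonneg_left h2 (by positivity : 0 ≤ A * r)]
    calc _ ≤ |l (k + 1)| + ∑ p ∈ antidiagonal k, |gg v (p.1 + 1)| * |l p.2| + |v (k + 1)| * |l 0| := by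
          refine (abs_sub _ _).trans ?_
          rw [abs_mul]
          gcongr
          refine (abs_add_le _ _).trans ?_
          gcongr
          refine (Finset.abs_sum_le_sum_abs _ _).trans (le_of_eq ?_)
          simp_rw [abs_mul]
      _ ≤ M * (2 * r) ^ (k + 1) + ∑ p ∈ antidiagonal k, ((A * r + 1) * r ^ p.1) * (M * (2 * r) ^ p.2)
          + (A * r + 1) * (2 * r) ^ k * (M * (2 * r) ^ 0) := by
          gcongr with p hp
          · exact ih _
          · exact hg _
          · exact ih _
          · exact ih _
      _ = M * (2 * r) ^ (k + 1) + (A * r + 1) * M * (∑ p ∈ antidiagonal k, r ^ p.1 * (2 * r) ^ p.2)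
          + (A * r + 1) * (2 * r) ^ k * M := by
          rw [Finset.mul_sum]; congr 1
          · congr 1
            refine Finset.sum_congr rfl fun p _ => by ring
          · simp
      _ ≤ M * (2 * r) ^ (k + 1) + (A * r + 1) * M * (2 * (2 * r) ^ k)
          + (A * r + 1) * (2 * r) ^ k * M := by
          gcongr; exact geo_bound r hr k
      _ = _ := by rw [hDd, pow_succ, pow_succ]; ring

lemma L_of_FV {v : ℕ → ℝ} (h : v 0 = 1) {A r : ℝ} (hA : 0 ≤ A) (hr : 1 ≤ r)
    (hv : ∀ k, |v k| ≤ A * r ^ k) (hF : FV v) :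
    ∃ L : ℝ[X] →ₗ[ℝ] ℝ, (∀ k, L (fp v k) = if k = 0 then 1 else 0) ∧ (∀ p, 0 ≤ L (p * p)) ∧
      ∃ D : ℝ, 0 < D ∧ ∀ n, |L (X ^ n)| ≤ D ^ n := by
  let L : ℝ[X] →ₗ[ℝ] ℝ := (LinearMap.proj (R := ℝ) (φ := fun _ : ℕ => ℝ) 0).comp
    ((LinearMap.applyₗ (fun k : ℕ => if k = 0 then (1:ℝ) else 0)).comp
      (aeval (BB v)).toLinearMap)
  have hLa : ∀ p, L p = (aeval (BB v) p) (fun k : ℕ => if k = 0 then (1:ℝ) else 0) 0 :=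
    fun p => rfl
  have hL : ∀ k, L (fp v k) = if k = 0 then 1 else 0 := by
    intro k; rw [hLa, BB_fp h]
  refine ⟨L, hL, ?_, 2 * r + 3 * (A * r + 1), by positivity, fun n => ?_⟩
  · obtain ⟨P, hP, hG⟩ := hF
    have hE := E_eq h L hL hP
    have hGE : ∀ N, GramN N (kmk (fun i j => L (fp v i * fp v j))) := by
      intro N
      rw [hE, ← mul_assoc]
      exact GramN.one.add (GramN.vxvy.mul (hG N))
    have hspan : ∀ p : ℝ[X], p ∈ Submodule.span ℝ (Set.range (fp v)) := by
      have hX : ∀ q ∈ Submodule.span ℝ (Set.range (fp v)),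
          X * q ∈ Submodule.span ℝ (Set.range (fp v)) := by
        intro q hq
        induction hq using Submodule.span_induction with
        | mem q hq =>
          obtain ⟨k, rfl⟩ := hq
          rw [fp_rec v (by rw [h]; norm_num) k]
          have hk : ∀ (a : ℝ) k, C a * fp v k ∈ Submodule.span ℝ (Set.range (fp v)) := by
            intro a k
            rw [← smul_eq_C_mul]
            exact Submodule.smul_mem _ _ (Submodule.subset_span ⟨k, rfl⟩)
          refine Submodule.sub_mem _ (Submodule.add_mem _ (hk _ _)
            (Submodule.sum_mem _ fun p _ => hk _ _)) ?_
          have := hk (v (k + 1)) 0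
          rwa [fp_zero, mul_one] at this
        | zero => simp
        | add a b _ _ ha hb => rw [mul_add]; exact Submodule.add_mem _ ha hb
        | smul c a _ ha => rw [mul_smul_comm]; exact Submodule.smul_mem _ _ ha
      intro p
      induction p using Polynomial.induction_on with
      | C a =>
        have := Submodule.smul_mem _ a (Submodule.subset_span (R := ℝ) (s := Set.range (fp v)) ⟨0, rfl⟩)
        rwa [fp_zero, smul_eq_C_mul, mul_one] at this
      | add p q hp hq => exact Submodule.add_mem _ hp hq
      | monomial n a ih =>
        have := hX _ ih
        rwa [show X * (C a * X ^ n) = C a * X ^ (n + 1) by ring] at this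
    intro p
    obtain ⟨c, hc⟩ := (Finsupp.mem_span_range_iff_exists_finsupp).1 (hspan p)
    obtain ⟨N, hN⟩ : ∃ N, c.support ⊆ Finset.range N := c.support.exists_nat_subset_range
    have hc' : p = ∑ i ∈ Finset.range N, c i • fp v i := by
      rw [← hc]
      exact Finsupp.sum_of_support_subset _ hN _ (by simp)
    have := (hGE N).nonneg c
    rw [hc', Finset.sum_mul_sum]
    simpa [map_sum, mul_assoc, mul_left_comm] using this
  · rw [hLa, map_pow, aeval_X]
    simpa using BB_bound hA hr hv n 0

end CSK

namespace CSK
open Polynomial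

lemma ratio_bound (a : ℕ → ℝ) (ha : ∀ k, 0 ≤ a k) (hcs : ∀ k, a (k+1) ^ 2 ≤ a k * a (k+2))
    (C B : ℝ) (hB : 0 < B) (hb : ∀ k, a k ≤ C * B ^ k) : a 1 ≤ B * a 0 := by
  by_contra! hlt
  have h0 : 0 < a 0 := by
    rcases (ha 0).lt_or_eq with h | h
    · exact h
    · have := hcs 0
      rw [← h] at this hlt
      simp at this hlt
      rw [this] at hlt
      exact absurd hlt (lt_irrefl _)
  set q := a 1 / a 0 with hq
  have hqB : B < q := by rw [hq, lt_div_iff₀ h0]; exact hlt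
  have hq0 : 0 < q := hB.trans hqB
  have key : ∀ k, 0 < a k ∧ q * a k ≤ a (k+1) := by
    intro k
    induction k with
    | zero => exact ⟨h0, by rw [hq, div_mul_cancel₀ _ h0.ne']⟩
    | succ k ih =>
      have hp : 0 < a (k+1) := lt_of_lt_of_le (mul_pos hq0 ih.1) ih.2
      refine ⟨hp, ?_⟩
      have h1 := hcs k
      have h2 : q * a k * a (k+1) ≤ a (k+1) ^ 2 := by nlinarith [ih.2]
      have h3 : a k * (q * a (k+1)) ≤ a k * a (k+2) := by nlinarith
      exact le_of_mul_le_mul_left h3 ih.1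
  have hpow : ∀ k, q ^ k * a 0 ≤ a k := by
    intro k
    induction k with
    | zero => simp
    | succ k ih =>
      calc q ^ (k+1) * a 0 = q * (q ^ k * a 0) := by ring
        _ ≤ q * a k := by gcongr
        _ ≤ _ := (key k).2
  have hr : 1 < q / B := by rwa [one_lt_div hB]
  obtain ⟨n, hn⟩ := pow_unbounded_of_one_lt (C / a 0) hr
  have h1 := (hpow n).trans (hb n)
  rw [div_pow, lt_div_iff₀ (by positivity), div_mul_eq_mul_div, div_lt_iff₀ h0] at hn
  linarith


lemma L_cs (L : ℝ[X] →ₗ[ℝ] ℝ) (hpos : ∀ p, 0 ≤ L (p * p))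
    (p q : ℝ[X]) : L (p * q) ^ 2 ≤ L (p * p) * L (q * q) := by
  have h : ∀ t : ℝ, 0 ≤ L (q*q) * (t * t) + (2 * L (p*q)) * t + L (p*p) := by
    intro t
    have h1 := hpos (p + C t * q)
    have h2 : (p + C t * q) * (p + C t * q) = p * p + (2 * t) • (p * q) + (t*t) • (q*q) := by
      simp only [smul_eq_C_mul, C_mul]
      have : (C (2:ℝ) : ℝ[X]) = 2 := rfl
      rw [this]; ring
    rw [h2] at h1
    simp only [map_add, map_smul, smul_eq_mul] at h1
    linarith
  have := discrim_le_zero h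
  rw [discrim] at this
  nlinarith

lemma L_X2 (L : ℝ[X] →ₗ[ℝ] ℝ) (hpos : ∀ p, 0 ≤ L (p * p))
    {D : ℝ} (hD : 0 < D) (hb : ∀ n, |L (X ^ n)| ≤ D ^ n) (p : ℝ[X]) :
    L (X * p * (X * p)) ≤ D ^ 2 * L (p * p) := by
  have hbd : ∀ q : ℝ[X], ∃ C, ∀ n, |L (X ^ n * q)| ≤ C * D ^ n := by
    intro q
    induction q using Polynomial.induction_on' with
    | add p q hp hq =>
      obtain ⟨C1, h1⟩ := hp
      obtain ⟨C2, h2⟩ := hq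
      refine ⟨C1 + C2, fun n => ?_⟩
      rw [mul_add, map_add, add_mul]
      exact (abs_add_le _ _).trans (add_le_add (h1 n) (h2 n))
    | monomial k a =>
      refine ⟨|a| * D ^ k, fun n => ?_⟩
      have : X ^ n * monomial k a = a • (X ^ (n + k) : ℝ[X]) := by
        rw [← C_mul_X_pow_eq_monomial, smul_eq_C_mul]; ring
      rw [this, map_smul, smul_eq_mul, abs_mul]
      calc |a| * |L (X ^ (n+k))| ≤ |a| * D ^ (n+k) := by gcongr; exact hb _
        _ = _ := by ring
  obtain ⟨C, hC⟩ := hbd (p * p)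
  have := ratio_bound (fun k => L (X ^ k * p * (X ^ k * p))) (fun k => hpos _) (fun k => by
    have := L_cs L hpos (X ^ k * p) (X ^ (k+2) * p)
    have e : X ^ k * p * (X ^ (k+2) * p) = X ^ (k+1) * p * (X ^ (k+1) * p) := by ring
    rw [e] at this
    exact this) C (D ^ 2) (by positivity) (fun k => by
      have := hC (2 * k)
      have e : X ^ (2 * k) * (p * p) = X ^ k * p * (X ^ k * p) := by ring
      rw [e, pow_mul] at this
      exact (le_abs_self _).trans this)
  simpa using this

lemma L_X1 (L : ℝ[X] →ₗ[ℝ] ℝ) (hpos : ∀ p, 0 ≤ L (p * p))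
    {D : ℝ} (hD : 0 < D) (hb : ∀ n, |L (X ^ n)| ≤ D ^ n) (p : ℝ[X]) :
    |L (X * (p * p))| ≤ D * L (p * p) := by
  have h1 := L_cs L hpos (X * p) p
  have h2 := L_X2 L hpos hD hb p
  have h3 := hpos p
  rw [mul_assoc X p p] at h1
  apply abs_le_of_sq_le_sq _ (by positivity)
  calc _ ≤ _ := h1
    _ ≤ D ^ 2 * L (p * p) * L (p * p) := by gcongr
    _ = _ := by ring

lemma L_cone (L : ℝ[X] →ₗ[ℝ] ℝ) (hpos : ∀ p, 0 ≤ L (p * p))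
    {D : ℝ} (hD : 0 < D) (hb : ∀ n, |L (X ^ n)| ≤ D ^ n) (i j : ℕ) :
    0 ≤ L ((C D - X) ^ i * (C D + X) ^ j) := by
  have hC : ∀ q : ℝ[X], L (C D * q) = D * L q := fun q => by
    rw [← smul_eq_C_mul, map_smul, smul_eq_mul]
  have hC2 : ∀ q : ℝ[X], L (C D * C D * q) = D ^ 2 * L q := fun q => by
    rw [mul_assoc, hC, hC]; ring
  obtain ⟨a, ha | ha⟩ := i.even_or_odd' <;> obtain ⟨b, hb' | hb'⟩ := j.even_or_odd' <;>
    subst ha <;> subst hb'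
  · have e : (C D - X) ^ (2 * a) * (C D + X) ^ (2 * b) =
      ((C D - X) ^ a * (C D + X) ^ b) * ((C D - X) ^ a * (C D + X) ^ b) := by ring
    rw [e]; exact hpos _
  · set p := ((C D - X) ^ a * (C D + X) ^ b) with hp
    have e : (C D - X) ^ (2 * a) * (C D + X) ^ (2 * b + 1) = C D * (p * p) + X * (p * p) := by
      rw [hp]; ring
    rw [e, map_add, hC]
    have := neg_le_of_abs_le (L_X1 L hpos hD hb p)
    linarith
  · set p := ((C D - X) ^ a * (C D + X) ^ b) with hp
    have e : (C D - X) ^ (2 * a + 1) * (C D + X) ^ (2 * b) = C D * (p * p) - X * (p * p) := by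
      rw [hp]; ring
    rw [e, map_sub, hC]
    have := le_of_abs_le (L_X1 L hpos hD hb p)
    linarith
  · set p := ((C D - X) ^ a * (C D + X) ^ b) with hp
    have e : (C D - X) ^ (2 * a + 1) * (C D + X) ^ (2 * b + 1) =
        C D * C D * (p * p) - (X * p * (X * p)) := by
      rw [hp]; ring
    rw [e, map_sub, hC2]
    have := L_X2 L hpos hD hb p
    linarith

lemma bern_tendsto (j : ℕ) : ∀ M : ℝ[X] →ₗ[ℝ] ℝ,
    Tendsto (fun n : ℕ => ∑ k ∈ Finset.range (n+1), ((k:ℝ)/n) ^ j * M (bernsteinPolynomial ℝ n k))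
      atTop (nhds (M (X ^ j))) := by
  induction j using Nat.strong_induction_on with
  | _ j ih =>
  intro M
  rcases j with _ | j
  · simp only [pow_zero, one_mul, ← map_sum, bernsteinPolynomial.sum]
    exact tendsto_const_nhds
  set M' : ℝ[X] →ₗ[ℝ] ℝ := M ∘ₗ LinearMap.mulLeft ℝ X with hM'
  have hMX : M (X ^ (j+1)) = M' (X ^ j) := by simp [hM', pow_succ']
  have hB : ∀ N l : ℕ, (((l+1 : ℕ):ℝ)/((N+1 : ℕ):ℝ)) * M (bernsteinPolynomial ℝ (N+1) (l+1)) =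
      M' (bernsteinPolynomial ℝ N l) := by
    intro N l
    simp only [hM', LinearMap.comp_apply, LinearMap.mulLeft_apply]
    rw [← smul_eq_mul, ← map_smul]
    congr 1
    rw [smul_eq_C_mul, bernsteinPolynomial, bernsteinPolynomial, Nat.add_sub_add_right]
    have h1 : (((l+1 : ℕ):ℝ)/((N+1 : ℕ):ℝ)) * ((N+1).choose (l+1) : ℝ) = (N.choose l : ℝ) := by
      have := Nat.add_one_mul_choose_eq N l
      have h2 : ((N+1 : ℕ):ℝ) * (N.choose l : ℝ) = ((N+1).choose (l+1) : ℝ) * ((l+1 : ℕ):ℝ) := by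
        exact_mod_cast this
      field_simp
      linarith
    have h3 : C (((l+1 : ℕ):ℝ)/((N+1 : ℕ):ℝ)) * (((N+1).choose (l+1) : ℕ) : ℝ[X]) =
        ((N.choose l : ℕ) : ℝ[X]) := by
      rw [← C_eq_natCast, ← C_eq_natCast, ← C_mul]
      congr 1
    rw [← h3]; ring
  rw [hMX, ← tendsto_add_atTop_iff_nat 1]
  have hlim : Tendsto (fun N : ℕ => ∑ i ∈ Finset.range (j+1),
      (((N:ℝ)/(N+1)) ^ i * (1/((N:ℝ)+1)) ^ (j - i) * (j.choose i : ℝ)) *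
        ∑ k ∈ Finset.range (N+1), ((k:ℝ)/N) ^ i * M' (bernsteinPolynomial ℝ N k))
      atTop (nhds (∑ i ∈ Finset.range (j+1), ((1:ℝ) ^ i * 0 ^ (j - i) * (j.choose i : ℝ)) *
        M' (X ^ i))) := by
    refine tendsto_finsetSum _ fun i hi => ?_
    refine Tendsto.mul (((Tendsto.pow ?_ _).mul (Tendsto.pow ?_ _)).mul_const _)
      (ih i (by simpa using hi) M')
    · exact tendsto_natCast_div_add_atTop (1:ℝ)
    · exact tendsto_one_div_add_atTop_nhds_zero_nat
  have hval : (∑ i ∈ Finset.range (j+1), ((1:ℝ) ^ i * 0 ^ (j - i) * (j.choose i : ℝ)) *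
        M' (X ^ i)) = M' (X ^ j) := by
    rw [Finset.sum_eq_single j]
    · simp
    · intro b hb hbj
      have : j - b ≠ 0 := by simp at hb; omega
      simp [this]
    · simp
  rw [hval] at hlim
  refine hlim.congr' ?_
  filter_upwards [eventually_ge_atTop 1] with N hN
  have hN0 : (N:ℝ) ≠ 0 := by positivity
  rw [Finset.sum_range_succ' _ (N+1)]
  simp only [Nat.cast_zero, zero_div, ne_eq, Nat.add_eq_zero_iff, one_ne_zero, and_false,
    not_false_eq_true, zero_pow, zero_mul, add_zero]
  simp_rw [Finset.mul_sum]
  rw [Finset.sum_comm]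
  refine Finset.sum_congr rfl fun l hl => ?_
  rw [pow_succ, mul_assoc, hB]
  have : ((l+1 : ℕ):ℝ)/((N+1 : ℕ):ℝ) = ((l:ℝ)/N) * ((N:ℝ)/(N+1)) + 1/((N:ℝ)+1) := by
    push_cast
    field_simp
  rw [this, add_pow, Finset.sum_mul]
  refine Finset.sum_congr rfl fun i hi => ?_
  rw [mul_pow]; ring

lemma bern_tendsto' (p : ℝ[X]) (M : ℝ[X] →ₗ[ℝ] ℝ) :
    Tendsto (fun n : ℕ => ∑ k ∈ Finset.range (n+1),
      p.eval ((k:ℝ)/n) * M (bernsteinPolynomial ℝ n k)) atTop (nhds (M p)) := by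
  induction p using Polynomial.induction_on' with
  | add p q hp hq =>
    simp only [eval_add, add_mul, Finset.sum_add_distrib, map_add]
    exact hp.add hq
  | monomial k a =>
    have := (bern_tendsto k M).const_mul a
    have e : M (monomial k a) = a * M (X ^ k) := by
      rw [← C_mul_X_pow_eq_monomial, ← smul_eq_C_mul, map_smul, smul_eq_mul]
    rw [e]
    refine this.congr fun n => ?_
    rw [Finset.mul_sum]
    refine Finset.sum_congr rfl fun i hi => ?_
    rw [eval_monomial]; ring

lemma L_nonneg (L : ℝ[X] →ₗ[ℝ] ℝ) (hpos : ∀ p, 0 ≤ L (p * p)) {D : ℝ} (hD : 0 < D)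
    (hb : ∀ n, |L (X ^ n)| ≤ D ^ n) (p : ℝ[X]) (hp : ∀ x ∈ Set.Icc (-D) D, 0 ≤ p.eval x) :
    0 ≤ L p := by
  set ψ : ℝ[X] := C (1/(2*D)) * (X + C D) with hψ
  set M : ℝ[X] →ₗ[ℝ] ℝ := L ∘ₗ (aeval ψ).toLinearMap with hM
  have hMa : ∀ q, M q = L (q.comp ψ) := fun q => by
    simp [hM, Polynomial.comp, aeval_def]
  set q : ℝ[X] := p.comp (C (2*D) * X - C D) with hq
  have hLp : L p = M q := by
    rw [hMa, hq, comp_assoc]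
    congr 1
    have : (C (2*D) * X - C D).comp ψ = X := by
      simp only [sub_comp, mul_comp, C_comp, X_comp, hψ]
      rw [← mul_assoc, ← C_mul, mul_one_div_cancel (by positivity)]
      simp
    rw [this, comp_X]
  have hMb : ∀ n k, 0 ≤ M (bernsteinPolynomial ℝ n k) := by
    intro n k
    rw [hMa, bernsteinPolynomial]
    have h1 : (1 - X : ℝ[X]).comp ψ = C (1/(2*D)) * (C D - X) := by
      simp only [sub_comp, one_comp, X_comp, hψ]
      have : (1 : ℝ[X]) = C (1/(2*D)) * C (2 * D) := by
        rw [← C_mul, one_div_mul_cancel (by positivity)]; simp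
      nth_rewrite 1 [this]
      rw [C_mul, show (C (2:ℝ) : ℝ[X]) = 2 from rfl]; ring
    have h2 : ((n.choose k : ℝ[X]) * X ^ k * (1 - X) ^ (n - k)).comp ψ =
        ((n.choose k : ℝ) * (1/(2*D)) ^ k * (1/(2*D)) ^ (n-k)) •
          ((C D - X) ^ (n-k) * (C D + X) ^ k) := by
      rw [mul_comp, mul_comp, pow_comp, pow_comp, h1, X_comp, natCast_comp, smul_eq_C_mul, hψ]
      simp only [C_mul, C_pow, map_natCast]
      rw [mul_pow, mul_pow]
      ring
    rw [h2, map_smul, smul_eq_mul]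
    exact mul_nonneg (by positivity) (L_cone L hpos hD hb _ _)
  rw [hLp]
  refine ge_of_tendsto (bern_tendsto' q M) ?_
  filter_upwards [eventually_ge_atTop 1] with n hn
  refine Finset.sum_nonneg fun k hk => mul_nonneg ?_ (hMb n k)
  rw [hq, eval_comp]
  apply hp
  have hk' : (k:ℝ) ≤ n := by
    have : k ≤ n := by simp at hk; omega
    exact_mod_cast this
  have hn' : (0:ℝ) < n := by exact_mod_cast hn
  have h0 : 0 ≤ (k:ℝ)/n := by positivity
  have h1 : (k:ℝ)/n ≤ 1 := by rwa [div_le_one hn']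
  simp only [eval_sub, eval_mul, eval_C, eval_X, Set.mem_Icc]
  constructor <;> nlinarith

open scoped CompactlySupported in
lemma moment_problem (L : ℝ[X] →ₗ[ℝ] ℝ) (h1 : L 1 = 1) (hpos : ∀ p, 0 ≤ L (p * p)) {D : ℝ}
    (hD : 0 < D) (hb : ∀ n, |L (X ^ n)| ≤ D ^ n) :
    ∃ ν : Measure ℝ, IsProbabilityMeasure ν ∧ ν (Set.Icc (-D) D)ᶜ = 0 ∧
      ∀ p : ℝ[X], ∫ x, p.eval x ∂ν = L p := by
  let I := Set.Icc (-D) D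
  let E := ℝ[X] × C_c(I, ℝ)
  let s : PointedCone ℝ E :=
    { carrier := {z | ∀ x : I, 0 ≤ z.1.eval (x:ℝ) + z.2 x}
      add_mem' := by
        intro a b ha hb x
        have := ha x
        have := hb x
        change 0 ≤ (a.1 + b.1).eval (x:ℝ) + (a.2 x + b.2 x)
        rw [eval_add]
        linarith
      zero_mem' := by intro x; simp
      smul_mem' := by
        intro c a ha x
        have := mul_nonneg c.2 (ha x)
        change 0 ≤ ((c:ℝ) • a.1).eval (x:ℝ) + (c:ℝ) * a.2 x
        rw [eval_smul, smul_eq_mul]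
        linarith }
  let f : E →ₗ.[ℝ] ℝ := ⟨LinearMap.ker (LinearMap.snd ℝ ℝ[X] C_c(I, ℝ)),
    (L ∘ₗ LinearMap.fst ℝ ℝ[X] C_c(I, ℝ)) ∘ₗ Submodule.subtype _⟩
  obtain ⟨G, hG1, hG2⟩ := riesz_extension s f (by
      rintro ⟨⟨p, g⟩, hx⟩ hs
      have hg : g = 0 := hx
      subst hg
      change 0 ≤ L p
      refine L_nonneg L hpos hD hb p fun x hx => ?_
      have := hs ⟨x, hx⟩
      simpa using this) (by
      rintro ⟨p, g⟩
      obtain ⟨K, hK⟩ := (isCompact_range (f := fun x : I => p.eval (x:ℝ) + g x) (by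
        have := g.continuous
        have := p.continuous
        fun_prop)).bddBelow
      refine ⟨⟨(C (-K), 0), rfl⟩, fun x => ?_⟩
      have := hK ⟨x, rfl⟩
      simp only at this
      change 0 ≤ (C (-K) + p).eval (x:ℝ) + ((0:ℝ) + g x)
      rw [eval_add, eval_C]
      linarith)
  let Λ : C_c(I, ℝ) →ₚ[ℝ] ℝ := PositiveLinearMap.mk₀ (G ∘ₗ LinearMap.inr ℝ ℝ[X] C_c(I, ℝ)) (by
    intro g hg
    refine hG2 _ fun x => ?_
    have := hg x
    change 0 ≤ (0 : ℝ[X]).eval (x:ℝ) + g x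
    simpa using this)
  let r : ℝ[X] → C_c(I, ℝ) := fun p =>
    CompactlySupportedContinuousMap.continuousMapEquiv ⟨fun x : I => p.eval (x:ℝ), by
      have := p.continuous; fun_prop⟩
  have hr : ∀ p (x : I), r p x = p.eval (x:ℝ) := fun p x => rfl
  have hΛ : ∀ p, Λ (r p) = L p := by
    intro p
    have e1 : G (p, 0) = L p := hG1 ⟨(p, 0), rfl⟩
    have a1 : 0 ≤ G (-p, r p) := hG2 _ fun x => by simp [hr]
    have a2 : 0 ≤ G (p, - r p) := hG2 _ fun x => by simp [hr]
    have b1 : ((-p, r p) : E) = (0, r p) - (p, 0) := by simp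
    have b2 : ((p, - r p) : E) = (p, 0) - (0, r p) := by simp
    have e2 : Λ (r p) = G (0, r p) := rfl
    rw [b1, map_sub] at a1
    rw [b2, map_sub] at a2
    linarith
  have hint : ∀ p : ℝ[X], ∫ x : I, p.eval (x:ℝ) ∂(RealRMK.rieszMeasure Λ) = L p := by
    intro p
    rw [← hΛ, ← RealRMK.integral_rieszMeasure]
    rfl
  have hmeas : MeasurableEmbedding (Subtype.val : I → ℝ) :=
    MeasurableEmbedding.subtype_coe measurableSet_Icc
  have hprob : IsProbabilityMeasure (RealRMK.rieszMeasure Λ) := by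
    have := hint 1
    simp only [eval_one, integral_const, smul_eq_mul, mul_one, h1] at this
    constructor
    rw [measureReal_def] at this
    rw [← ENNReal.toReal_eq_one_iff]; exact this
  refine ⟨(RealRMK.rieszMeasure Λ).map Subtype.val,
    Measure.isProbabilityMeasure_map hmeas.measurable.aemeasurable, ?_, ?_⟩
  · rw [hmeas.map_apply]
    have : (Subtype.val : I → ℝ) ⁻¹' (Set.Icc (-D) D)ᶜ = ∅ := by
      ext x; simp [I]
    rw [this, measure_empty]
  · intro p
    rw [hmeas.integral_map]
    exact hint p

end CSK

namespace CSK
open Polynomial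
open Finset.HasAntidiagonal (antidiagonal)

lemma _root_.HasSum.congr_fun' {f g : ℕ → ℝ} {a : ℝ} (h : HasSum f a) (e : ∀ k, g k = f k) :
    HasSum g a := by
  have : g = f := funext e
  rw [this]; exact h

/-- `v` is the sequence of Taylor coefficients of `V` at `0`. -/
def HasCoef (V : ℝ → ℝ) (v : ℕ → ℝ) : Prop :=
  ∀ᶠ m in nhds (0:ℝ), HasSum (fun k => v k * m ^ k) (V m)

lemma hasCoef_iff {V : ℝ → ℝ} {v : ℕ → ℝ} :
    HasCoef V v ↔ HasFPowerSeriesAt V (FormalMultilinearSeries.ofScalars ℝ v) 0 := by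
  rw [hasFPowerSeriesAt_iff, HasCoef]
  simp only [zero_add, FormalMultilinearSeries.coeff_ofScalars, smul_eq_mul, mul_comm]

lemma HasCoef.exists {V : ℝ → ℝ} (h : AnalyticAt ℝ V 0) : ∃ v, HasCoef V v := by
  obtain ⟨p, hp⟩ := h
  rw [hasFPowerSeriesAt_iff] at hp
  refine ⟨p.coeff, ?_⟩
  filter_upwards [hp] with m hm
  simpa [mul_comm] using hm

lemma HasCoef.analyticAt {V : ℝ → ℝ} {v : ℕ → ℝ} (h : HasCoef V v) : AnalyticAt ℝ V 0 :=
  ⟨_, hasCoef_iff.1 h⟩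

lemma HasCoef.unique {V : ℝ → ℝ} {v w : ℕ → ℝ} (h : HasCoef V v) (h' : HasCoef V w) : v = w := by
  have := (hasCoef_iff.1 h).eq_formalMultilinearSeries (hasCoef_iff.1 h')
  funext k
  have h2 := congrArg (fun p => FormalMultilinearSeries.coeff p k) this
  simpa [FormalMultilinearSeries.coeff_ofScalars] using h2

lemma HasCoef.zero {V : ℝ → ℝ} {v : ℕ → ℝ} (h : HasCoef V v) : V 0 = v 0 := by
  have h1 := h.self_of_nhds
  have h2 : HasSum (fun k => v k * (0:ℝ) ^ k) (v 0) := by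
    have := hasSum_single (f := fun k => v k * (0:ℝ) ^ k) 0 (fun k hk => by simp [hk])
    simpa using this
  exact h1.unique h2

lemma HasCoef.bound {V : ℝ → ℝ} {v : ℕ → ℝ} (h : HasCoef V v) :
    ∃ A r : ℝ, 0 ≤ A ∧ 1 ≤ r ∧ ∀ k, |v k| ≤ A * r ^ k := by
  obtain ⟨C, r, hC, hr, hb⟩ := FormalMultilinearSeries.le_mul_pow_of_radius_pos _
    (hasCoef_iff.1 h).radius_pos
  refine ⟨C, max 1 r, hC.le, le_max_left _ _, fun k => ?_⟩
  have := hb k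
  rw [FormalMultilinearSeries.norm_apply_eq_norm_coef,
    FormalMultilinearSeries.coeff_ofScalars, Real.norm_eq_abs] at this
  refine this.trans ?_
  gcongr
  exact le_max_right _ _

lemma HasCoef.scale {V : ℝ → ℝ} {v : ℕ → ℝ} (h : HasCoef V v) (c : ℝ) :
    HasCoef (fun m => V (c * m)) (fun k => c ^ k * v k) := by
  have ht : Tendsto (fun m : ℝ => c * m) (nhds 0) (nhds 0) := by
    have : Continuous (fun m : ℝ => c * m) := by fun_prop
    simpa using this.tendsto 0
  filter_upwards [ht.eventually h] with m hm
  convert hm using 2 with k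
  rw [mul_pow]; ring

lemma HasCoef.add_sub_one {V W : ℝ → ℝ} {v w : ℕ → ℝ} (h : HasCoef V v) (h' : HasCoef W w) :
    HasCoef (fun m => V m + W m - 1) (fun k => v k + w k - if k = 0 then 1 else 0) := by
  filter_upwards [h, h'] with m h1 h2
  have h3 : HasSum (fun k => (if k = 0 then (1:ℝ) else 0) * m ^ k) 1 := by
    have := hasSum_single (f := fun k => (if k = 0 then (1:ℝ) else 0) * m ^ k) 0
      (fun k hk => by simp [hk])
    simpa using this
  refine ((h1.add h2).sub h3).congr_fun' (fun k => ?_)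
  ring

lemma HasCoef.one : HasCoef (fun _ => 1) (fun k => if k = 0 then 1 else 0) :=
  Eventually.of_forall fun m => by
    have := hasSum_single (f := fun k => (if k = 0 then (1:ℝ) else 0) * m ^ k) 0
      (fun k hk => by simp [hk])
    simpa using this

lemma fp_bound {v : ℕ → ℝ} (h : v 0 ≠ 0) {A r : ℝ} (hA : 0 ≤ A) (hr : 1 ≤ r)
    (hv : ∀ k, |v k| ≤ A * r ^ k) {R : ℝ} (hR : 0 ≤ R) :
    ∃ D : ℝ, 1 ≤ D ∧ ∀ k x, |x| ≤ R → |(fp v k).eval x| ≤ D ^ k := by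
  have h0 : 0 < |v 0| := abs_pos.2 h
  set E := (R + 3 * (A * r + 1)) / |v 0| with hE
  have hE0 : 0 ≤ E := by positivity
  obtain ⟨s, hs⟩ : ∃ s, s = r + E := ⟨_, rfl⟩
  have hrs : r ≤ s := by linarith
  have hs1 : 1 ≤ s := hr.trans hrs
  refine ⟨2 * s, by linarith, fun k x hx => ?_⟩
  induction k using Nat.strong_induction_on with
  | _ k ih =>
  rcases k with _ | k
  · simp [fp_zero]
  have e := congrArg (Polynomial.eval x) (fp_rec v h k)
  simp only [eval_mul, eval_X, eval_sub, eval_add, eval_C, eval_finsetSum] at e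
  have e2 : v 0 * (fp v (k+1)).eval x = x * (fp v k).eval x -
      ∑ p ∈ antidiagonal k, gg v (p.1 + 1) * (fp v p.2).eval x + v (k+1) := by linarith
  have b1 : |x * (fp v k).eval x| ≤ R * (2 * s) ^ k := by
    rw [abs_mul]
    gcongr
    exact ih k (by omega)
  have b2 : |∑ p ∈ antidiagonal k, gg v (p.1 + 1) * (fp v p.2).eval x| ≤
      (A * r + 1) * (2 * (2 * s) ^ k) := by
    calc _ ≤ ∑ p ∈ antidiagonal k, |gg v (p.1 + 1) * (fp v p.2).eval x| :=
          Finset.abs_sum_le_sum_abs _ _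
      _ ≤ ∑ p ∈ antidiagonal k, (A * r + 1) * (s ^ p.1 * (2 * s) ^ p.2) := by
          refine Finset.sum_le_sum fun p hp => ?_
          rw [Finset.HasAntidiagonal.mem_antidiagonal] at hp
          rw [abs_mul, ← mul_assoc]
          gcongr
          · refine (gg_bound hr hv _).trans ?_
            gcongr
          · exact ih _ (by omega)
      _ ≤ _ := by
          rw [← Finset.mul_sum]
          gcongr
          exact geo_bound s hs1 k
  have b3 : |v (k+1)| ≤ (A * r + 1) * (2 * s) ^ k := by
    refine (hv _).trans ?_
    have h1 : r ^ k ≤ (2 * s) ^ k := by gcongr; linarith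
    have h2 : 0 ≤ (2 * s) ^ k := by positivity
    rw [pow_succ]
    nlinarith [mul_le_mul_of_nonneg_left h1 (by positivity : 0 ≤ A * r)]
  have b4 : |v 0| * |(fp v (k+1)).eval x| ≤ |v 0| * (2 * s) ^ (k+1) := by
    rw [← abs_mul, e2]
    refine (abs_add_le _ _).trans ?_
    have := abs_sub (x * (fp v k).eval x)
      (∑ p ∈ antidiagonal k, gg v (p.1 + 1) * (fp v p.2).eval x)
    have h3 : |v 0| * E = R + 3 * (A * r + 1) := by
      rw [hE]; field_simp
    have h4 : |v 0| * E ≤ |v 0| * (2 * s) := by gcongr; linarith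
    have h5 : 0 ≤ (2 * s) ^ k := by positivity
    calc _ ≤ (R + 3 * (A * r + 1)) * (2 * s) ^ k := by linarith
      _ ≤ (|v 0| * (2 * s)) * (2 * s) ^ k := by
          rw [← h3]; gcongr
      _ = _ := by ring
  exact le_of_mul_le_mul_left b4 h0

lemma kernel_sum {V : ℝ → ℝ} {v : ℕ → ℝ} (hV : HasCoef V v) (h : 0 < v 0) {R : ℝ} (hR : 0 ≤ R) :
    ∃ D : ℝ, 1 ≤ D ∧ (∀ k x, |x| ≤ R → |(fp v k).eval x| ≤ D ^ k) ∧
    ∀ᶠ m in nhds (0:ℝ), D * |m| ≤ 1 / 2 ∧ 0 < V m ∧ ∀ x, |x| ≤ R → 0 < V m + m * (m - x) ∧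
      HasSum (fun k => (fp v k).eval x * m ^ k) (cskKernel V m x) := by
  obtain ⟨A, r, hA, hr, hv⟩ := hV.bound
  obtain ⟨D, hD, hfp⟩ := fp_bound h.ne' hA hr hv hR
  refine ⟨D, hD, hfp, ?_⟩
  have hVc : ContinuousAt V 0 := hV.analyticAt.continuousAt
  have e1 : ∀ᶠ m in nhds (0:ℝ), 0 < V m - |m| * (|m| + R) := by
    have : ContinuousAt (fun m => V m - |m| * (|m| + R)) 0 := by fun_prop
    refine this.eventually (lt_mem_nhds ?_)
    simpa [hV.zero] using h
  have e2 : ∀ᶠ m in nhds (0:ℝ), D * |m| < 1/2 := by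
    have : ContinuousAt (fun m => D * |m|) 0 := by fun_prop
    refine this.eventually (gt_mem_nhds ?_)
    simp
  have e3 : ∀ᶠ m in nhds (0:ℝ), r * |m| < 1/2 := by
    have : ContinuousAt (fun m => r * |m|) 0 := by fun_prop
    refine this.eventually (gt_mem_nhds ?_)
    simp
  filter_upwards [hV, e1, e2, e3] with m hm h1 h2 h3
  refine ⟨h2.le, ?_, fun x hx => ?_⟩
  · have : 0 ≤ |m| * (|m| + R) := by positivity
    linarith
  have hpos : 0 < V m + m * (m - x) := by
    have h4 : |m * (m - x)| ≤ |m| * (|m| + R) := by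
      rw [abs_mul]; gcongr
      exact (abs_sub _ _).trans (by gcongr)
    have := neg_le_of_abs_le h4
    linarith
  refine ⟨hpos, ?_⟩
  have hg2 : HasSum (fun k => (if k = 2 then (1:ℝ) else 0) * m ^ k) (m ^ 2) := by
    have := hasSum_single (f := fun k => (if k = 2 then (1:ℝ) else 0) * m ^ k) 2
      (fun k hk => by simp [hk])
    simpa using this
  have hg : HasSum (fun k => gg v k * m ^ k) (V m + m ^ 2) := by
    convert hm.add hg2 using 2 with k
    rw [gg]; ring
  have hgn : Summable (fun k => ‖gg v k * m ^ k‖) := hg.summable.norm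
  have hfn : Summable (fun k => ‖(fp v k).eval x * m ^ k‖) := by
    refine Summable.of_nonneg_of_le (fun _ => norm_nonneg _) (fun k => ?_)
      (summable_geometric_of_lt_one (r := D * |m|) (by positivity) (by linarith))
    rw [Real.norm_eq_abs, abs_mul, abs_pow, mul_pow]
    gcongr
    exact hfp k x hx
  obtain ⟨F, hF⟩ := hfn.of_norm
  have hprod := tsum_mul_tsum_eq_tsum_sum_antidiagonal_of_summable_norm hgn hfn
  have hsum := (summable_norm_sum_mul_antidiagonal_of_summable_norm hgn hfn).of_norm
  rw [hg.tsum_eq, hF.tsum_eq] at hprod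
  have hterm : ∀ n, ∑ p ∈ antidiagonal n, gg v p.1 * m ^ p.1 * ((fp v p.2).eval x * m ^ p.2) =
      (∑ p ∈ antidiagonal n, gg v p.1 * (fp v p.2).eval x) * m ^ n := by
    intro n
    rw [Finset.sum_mul]
    refine Finset.sum_congr rfl fun p hp => ?_
    rw [Finset.HasAntidiagonal.mem_antidiagonal] at hp
    rw [← hp, pow_add]; ring
  have hs0 : HasSum (fun n => ∑ p ∈ antidiagonal n, gg v p.1 * m ^ p.1 * ((fp v p.2).eval x * m ^ p.2))
      ((V m + m ^ 2) * F) := by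
    rw [hprod]; exact hsum.hasSum
  rw [← hasSum_nat_add_iff' 1] at hs0
  have hm1 := (hasSum_nat_add_iff' 1).2 hm
  have hF1 := (hF.mul_left (m * x)).add hm1
  have heq := hs0.unique (by
    refine hF1.congr_fun' (fun n => ?_)
    rw [hterm, Finset.Nat.sum_antidiagonal_succ]
    have e := congrArg (Polynomial.eval x) (fp_rec v h.ne' n)
    simp only [eval_mul, eval_X, eval_sub, eval_add, eval_C, eval_finsetSum] at e
    have : gg v 0 = v 0 := by simp [gg]
    rw [this]
    simp only
    have e2 : v 0 * (fp v (n+1)).eval x +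
      ∑ p ∈ antidiagonal n, gg v (p.1 + 1) * (fp v p.2).eval x = x * (fp v n).eval x + v (n+1) := by
      linarith
    rw [e2]; ring)
  have h00 : ∑ p ∈ antidiagonal 0, gg v p.1 * m ^ p.1 * ((fp v p.2).eval x * m ^ p.2) = v 0 := by
    simp [gg, fp_zero]
  simp only [Finset.sum_range_one, h00, pow_zero, mul_one] at heq
  have : cskKernel V m x = F := by
    rw [cskKernel, div_eq_iff hpos.ne']
    linarith
  rw [this]
  exact hF

section
variable (ν : Measure ℝ) [IsProbabilityMeasure ν]

lemma integrable_poly {R : ℝ} (hν : ν (Set.Icc (-R) R)ᶜ = 0) (p : ℝ[X]) :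
    Integrable (fun x => p.eval x) ν := by
  obtain ⟨K, hK⟩ := (isCompact_Icc (a := -R) (b := R)).exists_bound_of_continuousOn
    p.continuous.continuousOn
  refine Integrable.of_bound p.continuous.aestronglyMeasurable K ?_
  have : ∀ᵐ x ∂ν, x ∈ Set.Icc (-R) R := hν
  filter_upwards [this] with x hx using hK x hx

/-- integration of polynomials -/
def intL {R : ℝ} (hν : ν (Set.Icc (-R) R)ᶜ = 0) : ℝ[X] →ₗ[ℝ] ℝ where
  toFun p := ∫ x, p.eval x ∂ν
  map_add' p q := by
    simp only [eval_add]
    exact integral_add (integrable_poly ν hν p) (integrable_poly ν hν q)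
  map_smul' c p := by
    simp only [eval_smul, RingHom.id_apply]
    exact integral_smul c _

lemma kernel_int {V : ℝ → ℝ} {v : ℕ → ℝ} (hV : HasCoef V v) (h : 0 < v 0) {R : ℝ}
    (hν : ν (Set.Icc (-R) R)ᶜ = 0) (hR : 0 ≤ R) :
    ∀ᶠ m in nhds (0:ℝ), 0 < V m ∧ (∀ᵐ x ∂ν, 0 < V m + m * (m - x)) ∧
      Integrable (fun x => cskKernel V m x) ν ∧
      HasSum (fun k => (∫ x, (fp v k).eval x ∂ν) * m ^ k) (∫ x, cskKernel V m x ∂ν) := by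
  obtain ⟨D, hD, hfp, hev⟩ := kernel_sum hV h hR
  have hae : ∀ᵐ x ∂ν, |x| ≤ R := by
    have : ∀ᵐ x ∂ν, x ∈ Set.Icc (-R) R := hν
    filter_upwards [this] with x hx using abs_le.2 hx
  filter_upwards [hev] with m ⟨h1, h2, h3⟩
  have hint : ∀ k, Integrable (fun x => (fp v k).eval x * m ^ k) ν := fun k =>
    (integrable_poly ν hν (fp v k)).mul_const _
  have hbd : ∀ k, ∀ᵐ x ∂ν, ‖(fp v k).eval x * m ^ k‖ ≤ (D * |m|) ^ k := fun k => by
    filter_upwards [hae] with x hx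
    rw [Real.norm_eq_abs, abs_mul, abs_pow, mul_pow]
    gcongr
    exact hfp k x hx
  have hgeo : Summable fun k => (D * |m|) ^ k :=
    summable_geometric_of_lt_one (r := D * |m|) (by positivity) (by linarith)
  have hK : ∀ᵐ x ∂ν, HasSum (fun k => (fp v k).eval x * m ^ k) (cskKernel V m x) := by
    filter_upwards [hae] with x hx using (h3 x hx).2
  refine ⟨h2, ?_, ?_, ?_⟩
  · filter_upwards [hae] with x hx using (h3 x hx).1
  · refine Integrable.of_bound ?_ (∑' k, (D * |m|) ^ k) ?_
    · have : Measurable (fun x => cskKernel V m x) := by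
        unfold cskKernel; fun_prop
      exact this.aestronglyMeasurable
    · filter_upwards [hK, ae_all_iff.2 hbd] with x hx hb
      rw [← hx.tsum_eq]
      exact tsum_of_norm_bounded hgeo.hasSum hb
  · have := hasSum_integral_of_dominated_convergence (μ := ν)
      (F := fun k x => (fp v k).eval x * m ^ k) (f := fun x => cskKernel V m x)
      (fun k _ => (D * |m|) ^ k) (fun k => (hint k).aestronglyMeasurable) hbd
      (Eventually.of_forall fun _ => hgeo) (by simp) hK
    simpa only [integral_mul_const] using this
end

lemma fp_one {v : ℕ → ℝ} (h : v 0 ≠ 0) : C (v 0) * fp v 1 = X := by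
  have := fp_rec v h 0
  simp [fp_zero, gg] at this
  exact this.symm

lemma fp_two {v : ℕ → ℝ} (h : v 0 ≠ 0) :
    C (v 0) * fp v 2 = X * fp v 1 - C (v 1) * fp v 1 - 1 := by
  have := fp_rec v h 1
  simp [fp_zero, gg, Finset.Nat.antidiagonal_succ] at this
  rw [this]; ring

lemma FV_of_memV {V : ℝ → ℝ} {v : ℕ → ℝ} (hV : HasCoef V v) (h : memV V) : v 0 = 1 ∧ FV v := by
  obtain ⟨ν, ⟨hP, ⟨R', hR'⟩, -, hmean⟩, hvar, -, hV0, ε, hε, hk⟩ := h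
  obtain ⟨R, hR0, hR⟩ : ∃ R : ℝ, 0 ≤ R ∧ ν (Set.Icc (-R) R)ᶜ = 0 := by
    refine ⟨|R'|, abs_nonneg _, measure_mono_null ?_ hR'⟩
    apply Set.compl_subset_compl.2
    exact Set.Icc_subset_Icc (neg_le_neg (le_abs_self _)) (le_abs_self _)
  have hv0 : 0 < v 0 := by rw [← hV.zero]; exact hV0
  have hco : HasCoef (fun _ => 1) (fun k => ∫ x, (fp v k).eval x ∂ν) := by
    have he : ∀ᶠ m in nhds (0:ℝ), |m| < ε := by
      have : ContinuousAt (fun m : ℝ => |m|) 0 := by fun_prop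
      exact this.eventually (gt_mem_nhds (by simpa using hε))
    filter_upwards [kernel_int ν hV hv0 hR hR0, he] with m ⟨_, _, _, h4⟩ h5
    rw [(hk m h5).2.1] at h4
    exact h4
  have hL := congrFun (hco.unique HasCoef.one)
  set L := intL ν hR with hLd
  have hLf : ∀ p, L p = ∫ x, p.eval x ∂ν := fun p => rfl
  have hL' : ∀ k, L (fp v k) = if k = 0 then 1 else 0 := hL
  have hLC : ∀ (a : ℝ) p, L (C a * p) = a * L p := fun a p => by
    rw [← smul_eq_C_mul, map_smul, smul_eq_mul]
  have hv1 : v 0 = 1 := by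
    have e1 := congrArg L (congrArg (fun p => C (v 0) * p) (fp_two hv0.ne'))
    have e2 : C (v 0) * (X * fp v 1 - C (v 1) * fp v 1 - 1) =
        X ^ 2 - C (v 1) * X - C (v 0) * 1 := by
      calc _ = X * (C (v 0) * fp v 1) - C (v 1) * (C (v 0) * fp v 1) - C (v 0) * 1 := by ring
        _ = _ := by rw [fp_one hv0.ne']; ring
    have e3 : L (X ^ 2) = 1 := by rw [hLf]; simpa using hvar
    have e4 : L X = 0 := by rw [hLf]; simpa using hmean
    have e5 : L 1 = 1 := by simpa [fp_zero] using hL' 0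
    simp only [e2] at e1
    rw [map_sub, map_sub, hLC, hLC, hLC, hLC, hL', e3, e4, e5] at e1
    simp at e1
    linarith
  refine ⟨hv1, FV_of_L hv1 L hL' fun p => ?_⟩
  rw [hLf]
  refine integral_nonneg fun x => ?_
  simp only [eval_mul]
  exact mul_self_nonneg _

lemma memV_of_FV {V : ℝ → ℝ} {v : ℕ → ℝ} (hV : HasCoef V v) (hv0 : v 0 = 1) (hF : FV v) :
    memV V := by
  obtain ⟨A, r, hA, hr, hv⟩ := hV.bound
  obtain ⟨L, hL, hpos, D, hD, hb⟩ := L_of_FV hv0 hA hr hv hF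
  have hL1 : L 1 = 1 := by simpa [fp_zero] using hL 0
  obtain ⟨ν, hP, hsupp, hint⟩ := moment_problem L hL1 hpos hD hb
  have hne : v 0 ≠ 0 := by rw [hv0]; exact one_ne_zero
  have hf1 : fp v 1 = X := by
    have := fp_one hne
    rwa [hv0, C_1, one_mul] at this
  have hf2 : fp v 2 = X ^ 2 - C (v 1) * X - 1 := by
    have := fp_two hne
    rw [hv0, C_1, one_mul, hf1] at this
    rw [this]; ring
  have hLX : L X = 0 := by rw [← hf1, hL]; simp
  have hLX2 : L (X ^ 2) = 1 := by
    have := hL 2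
    rw [hf2, map_sub, map_sub, ← smul_eq_C_mul, map_smul, hLX, hL1] at this
    simp at this
    linarith
  have hmean : ∫ x, x ∂ν = 0 := by rw [← hLX, ← hint]; simp
  have hvar : ∫ x, x ^ 2 ∂ν = 1 := by rw [← hLX2, ← hint]; simp
  refine ⟨ν, ⟨hP, ⟨D, hsupp⟩, ?_, hmean⟩, hvar, hV.analyticAt, ?_, ?_⟩
  · rintro a rfl
    rw [integral_dirac] at hmean hvar
    rw [hmean] at hvar
    norm_num at hvar
  · rw [hV.zero, hv0]; exact one_pos
  · obtain ⟨ε, hε, hball⟩ := Metric.eventually_nhds_iff.1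
      (kernel_int ν hV (by rw [hv0]; exact one_pos) hsupp hD.le)
    refine ⟨ε, hε, fun m hm => ?_⟩
    obtain ⟨h1, h2, h3, h4⟩ := hball (y := m) (by simpa [Real.dist_eq] using hm)
    have hI : ∫ x, cskKernel V m x ∂ν = 1 := by
      refine h4.unique ?_
      have := hasSum_single (f := fun k => (∫ x, (fp v k).eval x ∂ν) * m ^ k) 0
        (fun k hk => by rw [hint, hL]; simp [hk])
      simpa [hint, hL] using this
    refine ⟨?_, hI, ?_⟩
    · filter_upwards [h2] with x hx
      exact div_nonneg h1.le hx.le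
    · rcases eq_or_ne m 0 with rfl | hm0
      · have : ∀ x, x * cskKernel V 0 x = x := fun x => by
          rw [cskKernel]; simp [h1.ne']
        simp only [this]
        exact hmean
      · have hx : ∀ᵐ x ∂ν, x * cskKernel V m x = m⁻¹ * ((V m + m ^ 2) * cskKernel V m x - V m) := by
          filter_upwards [h2] with x hx
          have e : cskKernel V m x * (V m + m * (m - x)) = V m := by
            rw [cskKernel, div_mul_cancel₀ _ hx.ne']
          field_simp
          linear_combination -e
        rw [integral_congr_ae hx, integral_const_mul,
          integral_sub (h3.const_mul _) (integrable_const _), integral_const_mul, hI]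
        simp
        field_simp

theorem main_aux (V₁ V₂ : ℝ → ℝ) (h₁ : memVinf V₁) (h₂ : memVinf V₂) :
    memVinf (fun m => V₁ m + V₂ m - 1) := by
  have key : ∀ V, memVinf V → ∃ v, HasCoef V v ∧ v 0 = 1 ∧ FS v := by
    intro V hV
    have h1 := hV 1
    simp only [one_mul] at h1
    obtain ⟨v, hv⟩ := HasCoef.exists (V := V) (by
      obtain ⟨ν, _, _, h, _⟩ := h1
      exact h)
    exact ⟨v, hv, (FV_of_memV hv h1).1, FS_of_FV fun c => (FV_of_memV (hv.scale c) (hV c)).2⟩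
  obtain ⟨v, hv, hv0, hvS⟩ := key V₁ h₁
  obtain ⟨w, hw, hw0, hwS⟩ := key V₂ h₂
  intro c
  exact memV_of_FV ((hv.add_sub_one hw).scale c) (by simp [hv0, hw0])
    (FV_of_FS (FS_add hvS hwS) c)

end CSK

/-- If `V₁, V₂ ∈ 𝒱∞` then `m ↦ V₁(m) + V₂(m) − 1 ∈ 𝒱∞`. -/
theorem memVinf_add (V₁ V₂ : ℝ → ℝ) (h₁ : memVinf V₁) (h₂ : memVinf V₂) :
    memVinf (fun m => V₁ m + V₂ m - 1) := CSK.main_aux V₁ V₂ h₁ h₂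
end
end

section
/- If the function V₁(m) belongs to the class 𝒱∞ and c ≥ 1 is a real number, then the function m ↦ c·V₁(m) − c + 1 also belongs to 𝒱∞. -/
open MeasureTheory Filter

noncomputable section

open Polynomial in
/-- A real polynomial that is nonnegative on the line is a finite sum of squares. -/
lemma poly_nonneg_sos (n : ℕ) : ∀ p : ℝ[X], p.natDegree ≤ n → (∀ x, 0 ≤ p.eval x) →
    ∃ l : List ℝ[X], p = (l.map (fun q => q ^ 2)).sum := by
  induction n using Nat.strong_induction_on with
  | _ n ih =>
  intro p hp hnn
  by_cases h0 : p.natDegree = 0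
  · obtain ⟨a, rfl⟩ := natDegree_eq_zero.1 h0
    refine ⟨[C (Real.sqrt a)], ?_⟩
    have ha : 0 ≤ a := by simpa using hnn 0
    simp [← C_pow, Real.sq_sqrt ha]
  · -- minimum
    have hdeg : 0 < p.degree := natDegree_pos_iff_degree_pos.1 (Nat.pos_of_ne_zero h0)
    have htend : Tendsto (fun x => |p.eval x|) (cocompact ℝ) atTop := by
      have := p.tendsto_norm_atTop hdeg (tendsto_norm_cocompact_atTop (E := ℝ))
      simpa [Real.norm_eq_abs] using this
    have htend' : Tendsto (fun x => p.eval x) (cocompact ℝ) atTop := by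
      refine htend.congr fun x => abs_of_nonneg (hnn x)
    obtain ⟨a, ha⟩ := p.continuous.exists_forall_le htend'
    set μ := p.eval a with hμ
    have hroot : IsRoot (p - C μ) a := by simp [hμ]
    obtain ⟨q, hq⟩ := dvd_iff_isRoot.2 hroot
    have hder : (derivative p).eval a = 0 := by
      have h1 : IsLocalMin (fun x => p.eval x) a := Filter.Eventually.of_forall ha
      exact h1.hasDerivAt_eq_zero (p.hasDerivAt a)
    have hq0 : q.eval a = 0 := by
      have : derivative p = derivative (p - C μ) := by simp
      rw [this, hq] at hder
      simpa [derivative_mul] using hder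
    obtain ⟨r, hr⟩ := dvd_iff_isRoot.2 (show IsRoot q a from hq0)
    have hpe : p = C μ + (X - C a) ^ 2 * r := by
      have : p = (p - C μ) + C μ := by ring
      rw [this, hq, hr]; ring
    have hr_ne : r ≠ 0 := by
      rintro rfl
      apply h0
      rw [hpe]; simp
    have hrd : r.natDegree < n := by
      have h2 : p.natDegree = 2 + r.natDegree := by
        have : p.natDegree = ((X - C a) ^ 2 * r).natDegree := by
          conv_lhs => rw [hpe]
          rw [natDegree_C_add]
        rw [this, natDegree_mul (pow_ne_zero _ (X_sub_C_ne_zero a)) hr_ne, natDegree_pow,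
          natDegree_X_sub_C]
      omega
    have hrnn : ∀ x, 0 ≤ r.eval x := by
      have key : ∀ x, x ≠ a → 0 ≤ r.eval x := by
        intro x hx
        have h1 := ha x
        have h2 : p.eval x = μ + (x - a) ^ 2 * r.eval x := by
          conv_lhs => rw [hpe]
          simp
        have h3 : 0 < (x - a) ^ 2 := by
          have := sub_ne_zero.2 hx
          positivity
        by_contra hneg
        push Not at hneg
        nlinarith [mul_neg_of_pos_of_neg h3 hneg]
      have hcl : IsClosed {x | 0 ≤ r.eval x} := isClosed_le continuous_const r.continuous
      have hd : Dense ({a}ᶜ : Set ℝ) := dense_compl_singleton a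
      intro x
      exact (hcl.closure_subset_iff.2 (fun x hx => key x hx)) (hd x)
    obtain ⟨l, hl⟩ := ih r.natDegree hrd r le_rfl hrnn
    refine ⟨C (Real.sqrt μ) :: l.map (fun q => (X - C a) * q), ?_⟩
    have hμ0 : 0 ≤ μ := hnn a
    rw [hpe]
    simp only [List.map_cons, List.sum_cons, List.map_map, ← C_pow, Real.sq_sqrt hμ0]
    congr 1
    conv_lhs => rw [hl]
    rw [← List.sum_map_mul_left]
    congr 1
    apply List.map_congr_left
    intro q _
    simp [mul_pow]

/-- Hankel positivity. -/
def HankelPos (c : ℕ → ℝ) : Prop :=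
  ∀ (N : ℕ) (x : ℕ → ℝ), 0 ≤ ∑ i ∈ Finset.range N, ∑ j ∈ Finset.range N, x i * x j * c (i + j)

open Polynomial in
/-- The moment functional. -/
def momFun (c : ℕ → ℝ) : ℝ[X] →ₗ[ℝ] ℝ :=
  Polynomial.lsum (fun n => c n • (LinearMap.id : ℝ →ₗ[ℝ] ℝ))

open Polynomial in
lemma momFun_monomial (c : ℕ → ℝ) (n : ℕ) (a : ℝ) : momFun c (monomial n a) = c n * a := by
  simp [momFun, Polynomial.lsum_apply]

open Polynomial in
lemma momFun_sq (c : ℕ → ℝ) (hc : HankelPos c) (q : ℝ[X]) : 0 ≤ momFun c (q ^ 2) := by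
  have h := hc (q.natDegree + 1) (fun i => q.coeff i)
  convert h using 1
  conv_lhs => rw [sq, q.as_sum_range]
  rw [Finset.sum_mul_sum, map_sum]
  refine Finset.sum_congr rfl fun i _ => ?_
  rw [map_sum]
  refine Finset.sum_congr rfl fun j _ => ?_
  rw [monomial_mul_monomial, momFun_monomial]; ring

open Polynomial in
lemma momFun_nonneg (c : ℕ → ℝ) (hc : HankelPos c) (p : ℝ[X]) (hp : ∀ x, 0 ≤ p.eval x) :
    0 ≤ momFun c p := by
  obtain ⟨l, rfl⟩ := poly_nonneg_sos _ p le_rfl hp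
  rw [map_list_sum]
  apply List.sum_nonneg
  intro y hy
  simp only [List.map_map, List.mem_map, Function.comp] at hy
  obtain ⟨q, _, rfl⟩ := hy
  exact momFun_sq c hc q

open Polynomial in
lemma momFun_nonneg_Icc (c : ℕ → ℝ) (hc : HankelPos c) {B R R1 : ℝ} (hR : 0 ≤ R) (hR1 : R < R1)
    (hb : ∀ n, |c n| ≤ B * R ^ n)
    (p : ℝ[X]) (hp : ∀ x, |x| ≤ R1 → 0 ≤ p.eval x) :
    0 ≤ momFun c p := by
  have hR1p : 0 < R1 := lt_of_le_of_lt hR hR1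
  set K := ∑ k ∈ Finset.range (p.natDegree + 1), |p.coeff k| * R1 ^ k with hK
  have hK0 : 0 ≤ K := Finset.sum_nonneg fun k _ => by positivity
  have key : ∀ N, p.natDegree ≤ 2 * N → 0 ≤ momFun c p + K * B * ((R / R1) ^ 2) ^ N := by
    intro N hN
    have h1 : 0 ≤ momFun c (p + monomial (2 * N) (K / R1 ^ (2 * N))) := by
      apply momFun_nonneg c hc
      intro x
      rw [eval_add, eval_monomial]
      have he : 0 ≤ x ^ (2 * N) := by rw [pow_mul]; positivity
      by_cases hx : |x| ≤ R1
      · have := hp x hx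
        positivity
      · push Not at hx
        have h2 : |p.eval x| ≤ K * (|x| / R1) ^ (2 * N) := by
          rw [eval_eq_sum_range, hK, Finset.sum_mul]
          refine (Finset.abs_sum_le_sum_abs _ _).trans (Finset.sum_le_sum fun k hk => ?_)
          rw [abs_mul, abs_pow, mul_assoc]
          refine mul_le_mul_of_nonneg_left ?_ (abs_nonneg _)
          have hk' : k ≤ 2 * N := by
            have := Finset.mem_range.1 hk
            omega
          have h3 : (|x| / R1) ^ k ≤ (|x| / R1) ^ (2 * N) :=
            pow_le_pow_right₀ ((one_le_div hR1p).2 hx.le) hk'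
          calc |x| ^ k = R1 ^ k * (|x| / R1) ^ k := by rw [← mul_pow]; congr 1; field_simp
            _ ≤ _ := by gcongr
        have h4 : K / R1 ^ (2 * N) * x ^ (2 * N) = K * (|x| / R1) ^ (2 * N) := by
          rw [div_pow, ← abs_pow, abs_of_nonneg he]; ring
        rw [h4]
        linarith [neg_abs_le (p.eval x)]
    rw [map_add, momFun_monomial] at h1
    have h5 : c (2 * N) * (K / R1 ^ (2 * N)) ≤ K * B * ((R / R1) ^ 2) ^ N := by
      have := (le_abs_self _).trans (hb (2 * N))
      calc _ ≤ (B * R ^ (2 * N)) * (K / R1 ^ (2 * N)) := by gcongr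
        _ = _ := by rw [← pow_mul, div_pow]; ring
    linarith
  have hlim : Tendsto (fun N : ℕ => momFun c p + K * B * ((R / R1) ^ 2) ^ N) atTop
      (nhds (momFun c p + K * B * 0)) := by
    refine tendsto_const_nhds.add (Tendsto.const_mul _ ?_)
    apply tendsto_pow_atTop_nhds_zero_of_lt_one (by positivity)
    have : R / R1 < 1 := (div_lt_one hR1p).2 hR1
    have h0 : 0 ≤ R / R1 := by positivity
    nlinarith
  have := ge_of_tendsto hlim (eventually_atTop.2 ⟨p.natDegree, fun N hN => key N (by omega)⟩)
  simpa using this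

open Polynomial in
/-- Solution of the moment problem for geometrically bounded Hankel-positive sequences. -/
lemma exists_measure_moments (c : ℕ → ℝ) (hc : HankelPos c) {B R : ℝ} (hR : 0 ≤ R)
    (hb : ∀ n, |c n| ≤ B * R ^ n) (hc0 : c 0 = 1) :
    ∃ ν : Measure ℝ, IsProbabilityMeasure ν ∧ ν (Set.Icc (-(R + 1)) (R + 1))ᶜ = 0 ∧
      ∀ n, ∫ x, x ^ n ∂ν = c n := by
  set R1 := R + 1 with hR1
  have hRR : R < R1 := by linarith
  let K := Set.Icc (-R1) R1
  let T : ℝ[X] →ₗ[ℝ] CompactlySupportedContinuousMap K ℝ :=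
    { toFun := fun p => CompactlySupportedContinuousMap.continuousMapEquiv
        ⟨fun x : K => p.eval (x : ℝ), p.continuous.comp continuous_subtype_val⟩
      map_add' := by intro p q; ext x; simp
      map_smul' := by intro a p; ext x; simp }
  have hT : ∀ p (x : K), T p x = p.eval (x : ℝ) := fun p x => rfl
  have hpos : ∀ p, 0 ≤ T p → 0 ≤ momFun c p := by
    intro p hp
    apply momFun_nonneg_Icc c hc hR hRR hb
    intro x hx
    have := hp (⟨x, abs_le.1 hx⟩ : K)
    simpa [hT] using this
  have hker : LinearMap.ker T ≤ LinearMap.ker (momFun c) := by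
    intro p hp
    rw [LinearMap.mem_ker] at hp ⊢
    have h1 := hpos p (by rw [hp])
    have h2 := hpos (-p) (by rw [map_neg, hp, neg_zero])
    rw [map_neg] at h2
    linarith
  let φ : LinearMap.range T →ₗ[ℝ] ℝ :=
    ((LinearMap.ker T).liftQ (momFun c) hker).comp T.quotKerEquivRange.symm.toLinearMap
  have hφ : ∀ p, φ ⟨T p, LinearMap.mem_range_self T p⟩ = momFun c p := by
    intro p
    have : T.quotKerEquivRange.symm ⟨T p, LinearMap.mem_range_self T p⟩
        = (LinearMap.ker T).mkQ p := by
      rw [LinearEquiv.symm_apply_eq]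
      ext1
      rfl
    simp only [φ, LinearMap.comp_apply, LinearEquiv.coe_coe, this]
    simp
  have inst : PosSMulMono ℝ (CompactlySupportedContinuousMap K ℝ) := by
    constructor
    intro a ha f1 f2 hf x
    exact mul_le_mul_of_nonneg_left (hf x) ha
  obtain ⟨g, hg1, hg2⟩ := riesz_extension
    (PointedCone.positive ℝ (CompactlySupportedContinuousMap K ℝ)) ⟨LinearMap.range T, φ⟩
    (by
      rintro ⟨_, ⟨p, rfl⟩⟩ hx
      change 0 ≤ φ ⟨T p, _⟩
      rw [hφ]
      exact hpos p (by simpa using hx))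
    (by
      intro y
      obtain ⟨M, hM⟩ := (isCompact_range y.continuous).bddBelow
      refine ⟨⟨T (C (-M)), LinearMap.mem_range_self T _⟩, ?_⟩
      simp only [PointedCone.mem_positive]
      intro x
      have : M ≤ y x := hM (Set.mem_range_self x)
      simp [hT]
      linarith)
  let Λ : CompactlySupportedContinuousMap K ℝ →ₚ[ℝ] ℝ :=
    PositiveLinearMap.mk₀ g (fun x hx => hg2 x (by simpa using hx))
  let μ := RealRMK.rieszMeasure Λ
  have hμ : ∀ n, ∫ x : K, (x : ℝ) ^ n ∂μ = c n := by
    intro n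
    have h1 := RealRMK.integral_rieszMeasure Λ (T (X ^ n))
    have h2 : Λ (T (X ^ n)) = c n := by
      have := hg1 ⟨T (X ^ n), LinearMap.mem_range_self T _⟩
      change g (T (X ^ n)) = φ _ at this
      rw [hφ, ← monomial_one_right_eq_X_pow, momFun_monomial] at this
      rw [← monomial_one_right_eq_X_pow]
      change g _ = _
      rw [this]; ring
    rw [h2] at h1
    rw [← h1]
    simp [hT, μ]
  have hprob : μ Set.univ = 1 := by
    have h0 := hμ 0
    simp only [pow_zero, integral_const, smul_eq_mul, mul_one, hc0] at h0
    rw [Measure.real, ENNReal.toReal_eq_one_iff] at h0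
    exact h0
  have hmp : IsProbabilityMeasure μ := ⟨hprob⟩
  refine ⟨μ.map Subtype.val, Measure.isProbabilityMeasure_map measurable_subtype_coe.aemeasurable,
    ?_, ?_⟩
  · rw [Measure.map_apply measurable_subtype_coe measurableSet_Icc.compl]
    have : (Subtype.val : K → ℝ) ⁻¹' (Set.Icc (-R1) R1)ᶜ = ∅ := by
      ext x
      simp only [Set.mem_preimage, Set.mem_compl_iff, Set.mem_empty_iff_false, iff_false, not_not]
      exact x.2
    rw [this, measure_empty]
  · intro n
    rw [integral_map measurable_subtype_coe.aemeasurable (by fun_prop)]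
    exact hμ n

open Topology

/-- Taylor coefficients at `0`. -/
def tcoef (f : ℝ → ℝ) (n : ℕ) : ℝ := iteratedDeriv n f 0 / (n.factorial : ℝ)

lemma tcoef_of_series {f : ℝ → ℝ} {p : FormalMultilinearSeries ℝ ℝ ℝ}
    (h : HasFPowerSeriesAt f p 0) (n : ℕ) : tcoef f n = p.coeff n := by
  obtain ⟨r, hr⟩ := h
  have h1 := hr.factorial_smul 1 n
  have h2 : (n.factorial : ℝ) ≠ 0 := by exact_mod_cast n.factorial_ne_zero
  rw [tcoef, iteratedDeriv_eq_iteratedFDeriv, ← h1, FormalMultilinearSeries.coeff]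
  simp only [nsmul_eq_mul]
  field_simp
  rfl

lemma tcoef_eq_of_hasSum {f : ℝ → ℝ} {b : ℕ → ℝ}
    (h : ∀ᶠ t in 𝓝 (0 : ℝ), HasSum (fun n => b n * t ^ n) (f t)) (n : ℕ) : tcoef f n = b n := by
  have : HasFPowerSeriesAt f (FormalMultilinearSeries.ofScalars ℝ b) 0 := by
    rw [hasFPowerSeriesAt_iff]
    filter_upwards [h] with t ht
    simpa [mul_comm] using ht
  rw [tcoef_of_series this]; simp

lemma tcoef_bound {f : ℝ → ℝ} (hf : AnalyticAt ℝ f 0) :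
    ∃ B R : ℝ, 0 < R ∧ 0 ≤ B ∧ (∀ n, |tcoef f n| ≤ B * R ^ n) ∧
      ∀ t, |t| * R < 1 → HasSum (fun n => tcoef f n * t ^ n) (f t) := by
  obtain ⟨p, r, hp⟩ := hf
  have hpa : HasFPowerSeriesAt f p 0 := ⟨r, hp⟩
  obtain ⟨r', hr'0, hr'⟩ := ENNReal.lt_iff_exists_nnreal_btwn.1 hp.r_pos
  have hr0 : 0 < r' := by exact_mod_cast hr'0
  obtain ⟨B, hB, hBb⟩ := p.norm_mul_pow_le_of_lt_radius (hr'.trans_le hp.r_le)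
  refine ⟨B, (r' : ℝ)⁻¹, by positivity, hB.le, ?_, ?_⟩
  · intro n
    rw [tcoef_of_series hpa]
    have h1 := hBb n
    have h2 : |p.coeff n| ≤ ‖p n‖ := by
      have := (p n).le_opNorm (fun _ => 1)
      have h1 : (p n) (fun _ => (1 : ℝ)) = p.coeff n := rfl
      rw [h1] at this
      simpa only [Real.norm_eq_abs, abs_one, Finset.prod_const_one, mul_one] using this
    have h3 : (0 : ℝ) < (r' : ℝ) ^ n := by positivity
    rw [inv_pow, ← div_eq_mul_inv, le_div_iff₀ h3]
    exact (mul_le_mul_of_nonneg_right h2 h3.le).trans h1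
  · intro t ht
    have h3 : (0 : ℝ) < (r' : ℝ) := by positivity
    have ht' : |t| < r' := by
      rwa [← div_eq_mul_inv, div_lt_one h3] at ht
    have hm : t ∈ Metric.eball (0 : ℝ) r := by
      rw [Metric.mem_eball, edist_zero_right]
      refine lt_trans ?_ hr'
      rw [← ofReal_norm, Real.norm_eq_abs, ← ENNReal.ofReal_coe_nnreal]
      exact (ENNReal.ofReal_lt_ofReal_iff h3).2 ht'
    have := hp.hasSum hm
    rw [zero_add] at this
    refine (funext fun n => ?_ : (fun n => tcoef f n * t ^ n) = fun n => (p n) fun _ => t) ▸ this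
    rw [tcoef_of_series hpa, FormalMultilinearSeries.apply_eq_pow_smul_coeff, smul_eq_mul,
      mul_comm]

/-- Positive semidefinite kernels on `(-δ, δ)`. -/
def PSDK (δ : ℝ) (K : ℝ → ℝ → ℝ) : Prop :=
  (∀ s t, |s| < δ → |t| < δ → K s t = K t s) ∧
  ∀ (n : ℕ) (p x : Fin n → ℝ), (∀ i, |p i| < δ) → 0 ≤ ∑ i, ∑ j, x i * x j * K (p i) (p j)

lemma PSDK.congr {δ : ℝ} {K K' : ℝ → ℝ → ℝ} (h : PSDK δ K)
    (he : ∀ s t, |s| < δ → |t| < δ → K' s t = K s t) : PSDK δ K' := by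
  refine ⟨fun s t hs ht => by rw [he s t hs ht, he t s ht hs, h.1 s t hs ht], fun n p x hp => ?_⟩
  have := h.2 n p x hp
  refine le_of_le_of_eq this ?_
  refine Finset.sum_congr rfl fun i _ => Finset.sum_congr rfl fun j _ => ?_
  rw [he _ _ (hp i) (hp j)]

lemma PSDK.comp {δ δ' : ℝ} {K : ℝ → ℝ → ℝ} (h : PSDK δ K) (φ : ℝ → ℝ)
    (hφ : ∀ s, |s| < δ' → |φ s| < δ) : PSDK δ' (fun s t => K (φ s) (φ t)) :=
  ⟨fun s t hs ht => h.1 _ _ (hφ s hs) (hφ t ht),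
    fun n p x hp => h.2 n (fun i => φ (p i)) x (fun i => hφ _ (hp i))⟩

lemma PSDK.mono {δ δ' : ℝ} {K : ℝ → ℝ → ℝ} (h : PSDK δ K) (hd : δ' ≤ δ) : PSDK δ' K :=
  h.comp id fun _ hs => lt_of_lt_of_le hs hd

lemma PSDK.matrix {δ : ℝ} {K : ℝ → ℝ → ℝ} (h : PSDK δ K) {n : ℕ} (p : Fin n → ℝ)
    (hp : ∀ i, |p i| < δ) : (Matrix.of fun i j => K (p i) (p j)).PosSemidef := by
  rw [Matrix.posSemidef_iff_dotProduct_mulVec]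
  refine ⟨?_, fun x => ?_⟩
  · ext i j
    simp [h.1 (p j) (p i) (hp j) (hp i)]
  · have := h.2 n p x hp
    refine le_of_le_of_eq this ?_
    simp only [dotProduct, Matrix.mulVec, Matrix.of_apply, Pi.star_apply, star_trivial,
      Finset.mul_sum]
    refine Finset.sum_congr rfl fun i _ => Finset.sum_congr rfl fun j _ => by ring

lemma PSDK.mul {δ : ℝ} {K K' : ℝ → ℝ → ℝ} (h : PSDK δ K) (h' : PSDK δ K') :
    PSDK δ (fun s t => K s t * K' s t) := by
  refine ⟨fun s t hs ht => by beta_reduce; rw [h.1 s t hs ht, h'.1 s t hs ht], fun n p x hp => ?_⟩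
  have := ((h.matrix p hp).hadamard (h'.matrix p hp))
  rw [Matrix.posSemidef_iff_dotProduct_mulVec] at this
  have := this.2 x
  refine le_of_le_of_eq this ?_
  simp only [dotProduct, Matrix.mulVec, Matrix.of_apply, Pi.star_apply, star_trivial,
      Finset.mul_sum, Matrix.hadamard_apply]
  refine Finset.sum_congr rfl fun i _ => Finset.sum_congr rfl fun j _ => by ring

lemma PSDK.rankone (δ : ℝ) (a : ℝ → ℝ) : PSDK δ (fun s t => a s * a t) := by
  refine ⟨fun s t _ _ => mul_comm _ _, fun n p x _ => ?_⟩
  have : ∑ i, ∑ j, x i * x j * (a (p i) * a (p j)) = (∑ i, x i * a (p i)) ^ 2 := by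
    rw [sq, Finset.sum_mul_sum]
    refine Finset.sum_congr rfl fun i _ => Finset.sum_congr rfl fun j _ => by ring
  rw [this]; positivity

lemma PSDK.add {δ : ℝ} {K K' : ℝ → ℝ → ℝ} (h : PSDK δ K) (h' : PSDK δ K') :
    PSDK δ (fun s t => K s t + K' s t) := by
  refine ⟨fun s t hs ht => by beta_reduce; rw [h.1 s t hs ht, h'.1 s t hs ht], fun n p x hp => ?_⟩
  have := add_nonneg (h.2 n p x hp) (h'.2 n p x hp)
  refine le_of_le_of_eq this ?_
  simp only [← Finset.sum_add_distrib]
  refine Finset.sum_congr rfl fun i _ => Finset.sum_congr rfl fun j _ => by ring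

lemma PSDK.smul {δ : ℝ} {K : ℝ → ℝ → ℝ} (h : PSDK δ K) {a : ℝ} (ha : 0 ≤ a) :
    PSDK δ (fun s t => a * K s t) := by
  refine ⟨fun s t hs ht => by beta_reduce; rw [h.1 s t hs ht], fun n p x hp => ?_⟩
  have := mul_nonneg ha (h.2 n p x hp)
  refine le_of_le_of_eq this ?_
  simp only [Finset.mul_sum]
  refine Finset.sum_congr rfl fun i _ => Finset.sum_congr rfl fun j _ => by ring

lemma PSDK.limit {δ : ℝ} {K : ℝ → ℝ → ℝ} {F : ℕ → ℝ → ℝ → ℝ} (h : ∀ n, PSDK δ (F n))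
    (hl : ∀ s t, |s| < δ → |t| < δ → Tendsto (fun n => F n s t) atTop (𝓝 (K s t))) :
    PSDK δ K := by
  refine ⟨fun s t hs ht => ?_, fun n p x hp => ?_⟩
  · refine tendsto_nhds_unique (hl s t hs ht) ?_
    refine (hl t s ht hs).congr fun n => ((h n).1 s t hs ht).symm
  · refine ge_of_tendsto' (x := atTop)
      (f := fun k => ∑ i, ∑ j, x i * x j * F k (p i) (p j)) ?_ (fun k => (h k).2 n p x hp)
    refine tendsto_finsetSum _ fun i _ => tendsto_finsetSum _ fun j _ => ?_
    exact (hl _ _ (hp i) (hp j)).const_mul _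

lemma PSDK.pow {δ : ℝ} {K : ℝ → ℝ → ℝ} (h : PSDK δ K) (n : ℕ) :
    PSDK δ (fun s t => K s t ^ n) := by
  induction n with
  | zero => simpa using PSDK.rankone δ (fun _ => 1)
  | succ n ih => simpa [pow_succ] using ih.mul h

lemma PSDK.sum {δ : ℝ} {F : ℕ → ℝ → ℝ → ℝ} (h : ∀ n, PSDK δ (F n)) (N : ℕ) :
    PSDK δ (fun s t => ∑ n ∈ Finset.range N, F n s t) := by
  induction N with
  | zero => simpa using PSDK.rankone δ (fun _ => 0)
  | succ N ih => simpa [Finset.sum_range_succ] using ih.add (h N)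

lemma PSDK.geom {δ : ℝ} {Q : ℝ → ℝ → ℝ} (h : PSDK δ Q)
    (hQ : ∀ s t, |s| < δ → |t| < δ → |Q s t| < 1) :
    PSDK δ (fun s t => (1 - Q s t)⁻¹) := by
  refine PSDK.limit (F := fun N s t => ∑ n ∈ Finset.range N, Q s t ^ n)
    (PSDK.sum fun n => h.pow n) fun s t hs ht => ?_
  exact (hasSum_geometric_of_abs_lt_one (hQ s t hs ht)).tendsto_sum_nat

lemma PSDK.sub_one {δ : ℝ} {P : ℝ → ℝ → ℝ} (hδ : 0 < δ) (h : PSDK δ P)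
    (h0 : ∀ t, |t| < δ → P 0 t = 1) : PSDK δ (fun s t => P s t - 1) := by
  refine ⟨fun s t hs ht => by beta_reduce; rw [h.1 s t hs ht], fun n p x hp => ?_⟩
  have h0' : ∀ t, |t| < δ → P t 0 = 1 := fun t ht => by
    rw [h.1 t 0 ht (by simpa using hδ), h0 t ht]
  have := h.2 (n + 1) (Fin.cons 0 p) (Fin.cons (-∑ i, x i) x) (by
    intro i
    refine Fin.cases ?_ (fun i => ?_) i
    · simpa using hδ
    · simpa using hp i)
  simp only [Fin.sum_univ_succ, Fin.cons_zero, Fin.cons_succ] at this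
  simp only [fun i => h0 _ (hp i), fun i => h0' _ (hp i), h0 0 (by simpa using hδ)] at this
  refine le_of_le_of_eq this ?_
  simp only [mul_sub, Finset.sum_sub_distrib, Finset.sum_add_distrib, mul_one,
    ← Finset.mul_sum, ← Finset.sum_mul]
  ring

open Topology

/-- The double series `∑ c (i+j) s^i t^j`. -/
def Lk (c : ℕ → ℝ) (s t : ℝ) : ℝ := ∑' p : ℕ × ℕ, c (p.1 + p.2) * (s ^ p.1 * t ^ p.2)

lemma Lk_bound {c : ℕ → ℝ} {B R : ℝ} (hR : 0 < R) (hB : 0 ≤ B) (hb : ∀ n, |c n| ≤ B * R ^ n)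
    {s t : ℝ} {a b : ℝ} (hs : |s| * R ≤ a) (ht : |t| * R ≤ b) (p : ℕ × ℕ) :
    ‖c (p.1 + p.2) * (s ^ p.1 * t ^ p.2)‖ ≤ B * (a ^ p.1 * b ^ p.2) := by
  have ha : 0 ≤ a := le_trans (by positivity) hs
  rw [Real.norm_eq_abs, abs_mul, abs_mul, abs_pow, abs_pow]
  calc |c (p.1 + p.2)| * (|s| ^ p.1 * |t| ^ p.2)
      ≤ (B * R ^ (p.1 + p.2)) * (|s| ^ p.1 * |t| ^ p.2) := by gcongr; exact hb _
    _ = B * ((|s| * R) ^ p.1 * (|t| * R) ^ p.2) := by rw [pow_add, mul_pow, mul_pow]; ring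
    _ ≤ _ := by gcongr

lemma summable_geo2 (B : ℝ) {a b : ℝ} (ha0 : 0 ≤ a) (ha : a < 1) (hb0 : 0 ≤ b) (hb : b < 1) :
    Summable (fun p : ℕ × ℕ => B * (a ^ p.1 * b ^ p.2)) := by
  refine Summable.mul_left _ ?_
  exact (summable_geometric_of_lt_one ha0 ha).mul_of_nonneg (summable_geometric_of_lt_one hb0 hb)
    (fun n => pow_nonneg ha0 n) (fun n => pow_nonneg hb0 n)

lemma Lk_summable {c : ℕ → ℝ} {B R : ℝ} (hR : 0 < R) (hB : 0 ≤ B) (hb : ∀ n, |c n| ≤ B * R ^ n)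
    {s t : ℝ} (hs : |s| * R < 1) (ht : |t| * R < 1) :
    Summable (fun p : ℕ × ℕ => c (p.1 + p.2) * (s ^ p.1 * t ^ p.2)) :=
  Summable.of_norm_bounded (summable_geo2 B (by positivity) hs (by positivity) ht)
    (Lk_bound hR hB hb le_rfl le_rfl)

lemma Lk_continuousOn {c : ℕ → ℝ} {B R : ℝ} (hR : 0 < R) (hB : 0 ≤ B)
    (hb : ∀ n, |c n| ≤ B * R ^ n) :
    ContinuousOn (fun q : ℝ × ℝ => Lk c q.1 q.2) {q | |q.1| * R ≤ 1 / 2 ∧ |q.2| * R ≤ 1 / 2} := by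
  unfold Lk
  refine continuousOn_tsum (u := fun p : ℕ × ℕ => B * ((1 / 2) ^ p.1 * (1 / 2) ^ p.2)) ?_ ?_ ?_
  · intro p; fun_prop
  · exact summable_geo2 B (by norm_num) (by norm_num) (by norm_num) (by norm_num)
  · intro p q hq
    exact Lk_bound hR hB hb hq.1 hq.2 p

lemma Lk_sub {f : ℝ → ℝ} {b : ℕ → ℝ} {B R : ℝ} (hR : 0 < R) (hB : 0 ≤ B)
    (hb : ∀ n, |b (n + 1)| ≤ B * R ^ n) {s t : ℝ} (hs : |s| * R < 1) (ht : |t| * R < 1)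
    (hfs : HasSum (fun n => b n * s ^ n) (f s)) (hft : HasSum (fun n => b n * t ^ n) (f t)) :
    f s - f t = (s - t) * Lk (fun n => b (n + 1)) s t := by
  have hsum := Lk_summable (c := fun n => b (n + 1)) hR hB hb hs ht
  have h1 : HasSum (fun n => (s - t) *
      ∑ p ∈ Finset.HasAntidiagonal.antidiagonal n, b (p.1 + p.2 + 1) * (s ^ p.1 * t ^ p.2))
      ((s - t) * Lk (fun n => b (n + 1)) s t) := by
    refine HasSum.mul_left _ ?_
    have h2 := (Finset.HasAntidiagonal.sigmaAntidiagonalEquivProd.hasSum_iff.2 hsum.hasSum)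
    have h3 := h2.sigma (g := fun n => ∑ p ∈ Finset.HasAntidiagonal.antidiagonal n,
      b (p.1 + p.2 + 1) * (s ^ p.1 * t ^ p.2)) (fun n => by
        have := hasSum_fintype (fun p : Finset.HasAntidiagonal.antidiagonal n =>
          b (p.1.1 + p.1.2 + 1) * (s ^ p.1.1 * t ^ p.1.2))
        rw [Finset.sum_coe_sort (Finset.HasAntidiagonal.antidiagonal n)
          (fun p => b (p.1 + p.2 + 1) * (s ^ p.1 * t ^ p.2))] at this
        exact this)
    exact h3
  have h4 : HasSum (fun n => b (n + 1) * s ^ (n + 1) - b (n + 1) * t ^ (n + 1)) (f s - f t) := by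
    have := hfs.sub hft
    rw [← hasSum_nat_add_iff' 1] at this
    simpa using this
  refine h4.unique ?_
  convert h1 using 2 with n
  have h5 : ∑ p ∈ Finset.HasAntidiagonal.antidiagonal n, b (p.1 + p.2 + 1) * (s ^ p.1 * t ^ p.2)
      = b (n + 1) * ∑ p ∈ Finset.HasAntidiagonal.antidiagonal n, s ^ p.1 * t ^ p.2 := by
    rw [Finset.mul_sum]
    refine Finset.sum_congr rfl fun p hp => ?_
    rw [Finset.HasAntidiagonal.mem_antidiagonal.1 hp]
  have h6 : (∑ p ∈ Finset.HasAntidiagonal.antidiagonal n, s ^ p.1 * t ^ p.2) * (s - t) = s ^ (n + 1) - t ^ (n + 1) := by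
    rw [Finset.Nat.sum_antidiagonal_eq_sum_range_succ (fun i j => s ^ i * t ^ j) n,
      ← (Commute.all s t).geom_sum₂_mul (n + 1)]
    congr 1
  rw [h5]
  linear_combination (-b (n + 1)) * h6

lemma tendsto_range_prod : Tendsto (fun N : ℕ => Finset.range N ×ˢ Finset.range N) atTop atTop := by
  refine tendsto_atTop_finset_of_monotone ?_ ?_
  · intro a b hab
    exact Finset.product_subset_product (Finset.range_mono hab) (Finset.range_mono hab)
  · intro p
    refine ⟨p.1 + p.2 + 1, ?_⟩
    simp only [Finset.mem_product, Finset.mem_range]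
    omega

lemma Lk_psd {c : ℕ → ℝ} {B R : ℝ} (hR : 0 < R) (hB : 0 ≤ B) (hb : ∀ n, |c n| ≤ B * R ^ n)
    (hc : HankelPos c) : PSDK (1 / R) (Lk c) := by
  refine PSDK.limit (F := fun N s t => ∑ p ∈ Finset.range N ×ˢ Finset.range N,
    c (p.1 + p.2) * (s ^ p.1 * t ^ p.2)) ?_ ?_
  · intro N
    refine ⟨fun s t _ _ => ?_, fun n p x _ => ?_⟩
    · simp only [Finset.sum_product]
      rw [Finset.sum_comm]
      refine Finset.sum_congr rfl fun i _ => Finset.sum_congr rfl fun j _ => ?_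
      rw [add_comm]; ring
    · have := hc N (fun k => ∑ i, x i * p i ^ k)
      refine le_of_le_of_eq this ?_
      simp only [Finset.sum_product, Finset.mul_sum, Finset.sum_mul]
      have e1 : ∀ a ∈ Finset.range N, ∀ b ∈ Finset.range N, True := fun _ _ _ _ => trivial
      calc ∑ a ∈ Finset.range N, ∑ b ∈ Finset.range N, ∑ j, ∑ i,
              x i * p i ^ a * (x j * p j ^ b) * c (a + b)
          = ∑ a ∈ Finset.range N, ∑ j, ∑ i, ∑ b ∈ Finset.range N,
              x i * p i ^ a * (x j * p j ^ b) * c (a + b) := by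
            refine Finset.sum_congr rfl fun a _ => ?_
            rw [Finset.sum_comm]
            refine Finset.sum_congr rfl fun j _ => ?_
            rw [Finset.sum_comm]
        _ = ∑ j, ∑ i, ∑ a ∈ Finset.range N, ∑ b ∈ Finset.range N,
              x i * p i ^ a * (x j * p j ^ b) * c (a + b) := by
            rw [Finset.sum_comm]
            refine Finset.sum_congr rfl fun j _ => ?_
            rw [Finset.sum_comm]
        _ = _ := by
            rw [Finset.sum_comm]
            refine Finset.sum_congr rfl fun i _ => Finset.sum_congr rfl fun j _ =>
              Finset.sum_congr rfl fun a _ => Finset.sum_congr rfl fun b _ => by ring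
  · intro s t hs ht
    rw [lt_div_iff₀ hR] at hs ht
    exact (Lk_summable hR hB hb hs ht).hasSum.comp tendsto_range_prod

lemma hankel_of_psd {c : ℕ → ℝ} {B R δ : ℝ} (hR : 0 < R) (hB : 0 ≤ B)
    (hb : ∀ n, |c n| ≤ B * R ^ n) (hδ : 0 < δ) (hp : PSDK δ (Lk c)) : HankelPos c := by
  intro N x
  let y : Fin N → ℝ := fun l => 1 / ((l : ℝ) + 1)
  have hy0 : ∀ l, 0 < y l := fun l => by positivity
  have hy1 : ∀ l, y l ≤ 1 := fun l => by
    simp only [y]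
    rw [div_le_one (by positivity)]
    have : (0 : ℝ) ≤ (l : ℝ) := by positivity
    linarith
  have hyinj : Function.Injective y := by
    intro a b hab
    have ha : ((a : ℕ) : ℝ) + 1 ≠ 0 := by positivity
    have hb : ((b : ℕ) : ℝ) + 1 ≠ 0 := by positivity
    simp only [y] at hab
    field_simp at hab
    ext
    have : ((a : ℕ) : ℝ) = ((b : ℕ) : ℝ) := by linarith
    exact_mod_cast this
  have hdet : IsUnit (Matrix.vandermonde y).det :=
    isUnit_iff_ne_zero.2 (Matrix.det_vandermonde_ne_zero_iff.2 hyinj)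
  set A := (Matrix.vandermonde y)⁻¹ with hA
  have hAV : A * Matrix.vandermonde y = 1 := Matrix.nonsing_inv_mul _ hdet
  -- the discrete moments
  let β : Fin N → ℕ → ℝ := fun i k => ∑ l, A i l * y l ^ k
  have hβ : ∀ i k : Fin N, β i k = if i = k then 1 else 0 := by
    intro i k
    have := congrFun (congrFun hAV i) k
    rw [Matrix.mul_apply, Matrix.one_apply] at this
    simpa [Matrix.vandermonde_apply] using this
  let w : ℝ → Fin N → ℝ := fun h l => ∑ i : Fin N, x i * A i l / h ^ (i : ℕ)
  let mom : ℝ → ℕ → ℝ := fun h k => ∑ l, w h l * (h * y l) ^ k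
  have hmom : ∀ h k, mom h k = ∑ i : Fin N, x i * β i k * (h ^ k / h ^ (i : ℕ)) := by
    intro h k
    simp only [mom, w, β, Finset.sum_mul, Finset.mul_sum]
    rw [Finset.sum_comm]
    refine Finset.sum_congr rfl fun i _ => Finset.sum_congr rfl fun l _ => ?_
    rw [mul_pow]; ring
  have hmom_lt : ∀ h, 0 < h → ∀ k, k < N → mom h k = x k := by
    intro h hh k hk
    rw [hmom, Finset.sum_eq_single (⟨k, hk⟩ : Fin N)]
    · have := hβ ⟨k, hk⟩ ⟨k, hk⟩
      simp only [if_true] at this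
      rw [this, div_self (by positivity)]; simp
    · intro i _ hi
      have := hβ i ⟨k, hk⟩
      rw [if_neg hi] at this
      simp only at this
      rw [this]; ring
    · simp
  have hmom_ge : ∀ h, 0 < h → ∀ k, N ≤ k →
      mom h k = ∑ i : Fin N, x i * β i k * h ^ (k - i) := by
    intro h hh k hk
    rw [hmom]
    refine Finset.sum_congr rfl fun i _ => ?_
    rw [pow_sub₀ h hh.ne' (i.2.le.trans hk)]; ring
  set ρ := min 1 (1 / (2 * R)) with hρ
  have hρ0 : 0 < ρ := by rw [hρ]; positivity
  have hρ1 : ρ ≤ 1 := min_le_left _ _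
  have hρR : ρ * R ≤ 1 / 2 := by
    have : ρ ≤ 1 / (2 * R) := min_le_right _ _
    calc ρ * R ≤ 1 / (2 * R) * R := by gcongr
      _ = 1 / 2 := by field_simp
  set S := ∑ i : Fin N, |x i| * ∑ l, |A i l| with hS
  have hS0 : 0 ≤ S := by positivity
  set X := ∑ i : Fin N, |x i| with hX
  have hX0 : 0 ≤ X := by positivity
  set D := (S + X) / ρ ^ N with hD
  have hD0 : 0 ≤ D := by positivity
  have hmb : ∀ h, 0 < h → h ≤ ρ → ∀ k, |mom h k| ≤ D * ρ ^ k := by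
    intro h hh hhρ k
    by_cases hk : k < N
    · rw [hmom_lt h hh k hk]
      have h1 : |x k| ≤ X := by
        have := Finset.single_le_sum (f := fun i : Fin N => |x i|) (fun i _ => abs_nonneg _)
          (Finset.mem_univ (⟨k, hk⟩ : Fin N))
        simpa using this
      have h2 : ρ ^ N ≤ ρ ^ k := pow_le_pow_of_le_one hρ0.le hρ1 hk.le
      rw [hD, div_mul_eq_mul_div, le_div_iff₀ (by positivity)]
      exact mul_le_mul (by linarith) h2 (by positivity) (by positivity)
    · push Not at hk
      rw [hmom_ge h hh k hk]
      have h1 : ∀ i : Fin N, |x i * β i k * h ^ (k - i)| ≤ |x i| * (∑ l, |A i l|) * ρ ^ (k - N) := by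
        intro i
        rw [abs_mul, abs_mul]
        have h2 : |β i k| ≤ ∑ l, |A i l| := by
          refine (Finset.abs_sum_le_sum_abs _ _).trans (Finset.sum_le_sum fun l _ => ?_)
          rw [abs_mul, abs_pow, abs_of_pos (hy0 l)]
          exact mul_le_of_le_one_right (abs_nonneg _) (pow_le_one₀ (hy0 l).le (hy1 l))
        have h3 : |h ^ (k - i)| ≤ ρ ^ (k - N) := by
          rw [abs_of_nonneg (by positivity)]
          calc h ^ (k - (i : ℕ)) ≤ ρ ^ (k - (i : ℕ)) := by gcongr
            _ ≤ _ := pow_le_pow_of_le_one hρ0.le hρ1 (by have := i.2; omega)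
        gcongr
      calc |∑ i : Fin N, x i * β i k * h ^ (k - i)| ≤ ∑ i : Fin N, |x i| * (∑ l, |A i l|) * ρ ^ (k - N) :=
            (Finset.abs_sum_le_sum_abs _ _).trans (Finset.sum_le_sum fun i _ => h1 i)
        _ = S * ρ ^ (k - N) := by rw [hS, Finset.sum_mul]
        _ ≤ (S + X) * ρ ^ (k - N) := by gcongr; linarith
        _ = D * ρ ^ k := by rw [hD, pow_sub₀ ρ hρ0.ne' hk]; ring
  let lm : ℕ → ℝ := fun k => if k < N then x k else 0
  have hmlim : ∀ k, Tendsto (fun h => mom h k) (𝓝[>] 0) (𝓝 (lm k)) := by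
    intro k
    by_cases hk : k < N
    · simp only [lm, if_pos hk]
      refine tendsto_const_nhds.congr' ?_
      filter_upwards [self_mem_nhdsWithin] with h hh
      exact (hmom_lt h hh k hk).symm
    · simp only [lm, if_neg hk]
      push Not at hk
      have h1 : Tendsto (fun h : ℝ => ∑ i : Fin N, x i * β i k * h ^ (k - i)) (𝓝[>] 0)
          (𝓝 (∑ i : Fin N, x i * β i k * (0 : ℝ) ^ (k - i))) := by
        refine Tendsto.mono_left ?_ nhdsWithin_le_nhds
        exact Continuous.tendsto (by fun_prop) 0
      have h2 : ∑ i : Fin N, x i * β i k * (0 : ℝ) ^ (k - i) = 0 := by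
        refine Finset.sum_eq_zero fun i _ => ?_
        rw [zero_pow (by have := i.2; omega), mul_zero]
      rw [h2] at h1
      refine h1.congr' ?_
      filter_upwards [self_mem_nhdsWithin] with h hh
      exact (hmom_ge h hh k hk).symm
  have hdom : Tendsto (fun h => ∑' p : ℕ × ℕ, c (p.1 + p.2) * (mom h p.1 * mom h p.2)) (𝓝[>] 0)
      (𝓝 (∑' p : ℕ × ℕ, c (p.1 + p.2) * (lm p.1 * lm p.2))) := by
    refine tendsto_tsum_of_dominated_convergence
      (bound := fun p => B * D ^ 2 * ((1 / 2) ^ p.1 * (1 / 2) ^ p.2)) ?_ ?_ ?_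
    · exact summable_geo2 _ (by norm_num) (by norm_num) (by norm_num) (by norm_num)
    · intro p
      exact ((hmlim _).mul (hmlim _)).const_mul _
    · filter_upwards [Ioc_mem_nhdsGT hρ0] with h hh p
      rw [Real.norm_eq_abs, abs_mul, abs_mul]
      calc |c (p.1 + p.2)| * (|mom h p.1| * |mom h p.2|)
          ≤ (B * R ^ (p.1 + p.2)) * ((D * ρ ^ p.1) * (D * ρ ^ p.2)) := by
            gcongr
            · exact hb _
            · exact hmb h hh.1 hh.2 _
            · exact hmb h hh.1 hh.2 _
        _ = B * D ^ 2 * ((ρ * R) ^ p.1 * (ρ * R) ^ p.2) := by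
            rw [pow_add, mul_pow, mul_pow]; ring
        _ ≤ _ := by gcongr
  have hlimeq : ∑' p : ℕ × ℕ, c (p.1 + p.2) * (lm p.1 * lm p.2)
      = ∑ i ∈ Finset.range N, ∑ j ∈ Finset.range N, x i * x j * c (i + j) := by
    rw [tsum_eq_sum (s := Finset.range N ×ˢ Finset.range N), Finset.sum_product]
    · refine Finset.sum_congr rfl fun i hi => Finset.sum_congr rfl fun j hj => ?_
      simp only [lm, if_pos (Finset.mem_range.1 hi), if_pos (Finset.mem_range.1 hj)]
      ring
    · intro p hp
      simp only [Finset.mem_product, Finset.mem_range, not_and_or] at hp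
      rcases hp with hp | hp <;> simp [lm, if_neg hp]
  rw [← hlimeq]
  refine ge_of_tendsto hdom ?_
  have hδ' : 0 < min ρ (δ / 2) := by positivity
  filter_upwards [Ioc_mem_nhdsGT hδ'] with h hh
  have hhρ : h ≤ ρ := hh.2.trans (min_le_left _ _)
  have hhδ : h ≤ δ / 2 := hh.2.trans (min_le_right _ _)
  have hh0 : 0 < h := hh.1
  have habs : ∀ l, |h * y l| ≤ h := fun l => by
    rw [abs_of_pos (mul_pos hh0 (hy0 l))]
    exact mul_le_of_le_one_right hh0.le (hy1 l)
  have h1 := hp.2 N (fun l => h * y l) (w h) (fun l => lt_of_le_of_lt (habs l) (by linarith))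
  refine le_of_le_of_eq h1 ?_
  have hsm : ∀ l m, HasSum (fun p : ℕ × ℕ => w h l * w h m *
      (c (p.1 + p.2) * ((h * y l) ^ p.1 * (h * y m) ^ p.2)))
      (w h l * w h m * Lk c (h * y l) (h * y m)) := by
    intro l m
    refine HasSum.mul_left _ (Lk_summable hR hB hb ?_ ?_).hasSum
    · have : |h * y l| * R ≤ ρ * R := by gcongr; exact (habs l).trans hhρ
      linarith
    · have : |h * y m| * R ≤ ρ * R := by gcongr; exact (habs m).trans hhρ
      linarith
  have h2 : HasSum (fun p : ℕ × ℕ => c (p.1 + p.2) * (mom h p.1 * mom h p.2))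
      (∑ l, ∑ m, w h l * w h m * Lk c (h * y l) (h * y m)) := by
    have h3 := hasSum_sum (s := Finset.univ) (fun l _ => hasSum_sum (s := Finset.univ) (fun m _ => hsm l m))
    convert h3 using 2 with p
    simp only [mom]
    rw [Finset.sum_mul_sum, Finset.mul_sum]
    refine Finset.sum_congr rfl fun l _ => ?_
    rw [Finset.mul_sum]
    refine Finset.sum_congr rfl fun m _ => by ring
  exact h2.tsum_eq.symm

open Topology

lemma box_of_eventually {p : ℝ × ℝ → Prop} (h : ∀ᶠ q in 𝓝 ((0, 0) : ℝ × ℝ), p q) {δ : ℝ}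
    (hδ : 0 < δ) : ∃ δ' > 0, δ' ≤ δ ∧ ∀ s t, |s| < δ' → |t| < δ' → p (s, t) := by
  obtain ⟨e, he, hb⟩ := Metric.eventually_nhds_iff.1 h
  refine ⟨min e δ, lt_min he hδ, min_le_right _ _, fun s t hs ht => hb ?_⟩
  rw [Prod.dist_eq]
  simp only [Real.dist_eq, sub_zero]
  exact max_lt (lt_of_lt_of_le hs (min_le_left _ _)) (lt_of_lt_of_le ht (min_le_left _ _))

lemma int_of_eventually {p : ℝ → Prop} (h : ∀ᶠ q in 𝓝 (0 : ℝ), p q) {δ : ℝ}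
    (hδ : 0 < δ) : ∃ δ' > 0, δ' ≤ δ ∧ ∀ s, |s| < δ' → p s := by
  obtain ⟨e, he, hb⟩ := Metric.eventually_nhds_iff.1 h
  refine ⟨min e δ, lt_min he hδ, min_le_right _ _, fun s hs => hb ?_⟩
  simp only [Real.dist_eq, sub_zero]
  exact lt_of_lt_of_le hs (min_le_left _ _)

/-- The kernel attached to `V`. -/
structure KerP (V : ℝ → ℝ) (δ : ℝ) (P : ℝ → ℝ → ℝ) : Prop where
  pos : 0 < δ
  psd : PSDK δ P
  cont : ContinuousOn (fun q : ℝ × ℝ => P q.1 q.2) {q | |q.1| < δ ∧ |q.2| < δ}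
  one : P 0 0 = 1
  rel : ∀ s t, |s| < δ → |t| < δ → s - t = (s * V t - t * V s) * P s t

lemma isOpen_box (δ : ℝ) : IsOpen {q : ℝ × ℝ | |q.1| < δ ∧ |q.2| < δ} := by
  have h1 : IsOpen {q : ℝ × ℝ | |q.1| < δ} := isOpen_lt (by fun_prop) (by fun_prop)
  have h2 : IsOpen {q : ℝ × ℝ | |q.2| < δ} := isOpen_lt (by fun_prop) (by fun_prop)
  exact h1.inter h2

lemma KerP.continuousAt {V : ℝ → ℝ} {δ : ℝ} {P : ℝ → ℝ → ℝ} (h : KerP V δ P) {s t : ℝ}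
    (hs : |s| < δ) (ht : |t| < δ) : ContinuousAt (fun q : ℝ × ℝ => P q.1 q.2) (s, t) :=
  h.cont.continuousAt ((isOpen_box δ).mem_nhds ⟨hs, ht⟩)

lemma KerP.zero_left {V : ℝ → ℝ} {δ : ℝ} {P : ℝ → ℝ → ℝ} (h : KerP V δ P) (hV : V 0 = 1) {t : ℝ}
    (ht : |t| < δ) : P 0 t = 1 := by
  by_cases h0 : t = 0
  · rw [h0, h.one]
  · have := h.rel 0 t (by simpa using h.pos) ht
    rw [hV] at this
    have h2 : t * (P 0 t - 1) = 0 := by linarith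
    rcases mul_eq_zero.1 h2 with h3 | h3
    · exact absurd h3 h0
    · linarith

lemma KerP.affine {V : ℝ → ℝ} {δ : ℝ} {P : ℝ → ℝ → ℝ} (h : KerP V δ P) (hV : V 0 = 1) {c : ℝ}
    (hc : 1 ≤ c) : ∃ δ' P', KerP (fun m => c * V m - c + 1) δ' P' := by
  have hc0 : 0 < δ := h.pos
  have hev : ∀ᶠ q in 𝓝 ((0, 0) : ℝ × ℝ), |(c - 1) * (P q.1 q.2 - 1)| < 1 := by
    have h1 := h.continuousAt (s := 0) (t := 0) (by simpa using hc0) (by simpa using hc0)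
    have h2 : ContinuousAt (fun q : ℝ × ℝ => |(c - 1) * (P q.1 q.2 - 1)|) (0, 0) :=
      ((h1.sub continuousAt_const).const_mul (c - 1)).abs
    have h3 : |(c - 1) * (P ((0, 0) : ℝ × ℝ).1 ((0, 0) : ℝ × ℝ).2 - 1)| < 1 := by simp [h.one]
    exact h2.eventually_lt continuousAt_const h3
  obtain ⟨δ', hδ', hle, hb⟩ := box_of_eventually hev hc0
  refine ⟨δ', fun s t => P s t * (1 - (c - 1) * (P s t - 1))⁻¹, hδ', ?_, ?_, ?_, ?_⟩
  · refine (h.psd.mono hle).mul ?_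
    refine PSDK.geom (Q := fun s t => (c - 1) * (P s t - 1)) ?_ hb
    refine PSDK.smul ?_ (by linarith)
    exact PSDK.sub_one hδ' (h.psd.mono hle) fun t ht => h.zero_left hV (lt_of_lt_of_le ht hle)
  · have hc1 : ContinuousOn (fun q : ℝ × ℝ => P q.1 q.2) {q | |q.1| < δ' ∧ |q.2| < δ'} :=
      h.cont.mono fun q hq => ⟨lt_of_lt_of_le hq.1 hle, lt_of_lt_of_le hq.2 hle⟩
    refine hc1.mul (ContinuousOn.inv₀ ?_ ?_)
    · exact continuousOn_const.sub (continuousOn_const.mul (hc1.sub continuousOn_const))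
    · intro q hq
      have := (abs_lt.1 (hb q.1 q.2 hq.1 hq.2)).2
      simp only at this
      linarith
  · simp [h.one]
  · intro s t hs ht
    have h1 := (abs_lt.1 (hb s t hs ht)).2
    simp only at h1
    have h2 : 1 - (c - 1) * (P s t - 1) ≠ 0 := by linarith
    have h3 := h.rel s t (lt_of_lt_of_le hs hle) (lt_of_lt_of_le ht hle)
    field_simp
    linear_combination (1 - (c - 1) * (P s t - 1)) * h3 + (c - 1) * P s t * h3

lemma KerP.scale {V : ℝ → ℝ} {δ : ℝ} {P : ℝ → ℝ → ℝ} (h : KerP V δ P) (hV : V 0 = 1) (l : ℝ) :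
    ∃ δ' P', KerP (fun m => V (l * m)) δ' P' := by
  have hc0 : 0 < δ := h.pos
  have hb : ∀ s, |s| < δ / (|l| + 1) → |l * s| < δ := by
    intro s hs
    rw [lt_div_iff₀ (by positivity)] at hs
    rw [abs_mul]
    nlinarith [abs_nonneg s, abs_nonneg l]
  refine ⟨δ / (|l| + 1), fun s t => P (l * s) (l * t), by positivity, ?_, ?_, by simp [h.one], ?_⟩
  · exact h.psd.comp (fun s => l * s) hb
  · refine h.cont.comp (f := fun q : ℝ × ℝ => (l * q.1, l * q.2)) (by fun_prop) ?_
    intro q hq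
    exact ⟨hb _ hq.1, hb _ hq.2⟩
  · intro s t hs ht
    by_cases hl : l = 0
    · subst hl
      simp [h.one, hV]
    · have := h.rel (l * s) (l * t) (hb _ hs) (hb _ ht)
      have h2 : l * (s - t - (s * V (l * t) - t * V (l * s)) * P (l * s) (l * t)) = 0 := by
        linarith
      rcases mul_eq_zero.1 h2 with h3 | h3
      · exact absurd h3 hl
      · linarith

open Topology

lemma ae_abs_le {ν : Measure ℝ} {ρ : ℝ} (h : ν (Set.Icc (-ρ) ρ)ᶜ = 0) : ∀ᵐ x ∂ν, |x| ≤ ρ := by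
  have : ∀ᵐ x ∂ν, x ∈ Set.Icc (-ρ) ρ := h
  filter_upwards [this] with x hx
  exact abs_le.2 hx

lemma integrable_pow {ν : Measure ℝ} [IsProbabilityMeasure ν] {ρ : ℝ}
    (h : ν (Set.Icc (-ρ) ρ)ᶜ = 0) (n : ℕ) : Integrable (fun x => x ^ n) ν := by
  refine Integrable.of_bound (by fun_prop) (|ρ| ^ n) ?_
  filter_upwards [ae_abs_le h] with x hx
  rw [Real.norm_eq_abs, abs_pow]
  exact pow_le_pow_left₀ (abs_nonneg _) (hx.trans (le_abs_self _)) n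

lemma resolvent_hasSum {ν : Measure ℝ} [IsProbabilityMeasure ν] {ρ t : ℝ} (hρ : 0 ≤ ρ)
    (h : ν (Set.Icc (-ρ) ρ)ᶜ = 0) (ht : |t| * ρ < 1) :
    HasSum (fun n => (∫ x, x ^ n ∂ν) * t ^ n) (∫ x, (1 - t * x)⁻¹ ∂ν) := by
  have hae := ae_abs_le h
  have h1 := hasSum_integral_of_summable_integral_norm (μ := ν)
    (F := fun (n : ℕ) x => (t * x) ^ n) (fun n => by
      simp only [mul_pow]
      exact (integrable_pow h n).const_mul _) (by
      refine Summable.of_nonneg_of_le (fun n => integral_nonneg fun x => norm_nonneg _) ?_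
        (summable_geometric_of_lt_one (by positivity) ht)
      intro n
      have : ∫ a, ‖(t * a) ^ n‖ ∂ν ≤ ∫ _a, (|t| * ρ) ^ n ∂ν := by
        refine integral_mono_ae ?_ (integrable_const _) ?_
        · refine Integrable.norm ?_
          simp only [mul_pow]
          exact (integrable_pow h n).const_mul _
        · filter_upwards [hae] with x hx
          rw [Real.norm_eq_abs, abs_pow, abs_mul]
          gcongr
      simpa using this)
  have h2 : ∫ x, (∑' n : ℕ, (t * x) ^ n) ∂ν = ∫ x, (1 - t * x)⁻¹ ∂ν := by
    refine integral_congr_ae ?_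
    filter_upwards [hae] with x hx
    refine tsum_geometric_of_abs_lt_one ?_
    rw [abs_mul]
    exact lt_of_le_of_lt (by gcongr) ht
  rw [h2] at h1
  refine h1.congr_fun ?_
  intro n
  simp only [mul_pow, integral_const_mul]
  ring

open Topology

lemma exists_local_inv {φ : ℝ → ℝ} (h : AnalyticAt ℝ φ 0) (h0 : φ 0 = 0) (h1 : HasDerivAt φ 1 0) :
    ∃ g : ℝ → ℝ, AnalyticAt ℝ g 0 ∧ g 0 = 0 ∧ HasDerivAt g 1 0 ∧ (∀ᶠ t in 𝓝 0, φ (g t) = t) ∧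
      ∀ᶠ m in 𝓝 0, g (φ m) = m := by
  have hd : deriv φ 0 = 1 := h1.deriv
  have hne : deriv φ 0 ≠ 0 := by rw [hd]; exact one_ne_zero
  refine ⟨h.hasStrictDerivAt.localInverse φ (deriv φ 0) 0 hne, ?_, ?_, ?_, ?_, ?_⟩
  · have := h.analyticAt_localInverse hne
    rwa [h0] at this
  · have := (h.hasStrictDerivAt.eventually_left_inverse hne).self_of_nhds
    rwa [h0] at this
  · have := (h.hasStrictDerivAt.to_localInverse hne).hasDerivAt
    rw [h0] at this
    have h3 : (deriv φ 0)⁻¹ = 1 := by rw [hd]; norm_num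
    rwa [h3] at this
  · have := h.hasStrictDerivAt.eventually_right_inverse hne
    rwa [h0] at this
  · exact h.hasStrictDerivAt.eventually_left_inverse hne

lemma Lk_zero (c : ℕ → ℝ) : Lk c 0 0 = c 0 := by
  unfold Lk
  rw [tsum_eq_single (0, 0)]
  · simp
  · rintro ⟨i, j⟩ hij
    rcases i with _ | i
    · rcases j with _ | j
      · exact absurd rfl hij
      · simp
    · simp

lemma core_hankel {V g : ℝ → ℝ} {δ : ℝ} {P : ℝ → ℝ → ℝ} (hV : AnalyticAt ℝ V 0) (hV0 : V 0 = 1)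
    (hP : KerP V δ P) (hg : AnalyticAt ℝ g 0) (hg0 : g 0 = 0)
    (hφ : ∀ᶠ t in 𝓝 0, g t / (V (g t) + g t ^ 2) = t) :
    ∃ (c : ℕ → ℝ) (B R : ℝ), 0 < R ∧ 0 ≤ B ∧ (∀ n, |c n| ≤ B * R ^ n) ∧ HankelPos c ∧ c 0 = 1 ∧
      ∀ t, |t| * R < 1 → HasSum (fun n => c n * t ^ (n + 1)) (g t / V (g t)) := by
  have hVg : AnalyticAt ℝ (fun t => V (g t)) 0 := by
    have : AnalyticAt ℝ V (g 0) := by rwa [hg0]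
    exact this.comp hg
  have hVg0 : V (g 0) = 1 := by rw [hg0, hV0]
  have hf : AnalyticAt ℝ (fun t => g t / V (g t)) 0 := hg.div hVg (by simp [hVg0])
  obtain ⟨B, R, hR, hB, hb, hsum⟩ := tcoef_bound hf
  set b := tcoef (fun t => g t / V (g t)) with hbdef
  have hb0 : b 0 = 0 := by
    have h1 := hsum 0 (by simp)
    have h2 : HasSum (fun n => b n * (0 : ℝ) ^ n) (b 0) := by
      convert hasSum_single (f := fun n => b n * (0 : ℝ) ^ n) 0 ?_ using 1
      · simp
      · intro n hn; simp [hn]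
    have := h1.unique h2
    simp [hg0] at this
    exact this.symm
  have hcb : ∀ n, |b (n + 1)| ≤ (B * R) * R ^ n := fun n => by
    have := hb (n + 1)
    rw [pow_succ] at this
    linarith
  have hBR : 0 ≤ B * R := by positivity
  -- small box
  have hgc : ContinuousAt g 0 := hg.continuousAt
  have hPc := hP.continuousAt (s := 0) (t := 0) (by simpa using hP.pos) (by simpa using hP.pos)
  have e1 : ∀ᶠ t in 𝓝 (0 : ℝ), |g t| < δ ∧ V (g t) ≠ 0 ∧ V (g t) + g t ^ 2 ≠ 0 ∧
      g t / (V (g t) + g t ^ 2) = t ∧ |t| * R < 1 / 2 ∧ ContinuousAt g t ∧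
      ContinuousAt (fun t => V (g t)) t := by
    have a1 : ∀ᶠ t in 𝓝 (0 : ℝ), |g t| < δ :=
      hgc.abs.eventually_lt continuousAt_const (by simpa [hg0] using hP.pos)
    have a2 : ∀ᶠ t in 𝓝 (0 : ℝ), V (g t) ≠ 0 := hVg.continuousAt.eventually_ne (by simp [hVg0])
    have a3 : ∀ᶠ t in 𝓝 (0 : ℝ), V (g t) + g t ^ 2 ≠ 0 :=
      (hVg.continuousAt.add (hgc.pow 2)).eventually_ne (by simp [hg0, hV0])
    have a5 : ∀ᶠ t in 𝓝 (0 : ℝ), |t| * R < 1 / 2 := by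
      have : ContinuousAt (fun t : ℝ => |t| * R) 0 := by fun_prop
      exact this.eventually_lt continuousAt_const (by simp)
    filter_upwards [a1, a2, a3, hφ, a5, hg.eventually_analyticAt, hVg.eventually_analyticAt]
      with t h1 h2 h3 h4 h5 h6 h7
    exact ⟨h1, h2, h3, h4, h5, h6.continuousAt, h7.continuousAt⟩
  have e2 : ∀ᶠ q in 𝓝 ((0, 0) : ℝ × ℝ), |(g q.1 * g q.2) * P (g q.1) (g q.2)| < 1 := by
    have c1 : ContinuousAt (fun q : ℝ × ℝ => g q.1) (0, 0) :=
      ContinuousAt.comp' (f := Prod.fst) (g := g) hgc continuousAt_fst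
    have c2 : ContinuousAt (fun q : ℝ × ℝ => g q.2) (0, 0) :=
      ContinuousAt.comp' (f := Prod.snd) (g := g) hgc continuousAt_snd
    have c3 : ContinuousAt (fun q : ℝ × ℝ => P (g q.1) (g q.2)) (0, 0) := by
      refine ContinuousAt.comp (f := fun q : ℝ × ℝ => (g q.1, g q.2))
        (g := fun q : ℝ × ℝ => P q.1 q.2) ?_ (c1.prodMk c2)
      simpa [hg0] using hPc
    exact (((c1.mul c2).mul c3).abs).eventually_lt continuousAt_const (by simp [hg0])
  obtain ⟨d1, hd1, -, H1⟩ := int_of_eventually e1 (one_pos)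
  obtain ⟨d, hd, hdle, H2⟩ := box_of_eventually e2 hd1
  have H1' : ∀ s, |s| < d → _ := fun s hs => H1 s (lt_of_lt_of_le hs hdle)
  let a : ℝ → ℝ := fun t => (V (g t) + g t ^ 2) / V (g t)
  let N : ℝ → ℝ → ℝ := fun t u => (a t * a u) * (1 - (g t * g u) * P (g t) (g u))⁻¹
  have hN : PSDK d N := by
    refine (PSDK.rankone d a).mul ?_
    refine PSDK.geom (Q := fun t u => (g t * g u) * P (g t) (g u)) ?_ H2
    exact (PSDK.rankone d g).mul (hP.psd.comp g fun s hs => (H1' s hs).1)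
  have hne : ∀ t u, |t| < d → |u| < d → t ≠ u → Lk (fun n => b (n + 1)) t u = N t u := by
    intro t u ht hu htu
    obtain ⟨t1, t2, t3, t4, t5, -, -⟩ := H1' t ht
    obtain ⟨u1, u2, u3, u4, u5, -, -⟩ := H1' u hu
    have hL := Lk_sub (f := fun t => g t / V (g t)) (b := b) hR hBR hcb (s := t) (t := u) (by linarith) (by linarith)
      (hsum t (by linarith)) (hsum u (by linarith))
    have hrel := hP.rel (g t) (g u) t1 u1
    have hlt := (abs_lt.1 (H2 t u ht hu)).2
    simp only at hlt
    have hD : 1 - g t * g u * P (g t) (g u) ≠ 0 := by linarith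
    have hN' : (t - u) * N t u = g t / V (g t) - g u / V (g u) := by
      have : t - u = g t / (V (g t) + g t ^ 2) - g u / (V (g u) + g u ^ 2) := by rw [t4, u4]
      rw [this]
      simp only [N, a]
      field_simp
      linear_combination (-(g t) * g u) * hrel
    have h0 : t - u ≠ 0 := sub_ne_zero.2 htu
    exact mul_left_cancel₀ h0 (hL.symm.trans hN'.symm)
  have hall : ∀ t u, |t| < d → |u| < d → Lk (fun n => b (n + 1)) t u = N t u := by
    intro t u ht hu
    by_cases htu : t = u
    · subst htu
      obtain ⟨t1, t2, t3, t4, t5, t6, t7⟩ := H1' t ht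
      have hlt := (abs_lt.1 (H2 t t ht ht)).2
      simp only at hlt
      have k1 : ContinuousAt (fun u => Lk (fun n => b (n + 1)) t u) t := by
        have := (Lk_continuousOn (c := fun n => b (n + 1)) hR hBR hcb).continuousAt
          (x := (t, t)) (by
            have o1 : IsOpen {q : ℝ × ℝ | |q.1| * R < 1 / 2} := isOpen_lt (by fun_prop) (by fun_prop)
            have o2 : IsOpen {q : ℝ × ℝ | |q.2| * R < 1 / 2} := isOpen_lt (by fun_prop) (by fun_prop)
            refine mem_of_superset ((o1.inter o2).mem_nhds ⟨t5, t5⟩) ?_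
            intro q hq
            exact ⟨le_of_lt hq.1, le_of_lt hq.2⟩)
        exact ContinuousAt.comp (f := fun u : ℝ => (t, u)) this (by fun_prop)
      have k2 : ContinuousAt (fun u => N t u) t := by
        simp only [N, a]
        have kP : ContinuousAt (fun u => P (g t) (g u)) t :=
          ContinuousAt.comp (f := fun u : ℝ => (g t, g u)) (g := fun q : ℝ × ℝ => P q.1 q.2)
            (hP.continuousAt t1 t1) (continuousAt_const.prodMk t6)
        refine (continuousAt_const.mul ((t7.add (t6.pow 2)).div t7 t2)).mul ?_
        refine ContinuousAt.inv₀ (continuousAt_const.sub ((continuousAt_const.mul t6).mul kP)) ?_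
        linarith
      refine tendsto_nhds_unique (f := fun u => Lk (fun n => b (n + 1)) t u)
        (k1.tendsto.mono_left nhdsWithin_le_nhds)
        ((k2.tendsto.mono_left (nhdsWithin_le_nhds (s := {t}ᶜ))).congr' ?_)
      have : ∀ᶠ u in 𝓝[≠] t, |u| < d :=
        nhdsWithin_le_nhds ((continuous_abs.continuousAt).eventually_lt continuousAt_const ht)
      filter_upwards [this, self_mem_nhdsWithin] with u hu hne'
      exact (hne t u ht hu (Ne.symm hne')).symm
    · exact hne t u ht hu htu
  refine ⟨fun n => b (n + 1), B * R, R, hR, hBR, hcb, ?_, ?_, ?_⟩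
  · exact hankel_of_psd hR hBR hcb hd (hN.congr hall)
  · have := hall 0 0 (by simpa using hd) (by simpa using hd)
    rw [Lk_zero] at this
    simpa [N, a, hg0, hV0] using this
  · intro t ht
    have := (hasSum_nat_add_iff' 1).2 (hsum t ht)
    simpa [hb0] using this

open Topology

lemma tcoef_one (f : ℝ → ℝ) : tcoef f 1 = deriv f 0 := by
  simp [tcoef, iteratedDeriv_one]

lemma memV_of_kerP {V : ℝ → ℝ} {δ : ℝ} {P : ℝ → ℝ → ℝ} (hV : AnalyticAt ℝ V 0) (hV0 : V 0 = 1)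
    (hP : KerP V δ P) : memV V := by
  have hA : AnalyticAt ℝ (fun m => m / (V m + m ^ 2)) 0 :=
    analyticAt_id.div (hV.add (analyticAt_id.pow 2)) (by simp [hV0])
  have hD : HasDerivAt (fun m => m / (V m + m ^ 2)) 1 0 := by
    have h1 := (hasDerivAt_id (0 : ℝ)).div
      (hV.differentiableAt.hasDerivAt.add (hasDerivAt_pow 2 (0 : ℝ))) (by simp [hV0])
    refine (h1.congr_deriv (by simp [hV0])).congr_of_eventuallyEq (Eventually.of_forall fun m => ?_)
    simp
  obtain ⟨g, hg, hg0, hgd, hr, hl⟩ := exists_local_inv hA (by simp) hD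
  obtain ⟨c, B, R, hR, hB, hb, hH, hc0, hsum⟩ := core_hankel hV hV0 hP hg hg0 hr
  obtain ⟨ν, hν, hsupp, hmom⟩ := exists_measure_moments c hH hR.le hb hc0
  have hρ : 0 ≤ R + 1 := by linarith
  have hres : ∀ t, |t| * (R + 1) < 1 → HasSum (fun n => c n * t ^ n) (∫ x, (1 - t * x)⁻¹ ∂ν) := by
    intro t ht
    have := resolvent_hasSum hρ hsupp ht
    simpa only [hmom] using this
  have hVg : AnalyticAt ℝ (fun t => V (g t)) 0 := by
    have : AnalyticAt ℝ V (g 0) := by rwa [hg0]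
    exact this.comp hg
  have hVg0 : V (g 0) = 1 := by rw [hg0, hV0]
  have hsmall : ∀ᶠ t in 𝓝 (0 : ℝ), |t| * (R + 1) < 1 := by
    have : ContinuousAt (fun t : ℝ => |t| * (R + 1)) 0 := by fun_prop
    exact this.eventually_lt continuousAt_const (by simp)
  have hM : ∀ᶠ t in 𝓝 (0 : ℝ), ∫ x, (1 - t * x)⁻¹ ∂ν = 1 + g t ^ 2 / V (g t) := by
    have a2 : ∀ᶠ t in 𝓝 (0 : ℝ), V (g t) ≠ 0 := hVg.continuousAt.eventually_ne (by simp [hVg0])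
    have a3 : ∀ᶠ t in 𝓝 (0 : ℝ), V (g t) + g t ^ 2 ≠ 0 :=
      (hVg.continuousAt.add (hg.continuousAt.pow 2)).eventually_ne (by simp [hg0, hV0])
    filter_upwards [hsmall, a2, a3, hr] with t h1 h2 h3 h4
    by_cases ht : t = 0
    · subst ht; simp [hg0]
    · have e1 := (hres t h1).mul_left t
      have e2 := hsum t (by nlinarith [abs_nonneg t])
      have e3 : t * ∫ x, (1 - t * x)⁻¹ ∂ν = g t / V (g t) := by
        refine e1.unique ?_
        refine e2.congr_fun ?_
        intro n; ring
      refine mul_left_cancel₀ ht ?_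
      rw [e3]
      have h5 : t * (V (g t) + g t ^ 2) = g t := by
        rw [div_eq_iff h3] at h4; exact h4.symm
      field_simp
      linarith
  have hser : ∀ᶠ t in 𝓝 (0 : ℝ), HasSum (fun n => c n * t ^ n) (1 + g t ^ 2 / V (g t)) := by
    filter_upwards [hM, hsmall] with t h1 h2
    rw [← h1]; exact hres t h2
  have hMd : HasDerivAt (fun t => 1 + g t ^ 2 / V (g t)) 0 0 := by
    have := ((hgd.pow 2).div hVg.differentiableAt.hasDerivAt (by simp [hVg0])).const_add 1
    simpa [hg0] using this
  have hc1 : c 1 = 0 := by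
    rw [← tcoef_eq_of_hasSum hser 1, tcoef_one, hMd.deriv]
  have hFd : HasDerivAt (fun t => g t * (1 + g t ^ 2 / V (g t))) 1 0 := by
    have h1 := hgd.mul hMd
    refine (h1.congr_deriv (by simp [hg0])).congr_of_eventuallyEq (Eventually.of_forall fun m => ?_)
    simp
  have hser2 : ∀ᶠ t in 𝓝 (0 : ℝ),
      HasSum (fun n => c (n + 1) * t ^ n) (g t * (1 + g t ^ 2 / V (g t))) := by
    have a2 : ∀ᶠ t in 𝓝 (0 : ℝ), V (g t) ≠ 0 := hVg.continuousAt.eventually_ne (by simp [hVg0])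
    have a3 : ∀ᶠ t in 𝓝 (0 : ℝ), V (g t) + g t ^ 2 ≠ 0 :=
      (hVg.continuousAt.add (hg.continuousAt.pow 2)).eventually_ne (by simp [hg0, hV0])
    filter_upwards [hser, a2, a3, hr] with t h1 h2 h3 h4
    by_cases ht : t = 0
    · subst ht
      have : HasSum (fun n => c (n + 1) * (0 : ℝ) ^ n) (c (0 + 1) * (0 : ℝ) ^ 0) :=
        hasSum_single 0 (by intro n hn; simp [hn])
      simpa [hg0, hc1] using this
    · have e1 := (hasSum_nat_add_iff' 1).2 h1
      have e2 := e1.mul_left t⁻¹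
      have h5 : t * (V (g t) + g t ^ 2) = g t := by
        rw [div_eq_iff h3] at h4; exact h4.symm
      have e4 : t⁻¹ * (1 + g t ^ 2 / V (g t) - ∑ i ∈ Finset.range 1, c i * t ^ i)
          = g t * (1 + g t ^ 2 / V (g t)) := by
        simp only [Finset.sum_range_one, hc0, pow_zero]
        field_simp
        linear_combination (-(g t)) * h5
      rw [e4] at e2
      refine e2.congr_fun ?_
      intro n
      field_simp
      try ring
  have hc2 : c 2 = 1 := by
    have := tcoef_eq_of_hasSum hser2 1
    rw [tcoef_one, hFd.deriv] at this
    exact this.symm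
  have hm1 : ∫ x, x ∂ν = 0 := by
    have := hmom 1
    simpa [hc1] using this
  have hm2 : ∫ x, x ^ 2 ∂ν = 1 := by rw [hmom 2, hc2]
  refine ⟨ν, ⟨hν, ⟨R + 1, hsupp⟩, ?_, hm1⟩, hm2, hV, by rw [hV0]; exact one_pos, ?_⟩
  · intro a ha
    rw [ha] at hm1 hm2
    simp at hm1 hm2
    rw [hm1] at hm2
    norm_num at hm2
  have b1 : ∀ᶠ m in 𝓝 (0 : ℝ), 0 < V m :=
    continuousAt_const.eventually_lt hV.continuousAt (by simp [hV0])
  have hφc : Tendsto (fun m => m / (V m + m ^ 2)) (𝓝 0) (𝓝 0) := by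
    have := hA.continuousAt.tendsto
    simpa using this
  have b2 := hφc.eventually hsmall
  have b3 := hφc.eventually hM
  obtain ⟨ε, hε, -, H⟩ := int_of_eventually (b1.and (b2.and (b3.and hl))) one_pos
  refine ⟨ε, hε, fun m hm => ?_⟩
  obtain ⟨hVp, hs, hMm, hgm⟩ := H m hm
  rw [hgm] at hMm
  have hVm : V m + m ^ 2 ≠ 0 := by positivity
  have hk : ∀ x, cskKernel V m x = V m / (V m + m ^ 2) * (1 - m / (V m + m ^ 2) * x)⁻¹ := by
    intro x
    have : V m + m * (m - x) = (V m + m ^ 2) * (1 - m / (V m + m ^ 2) * x) := by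
      field_simp
      try ring
    rw [cskKernel, this, div_mul_eq_div_div, div_eq_mul_inv]
  have hae : ∀ᵐ x ∂ν, 0 < 1 - m / (V m + m ^ 2) * x := by
    filter_upwards [ae_abs_le hsupp] with x hx
    have : |m / (V m + m ^ 2) * x| < 1 := by
      rw [abs_mul]
      exact lt_of_le_of_lt (by gcongr) hs
    linarith [(abs_lt.1 this).2]
  have hkint : ∫ x, cskKernel V m x ∂ν = 1 := by
    simp only [hk, integral_const_mul, hMm]
    field_simp
  refine ⟨?_, hkint, ?_⟩
  · filter_upwards [hae] with x hx
    rw [hk]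
    positivity
  · by_cases h0 : m = 0
    · subst h0
      simp [cskKernel, hV0, hm1]
    · have hi : Integrable (fun x => cskKernel V m x) ν := integrable_of_integral_eq_one hkint
      have : ∫ x, m * (x * cskKernel V m x) ∂ν
          = ∫ x, ((V m + m ^ 2) * cskKernel V m x - V m) ∂ν := by
        refine integral_congr_ae ?_
        filter_upwards [hae] with x hx
        have hx' := hx.ne'
        rw [cskKernel]
        have : V m + m * (m - x) = (V m + m ^ 2) * (1 - m / (V m + m ^ 2) * x) := by
          field_simp
          try ring
        have h1 : V m + m * (m - x) ≠ 0 := by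
          rw [this]; exact mul_ne_zero hVm hx'
        field_simp
        ring
      rw [integral_const_mul, integral_sub (hi.const_mul _) (integrable_const _),
        integral_const_mul, hkint] at this
      refine mul_left_cancel₀ h0 (this.trans ?_)
      simp
      ring

open Topology

lemma hankel_integral {ν : Measure ℝ} [IsProbabilityMeasure ν] {ρ : ℝ}
    (h : ν (Set.Icc (-ρ) ρ)ᶜ = 0) (l : ℝ) :
    HankelPos (fun k => l ^ k * ∫ x, x ^ (k + 2) ∂ν) := by
  intro N y
  have h1 : ∑ i ∈ Finset.range N, ∑ j ∈ Finset.range N,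
      y i * y j * (l ^ (i + j) * ∫ x, x ^ (i + j + 2) ∂ν)
      = ∫ x, (∑ i ∈ Finset.range N, ∑ j ∈ Finset.range N,
        y i * y j * (l ^ (i + j) * x ^ (i + j + 2))) ∂ν := by
    rw [integral_finsetSum]
    · refine Finset.sum_congr rfl fun i _ => ?_
      rw [integral_finsetSum]
      · refine Finset.sum_congr rfl fun j _ => ?_
        rw [integral_const_mul, integral_const_mul]
      · intro j _
        exact ((integrable_pow h _).const_mul _).const_mul _
    · intro i _
      refine integrable_finsetSum _ fun j _ => ?_
      exact ((integrable_pow h _).const_mul _).const_mul _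
  rw [h1]
  refine integral_nonneg fun x => ?_
  have : ∑ i ∈ Finset.range N, ∑ j ∈ Finset.range N, y i * y j * (l ^ (i + j) * x ^ (i + j + 2))
      = ((∑ i ∈ Finset.range N, y i * (l ^ i * x ^ i)) * x) ^ 2 := by
    rw [mul_pow, sq (∑ i ∈ Finset.range N, _), Finset.sum_mul_sum, Finset.sum_mul]
    refine Finset.sum_congr rfl fun i _ => ?_
    rw [Finset.sum_mul]
    refine Finset.sum_congr rfl fun j _ => by ring
  beta_reduce
  rw [this]
  positivity

lemma moments_of_memV {V : ℝ → ℝ} {l : ℝ} (hl : 0 < l) (h : memV (fun m => V (l * m))) :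
    ∃ μ : ℕ → ℝ, HankelPos μ ∧ μ 0 = 1 ∧ ∀ᶠ M in 𝓝 (0 : ℝ),
      HasSum (fun k => μ k * (M / (V M + (l⁻¹) ^ 2 * M ^ 2)) ^ (k + 1))
        (M / (1 - (l⁻¹) ^ 2 * M * (M / (V M + (l⁻¹) ^ 2 * M ^ 2)))) := by
  obtain ⟨ν, ⟨hν, ⟨ρ', hsupp'⟩, -, hm1⟩, hm2, hA, hV0, ε, hε, hker⟩ := h
  obtain ⟨ρ, hρ, hsupp⟩ : ∃ ρ : ℝ, 0 ≤ ρ ∧ ν (Set.Icc (-ρ) ρ)ᶜ = 0 := by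
    refine ⟨|ρ'|, abs_nonneg _, measure_mono_null ?_ hsupp'⟩
    refine Set.compl_subset_compl.2 (Set.Icc_subset_Icc ?_ (le_abs_self _))
    exact neg_le_neg (le_abs_self _)
  refine ⟨fun k => (l⁻¹) ^ k * ∫ x, x ^ (k + 2) ∂ν, hankel_integral hsupp _, by simp [hm2], ?_⟩
  have hsc : Tendsto (fun M : ℝ => l⁻¹ * M) (𝓝 0) (𝓝 0) := by
    have : ContinuousAt (fun M : ℝ => l⁻¹ * M) 0 := by fun_prop
    simpa using this.tendsto
  have hA' : AnalyticAt ℝ (fun m => m / (V (l * m) + m ^ 2)) 0 :=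
    analyticAt_id.div (hA.add (analyticAt_id.pow 2)) (by simpa using hV0.ne')
  have hsmall : ∀ᶠ t in 𝓝 (0 : ℝ), |t| * ρ < 1 := by
    have : ContinuousAt (fun t : ℝ => |t| * ρ) 0 := by fun_prop
    exact this.eventually_lt continuousAt_const (by simp)
  have hφc : Tendsto (fun m => m / (V (l * m) + m ^ 2)) (𝓝 0) (𝓝 0) := by
    have := hA'.continuousAt.tendsto
    simpa using this
  have b1 : ∀ᶠ m in 𝓝 (0 : ℝ), 0 < V (l * m) :=
    continuousAt_const.eventually_lt hA.continuousAt hV0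
  have b0 : ∀ᶠ m in 𝓝 (0 : ℝ), |m| < ε :=
    continuous_abs.continuousAt.eventually_lt continuousAt_const (by simpa using hε)
  filter_upwards [hsc.eventually b0, hsc.eventually b1, hsc.eventually (hφc.eventually hsmall)]
    with M k0 k1 k2
  have hlM : l * (l⁻¹ * M) = M := by field_simp
  have hkint := (hker _ k0).2.1
  have hss := resolvent_hasSum hρ hsupp k2
  simp only [hlM] at k1 k2 hss
  set m := l⁻¹ * M with hm
  have hMm : M = l * m := hlM.symm
  have hden : 0 < V M + m ^ 2 := by positivity
  have hk : ∀ x, cskKernel (fun m => V (l * m)) m x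
      = V M / (V M + m ^ 2) * (1 - m / (V M + m ^ 2) * x)⁻¹ := by
    intro x
    have : V M + m * (m - x) = (V M + m ^ 2) * (1 - m / (V M + m ^ 2) * x) := by
      field_simp
      try ring
    simp only [cskKernel]
    rw [hlM, this, div_mul_eq_div_div, div_eq_mul_inv (V M / (V M + m ^ 2))]
  simp only [hk, integral_const_mul] at hkint
  have hMs : ∫ x, (1 - m / (V M + m ^ 2) * x)⁻¹ ∂ν = (V M + m ^ 2) / V M := by
    field_simp at hkint ⊢
    linarith
  rw [hMs] at hss
  have hs2 := (hasSum_nat_add_iff' 2).2 hss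
  simp only [Finset.sum_range_succ, Finset.sum_range_zero, pow_zero, pow_one, hm1] at hs2
  have hle : (l⁻¹) ^ 2 * M ^ 2 = m ^ 2 := by rw [hm]; ring
  have hle2 : (l⁻¹) ^ 2 * M = l⁻¹ * m := by rw [hm]; ring
  rw [hle, hle2]
  by_cases h0 : M = 0
  · subst h0
    simp
  · have hm0 : m ≠ 0 := by rw [hm]; positivity
    have e := hs2.mul_left (l * (V M + m ^ 2) / m)
    have e4 : l * (V M + m ^ 2) / m * ((V M + m ^ 2) / V M -
        (0 + (∫ (x : ℝ), 1 ∂ν) * 1 + 0 * (m / (V M + m ^ 2))))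
        = M / (1 - l⁻¹ * m * (M / (V M + m ^ 2))) := by
      have h5 : l⁻¹ * m * (M / (V M + m ^ 2)) = m ^ 2 / (V M + m ^ 2) := by
        have h11 : l⁻¹ * m * (M / (V M + m ^ 2)) = (l⁻¹ * M) * (m / (V M + m ^ 2)) := by ring
        rw [h11, ← hm]
        ring
      rw [h5]
      have h6 : 1 - m ^ 2 / (V M + m ^ 2) = V M / (V M + m ^ 2) := by
        field_simp; ring
      rw [h6]
      simp only [integral_const, probReal_univ, smul_eq_mul]
      rw [div_div_eq_mul_div]
      have h7 : (V M + m ^ 2) / V M - (0 + (1 : ℝ) * 1 * 1 + 0 * (m / (V M + m ^ 2))) = m ^ 2 / V M := by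
        field_simp; ring
      rw [h7]
      have h12 : l * (V M + m ^ 2) / m * (m ^ 2 / V M) = (l * m) * (V M + m ^ 2) / V M := by
        field_simp
      rw [h12, hlM]
    rw [e4] at e
    refine e.congr_fun ?_
    intro k
    have h8 : M / (V M + m ^ 2) = l * (m / (V M + m ^ 2)) := by
      rw [← mul_div_assoc, hlM]
    rw [h8, mul_pow, inv_pow]
    have h9 : l ^ (k + 1) = l ^ k * l := pow_succ _ _
    have h10 : (m / (V M + m ^ 2)) ^ (k + 2) = (m / (V M + m ^ 2)) ^ (k + 1) * (m / (V M + m ^ 2)) :=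
      pow_succ _ _
    rw [h9, h10]
    generalize (m / (V M + m ^ 2)) ^ (k + 1) = A
    field_simp

open Topology

lemma joint_inv {V : ℝ → ℝ} (hV : AnalyticAt ℝ V 0) (hV0 : 0 < V 0) :
    ∃ g : ℝ × ℝ → ℝ, AnalyticAt ℝ g (0, 0) ∧
      (∀ᶠ q in 𝓝 ((0, 0) : ℝ × ℝ), g q / (V (g q) + q.1 * g q ^ 2) = q.2) ∧
      (∀ᶠ q in 𝓝 ((0, 0) : ℝ × ℝ), g (q.1, q.2 / (V q.2 + q.1 * q.2 ^ 2)) = q.2) := by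
  have hfst : AnalyticAt ℝ (fun q : ℝ × ℝ => q.1) (0, 0) := analyticAt_fst
  have hsnd : AnalyticAt ℝ (fun q : ℝ × ℝ => q.2) (0, 0) := analyticAt_snd
  have hVs : AnalyticAt ℝ (fun q : ℝ × ℝ => V q.2) (0, 0) :=
    AnalyticAt.fun_comp (f := fun q : ℝ × ℝ => q.2) (g := V) hV hsnd
  have hψ : AnalyticAt ℝ (fun q : ℝ × ℝ => V 0 / (V q.2 + q.1 * q.2 ^ 2)) (0, 0) :=
    analyticAt_const.div (hVs.add (hfst.mul (hsnd.pow 2))) (by simpa using hV0.ne')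
  let Φ : ℝ × ℝ → ℝ × ℝ := fun q => (q.1, q.2 * (V 0 / (V q.2 + q.1 * q.2 ^ 2)))
  have hΦ : AnalyticAt ℝ Φ (0, 0) := hfst.prod (hsnd.mul hψ)
  have hd2 : HasFDerivAt (fun q : ℝ × ℝ => q.2 * (V 0 / (V q.2 + q.1 * q.2 ^ 2)))
      (ContinuousLinearMap.snd ℝ ℝ ℝ) (0, 0) := by
    have h1 := (hasFDerivAt_snd (𝕜 := ℝ) (p := ((0, 0) : ℝ × ℝ))).mul hψ.differentiableAt.hasFDerivAt
    refine HasFDerivAt.congr_fderiv h1 ?_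
    ext <;> simp [hV0.ne']
  have hd : HasFDerivAt Φ ((ContinuousLinearEquiv.refl ℝ (ℝ × ℝ) : (ℝ × ℝ) ≃L[ℝ] (ℝ × ℝ)) :
      (ℝ × ℝ) →L[ℝ] (ℝ × ℝ)) (0, 0) := by
    have h1 := (hasFDerivAt_fst (𝕜 := ℝ) (p := ((0, 0) : ℝ × ℝ))).prodMk hd2
    refine HasFDerivAt.congr_fderiv h1 ?_
    ext <;> simp
  have hs : HasStrictFDerivAt Φ ((ContinuousLinearEquiv.refl ℝ (ℝ × ℝ) : (ℝ × ℝ) ≃L[ℝ] (ℝ × ℝ)) :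
      (ℝ × ℝ) →L[ℝ] (ℝ × ℝ)) (0, 0) := by
    have := hΦ.hasStrictFDerivAt
    rwa [hd.fderiv] at this
  let e := hs.toOpenPartialHomeomorph Φ
  have he0 : ((0, 0) : ℝ × ℝ) ∈ e.source := hs.mem_toOpenPartialHomeomorph_source
  have hec : (e : ℝ × ℝ → ℝ × ℝ) = Φ := hs.toOpenPartialHomeomorph_coe
  have hΦ0 : Φ (0, 0) = (0, 0) := by simp [Φ]
  have hsymm : AnalyticAt ℝ e.symm (0, 0) := by
    have := e.analyticAt_symm' (i := ContinuousLinearEquiv.refl ℝ (ℝ × ℝ)) he0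
      (by rw [hec]; exact hΦ) (by rw [hec]; exact hd.fderiv)
    rwa [hec, hΦ0] at this
  have hl : ∀ᶠ q in 𝓝 ((0, 0) : ℝ × ℝ), e.symm (Φ q) = q := by
    have := e.eventually_left_inverse he0
    rwa [hec] at this
  have hr : ∀ᶠ q in 𝓝 ((0, 0) : ℝ × ℝ), Φ (e.symm q) = q := by
    have := e.eventually_right_inverse' he0
    rwa [hec, hΦ0] at this
  have hsc : AnalyticAt ℝ (fun q : ℝ × ℝ => (q.1, V 0 * q.2)) (0, 0) :=
    hfst.prod (analyticAt_const.mul hsnd)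
  have hsct : Tendsto (fun q : ℝ × ℝ => (q.1, V 0 * q.2)) (𝓝 (0, 0)) (𝓝 (0, 0)) := by
    have := hsc.continuousAt.tendsto
    simpa using this
  refine ⟨fun q => (e.symm (q.1, V 0 * q.2)).2, ?_, ?_, ?_⟩
  · have h1 : AnalyticAt ℝ e.symm ((fun q : ℝ × ℝ => (q.1, V 0 * q.2)) (0, 0)) := by
      simpa using hsymm
    have h2 : AnalyticAt ℝ (fun q : ℝ × ℝ => e.symm (q.1, V 0 * q.2)) (0, 0) :=
      AnalyticAt.fun_comp (g := e.symm) (f := fun q : ℝ × ℝ => (q.1, V 0 * q.2)) h1 hsc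
    exact AnalyticAt.fun_comp (g := fun q : ℝ × ℝ => q.2) analyticAt_snd h2
  · filter_upwards [hsct.eventually hr] with q hq
    obtain ⟨a1, a2⟩ := Prod.ext_iff.1 hq
    simp only [Φ] at a1 a2
    rw [a1] at a2
    refine mul_left_cancel₀ hV0.ne' (Eq.trans ?_ a2)
    ring
  · filter_upwards [hl] with q hq
    have : (q.1, V 0 * (q.2 / (V q.2 + q.1 * q.2 ^ 2))) = Φ q := by
      simp only [Φ]
      congr 1
      ring
    rw [this, hq]

lemma tcoef_continuous {h : ℝ × ℝ → ℝ} (hh : AnalyticAt ℝ h (0, 0)) (k : ℕ) :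
    Tendsto (fun a => tcoef (fun s => h (a, s)) k) (𝓝 0) (𝓝 (tcoef (fun s => h (0, s)) k)) := by
  have key : ∀ k : ℕ, ∃ G : ℝ × ℝ → ℝ, AnalyticAt ℝ G (0, 0) ∧
      ∀ᶠ q in 𝓝 ((0, 0) : ℝ × ℝ), iteratedDeriv k (fun s => h (q.1, s)) q.2 = G q := by
    intro k
    induction k with
    | zero => exact ⟨h, hh, Eventually.of_forall fun q => by simp⟩
    | succ k ih =>
      obtain ⟨G, hG, hE⟩ := ih
      refine ⟨fun q => fderiv ℝ G q (0, 1), ?_, ?_⟩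
      · exact AnalyticAt.fun_comp (g := fun L : (ℝ × ℝ) →L[ℝ] ℝ => L (0, 1)) (f := fderiv ℝ G)
          ((ContinuousLinearMap.apply ℝ ℝ ((0, 1) : ℝ × ℝ)).analyticAt _) hG.fderiv
      · filter_upwards [eventually_eventually_nhds.2 hE, hG.eventually_analyticAt] with q h1 h2
        rw [iteratedDeriv_succ]
        have h3 : Tendsto (fun s : ℝ => (q.1, s)) (𝓝 q.2) (𝓝 q) := by
          have : ContinuousAt (fun s : ℝ => (q.1, s)) q.2 := by fun_prop
          exact this.tendsto
        have h4 : iteratedDeriv k (fun s => h (q.1, s)) =ᶠ[𝓝 q.2] fun s => G (q.1, s) :=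
          h3.eventually h1
        rw [h4.deriv_eq]
        have h5 : HasDerivAt (fun s : ℝ => (q.1, s)) ((0, 1) : ℝ × ℝ) q.2 :=
          (hasDerivAt_const q.2 q.1).prodMk (hasDerivAt_id q.2)
        have h6 : HasFDerivAt G (fderiv ℝ G q) (q.1, q.2) := h2.differentiableAt.hasFDerivAt
        exact (h6.comp_hasDerivAt q.2 h5).deriv
  obtain ⟨G, hG, hE⟩ := key k
  have h3 : Tendsto (fun a : ℝ => (a, (0 : ℝ))) (𝓝 0) (𝓝 (0, 0)) := by
    have : ContinuousAt (fun a : ℝ => (a, (0 : ℝ))) 0 := by fun_prop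
    exact this.tendsto
  have h4 := hG.continuousAt.tendsto.comp h3
  have h5 := hE.self_of_nhds
  simp only at h5
  unfold tcoef
  rw [h5]
  refine Tendsto.div_const ?_ _
  refine h4.congr' ?_
  filter_upwards [h3.eventually hE] with a ha
  exact ha.symm

open Topology

lemma limit_hankel {V : ℝ → ℝ} (hmem : memVinf V) (hV : AnalyticAt ℝ V 0) (hV0 : 0 < V 0) :
    ∃ g0 : ℝ → ℝ, AnalyticAt ℝ g0 0 ∧ (∀ᶠ m in 𝓝 (0 : ℝ), g0 (m / V m) = m) ∧
      HankelPos (fun n => tcoef g0 (n + 1)) ∧ tcoef g0 1 = 1 := by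
  obtain ⟨g, hg, hr, hl⟩ := joint_inv hV hV0
  have hg00 : g (0, 0) = 0 := by
    have := hl.self_of_nhds
    simpa using this
  have hfst : AnalyticAt ℝ (fun q : ℝ × ℝ => q.1) (0, 0) := analyticAt_fst
  have hsnd : AnalyticAt ℝ (fun q : ℝ × ℝ => q.2) (0, 0) := analyticAt_snd
  let h : ℝ × ℝ → ℝ := fun q => g q / (1 - q.1 * g q * q.2)
  have hh : AnalyticAt ℝ h (0, 0) :=
    hg.div (analyticAt_const.sub ((hfst.mul hg).mul hsnd)) (by simp)
  -- coefficients for small positive parameter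
  have hcoef : ∀ᶠ a in 𝓝 (0 : ℝ), ∀ l : ℝ, 0 < l → a = (l⁻¹) ^ 2 →
      HankelPos (fun n => tcoef (fun s => h (a, s)) (n + 1)) ∧
        tcoef (fun s => h (a, s)) 1 = 1 := by
    have c1 : ∀ᶠ a in 𝓝 (0 : ℝ), ∀ᶠ s in 𝓝 (0 : ℝ),
        g (a, s) / (V (g (a, s)) + a * g (a, s) ^ 2) = s := hr.curry_nhds
    have c2 : ∀ᶠ a in 𝓝 (0 : ℝ), ∀ᶠ s in 𝓝 (0 : ℝ), g (a, s / (V s + a * s ^ 2)) = s :=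
      hl.curry_nhds
    have c3 : ∀ᶠ a in 𝓝 (0 : ℝ), ∀ᶠ s in 𝓝 (0 : ℝ), AnalyticAt ℝ g (a, s) :=
      hg.eventually_analyticAt.curry_nhds
    filter_upwards [c1, c2, c3] with a d1 d2 d3 l hl0 hal
    obtain ⟨μ, hμ, hμ0, hE⟩ := moments_of_memV hl0 (hmem l)
    rw [← hal] at hE
    have ga0 : g (a, 0) = 0 := by
      have := d2.self_of_nhds
      simpa using this
    have hgt : Tendsto (fun s => g (a, s)) (𝓝 0) (𝓝 0) := by
      have k1 : ContinuousAt g (a, 0) := d3.self_of_nhds.continuousAt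
      have : ContinuousAt (fun s : ℝ => g (a, s)) 0 :=
        ContinuousAt.comp (f := fun s : ℝ => (a, s)) k1 (by fun_prop)
      have := this.tendsto
      rwa [ga0] at this
    have hser : ∀ᶠ s in 𝓝 (0 : ℝ),
        HasSum (fun n => (Nat.casesOn n 0 μ : ℝ) * s ^ n) (h (a, s)) := by
      filter_upwards [d1, hgt.eventually hE] with s k1 k2
      rw [k1] at k2
      refine (hasSum_nat_add_iff' 1).1 ?_
      simpa [h] using k2
    have ht : ∀ n, tcoef (fun s => h (a, s)) (n + 1) = μ n := fun n =>
      tcoef_eq_of_hasSum hser (n + 1)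
    refine ⟨?_, by rw [ht 0, hμ0]⟩
    simp only [ht]
    exact hμ
  have hlim : Tendsto (fun j : ℕ => (((j : ℝ) + 1)⁻¹) ^ 2) atTop (𝓝 0) := by
    have h1 : Tendsto (fun j : ℕ => ((j : ℝ) + 1)⁻¹) atTop (𝓝 0) := by
      simpa [one_div] using tendsto_one_div_add_atTop_nhds_zero_nat (𝕜 := ℝ)
    have := h1.pow 2
    simpa using this
  have hev : ∀ᶠ j : ℕ in atTop,
      HankelPos (fun n => tcoef (fun s => h ((((j : ℝ) + 1)⁻¹) ^ 2, s)) (n + 1)) ∧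
        tcoef (fun s => h ((((j : ℝ) + 1)⁻¹) ^ 2, s)) 1 = 1 := by
    filter_upwards [hlim.eventually hcoef] with j hj
    exact hj ((j : ℝ) + 1) (by positivity) rfl
  have hh0 : (fun s => h (0, s)) = fun s => g (0, s) := by
    funext s; simp [h]
  have htc : ∀ k, Tendsto (fun j : ℕ => tcoef (fun s => h ((((j : ℝ) + 1)⁻¹) ^ 2, s)) k) atTop
      (𝓝 (tcoef (fun s => g (0, s)) k)) := by
    intro k
    rw [← hh0]
    exact (tcoef_continuous hh k).comp hlim
  refine ⟨fun s => g (0, s), ?_, ?_, ?_, ?_⟩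
  · exact AnalyticAt.fun_comp (g := g) (f := fun s : ℝ => ((0 : ℝ), s)) hg
      (analyticAt_const.prod analyticAt_id)
  · have := hl.curry_nhds.self_of_nhds
    simpa using this
  · intro N x
    refine ge_of_tendsto (x := atTop) (f := fun j : ℕ => ∑ i ∈ Finset.range N,
      ∑ k ∈ Finset.range N, x i * x k *
        tcoef (fun s => h ((((j : ℝ) + 1)⁻¹) ^ 2, s)) (i + k + 1)) ?_ ?_
    · refine tendsto_finsetSum _ fun i _ => tendsto_finsetSum _ fun k _ => ?_
      exact (htc _).const_mul _
    · filter_upwards [hev] with j hj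
      exact hj.1 N x
  · refine tendsto_nhds_unique (htc 1) ?_
    refine tendsto_const_nhds.congr' ?_
    filter_upwards [hev] with j hj
    exact hj.2.symm

lemma kerP_of_memVinf {V : ℝ → ℝ} (hmem : memVinf V) :
    AnalyticAt ℝ V 0 ∧ V 0 = 1 ∧ ∃ δ P, KerP V δ P := by
  obtain ⟨hV, hV0⟩ : AnalyticAt ℝ V 0 ∧ 0 < V 0 := by
    obtain ⟨ν, -, -, h1, h2, -⟩ := hmem 1
    simp only [one_mul] at h1 h2
    exact ⟨h1, h2⟩
  obtain ⟨g0, hg, hinv, hH, hc0⟩ := limit_hankel hmem hV hV0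
  have hψ : AnalyticAt ℝ (fun m => m / V m) 0 := analyticAt_id.div hV hV0.ne'
  have hV1 : V 0 = 1 := by
    have h1 : HasDerivAt (fun m => m / V m) (V 0)⁻¹ 0 := by
      have h2 := (hasDerivAt_id (0 : ℝ)).div hV.differentiableAt.hasDerivAt hV0.ne'
      refine (h2.congr_deriv ?_).congr_of_eventuallyEq (Eventually.of_forall fun m => ?_)
      · simp only [id]; field_simp; ring
      · simp
    have h3 : HasDerivAt g0 1 ((fun m => m / V m) 0) := by
      have : HasDerivAt g0 (deriv g0 0) 0 := hg.differentiableAt.hasDerivAt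
      rw [← tcoef_one, hc0] at this
      simpa using this
    have h4 := h3.comp (0 : ℝ) h1
    have h5 : HasDerivAt (fun m : ℝ => m) (1 * (V 0)⁻¹) 0 :=
      h4.congr_of_eventuallyEq (by
        filter_upwards [hinv] with m hm
        exact hm.symm)
    have h6 := h5.unique (hasDerivAt_id' 0)
    rw [one_mul] at h6
    exact inv_eq_one.1 h6
  refine ⟨hV, hV1, ?_⟩
  obtain ⟨B, R, hR, hB, hb, hsum⟩ := tcoef_bound hg
  have hcb : ∀ n, |tcoef g0 (n + 1)| ≤ (B * R) * R ^ n := fun n => by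
    have := hb (n + 1)
    rw [pow_succ] at this
    linarith
  have hBR : 0 ≤ B * R := by positivity
  have e1 : ∀ᶠ m in 𝓝 (0 : ℝ), V m ≠ 0 ∧ ContinuousAt V m ∧ |m / V m| * R < 1 / 2 ∧
      g0 (m / V m) = m := by
    have a1 : ∀ᶠ m in 𝓝 (0 : ℝ), |m / V m| * R < 1 / 2 :=
      (hψ.continuousAt.abs.mul continuousAt_const).eventually_lt continuousAt_const (by simp)
    filter_upwards [hV.continuousAt.eventually_ne hV0.ne', hV.eventually_analyticAt, a1, hinv]
      with m k1 k2 k3 k4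
    exact ⟨k1, k2.continuousAt, k3, k4⟩
  obtain ⟨δ, hδ, -, H⟩ := int_of_eventually e1 one_pos
  refine ⟨δ, fun s t => Lk (fun n => tcoef g0 (n + 1)) (s / V s) (t / V t) * ((V s)⁻¹ * (V t)⁻¹),
    hδ, ?_, ?_, ?_, ?_⟩
  · refine PSDK.mul ?_ (PSDK.rankone δ fun s => (V s)⁻¹)
    refine (Lk_psd hR hBR hcb hH).comp (fun s => s / V s) fun s hs => ?_
    rw [lt_div_iff₀ hR]
    linarith [(H s hs).2.2.1]
  · have v1 : ContinuousOn (fun q : ℝ × ℝ => V q.1) {q | |q.1| < δ ∧ |q.2| < δ} := by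
      intro q hq
      exact (ContinuousAt.comp (f := fun q : ℝ × ℝ => q.1) (H q.1 hq.1).2.1
        continuousAt_fst).continuousWithinAt
    have v2 : ContinuousOn (fun q : ℝ × ℝ => V q.2) {q | |q.1| < δ ∧ |q.2| < δ} := by
      intro q hq
      exact (ContinuousAt.comp (f := fun q : ℝ × ℝ => q.2) (H q.2 hq.2).2.1
        continuousAt_snd).continuousWithinAt
    have n1 : ∀ q ∈ {q : ℝ × ℝ | |q.1| < δ ∧ |q.2| < δ}, V q.1 ≠ 0 := fun q hq => (H q.1 hq.1).1
    have n2 : ∀ q ∈ {q : ℝ × ℝ | |q.1| < δ ∧ |q.2| < δ}, V q.2 ≠ 0 := fun q hq => (H q.2 hq.2).1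
    refine ContinuousOn.mul ?_ ((v1.inv₀ n1).mul (v2.inv₀ n2))
    refine (Lk_continuousOn hR hBR hcb).comp
      (f := fun q : ℝ × ℝ => (q.1 / V q.1, q.2 / V q.2)) ?_ ?_
    · exact (continuousOn_fst.div v1 n1).prodMk (continuousOn_snd.div v2 n2)
    · intro q hq
      exact ⟨(H q.1 hq.1).2.2.1.le, (H q.2 hq.2).2.2.1.le⟩
  · simp [Lk_zero, hc0, hV1]
  · intro s t hs ht
    obtain ⟨s1, -, s3, s4⟩ := H s hs
    obtain ⟨t1, -, t3, t4⟩ := H t ht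
    have := Lk_sub (f := g0) (b := tcoef g0) hR hBR hcb (s := s / V s) (t := t / V t)
      (by linarith) (by linarith) (hsum _ (by linarith)) (hsum _ (by linarith))
    rw [s4, t4] at this
    rw [this]
    generalize Lk (fun n => tcoef g0 (n + 1)) (s / V s) (t / V t) = L
    field_simp

/-- If `V₁ ∈ 𝒱∞` and `c ≥ 1` then `m ↦ c·V₁(m) − c + 1 ∈ 𝒱∞`. -/
theorem memVinf_scale_affine (V₁ : ℝ → ℝ) (c : ℝ) (hc : 1 ≤ c) (h₁ : memVinf V₁) :
    memVinf (fun m => c * V₁ m - c + 1) := by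
  intro l
  obtain ⟨hA, h0, δ, P, hP⟩ := kerP_of_memVinf h₁
  obtain ⟨δ', P', hP'⟩ := hP.affine h0 hc
  obtain ⟨δ'', P'', hP''⟩ := hP'.scale (by simp [h0]) l
  refine memV_of_kerP ?_ (by simp [h0]) hP''
  have h2 : AnalyticAt ℝ (fun m => V₁ (l * m)) 0 :=
    AnalyticAt.fun_comp (g := V₁) (f := fun m : ℝ => l * m) (by simpa using hA)
      (analyticAt_const.mul analyticAt_id)
  exact ((analyticAt_const.mul h2).sub analyticAt_const).add analyticAt_const
end
end
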